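/- arXiv:1410.7910 — 2 statements merged into one kernel-verified Lean document; each statement's English description precedes it below -/
import Mathlib

section
/- Let I*_N denote the number of isomorphism classes of simple cubic graphs on N vertices, i.e., the number of isomorphism classes of simple graphs on the vertex set Fin N in which every vertex has degree exactly 3. Then I*_N ∼ (1/(e²·√(πN)))·(3N/(4e))^{N/2} as N → ∞ along even N; that is, I*_N·e²·√(πN)·(4e/(3N))^{N/2} → 1 as N → ∞ through even values of N. -/
open Filter Real Topology

/-- A simple cubic graph on `Fin N`: every vertex has exactly 3 neighbours. -/
def IsCubicSimple {N : ℕ} (G : SimpleGraph (Fin N)) : Prop :=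
  ∀ v, Nat.card (G.neighborSet v) = 3

/-- Isomorphism of simple cubic graphs on `Fin N`. -/
def SimpleCubicIsoRel (N : ℕ) (G G' : {G : SimpleGraph (Fin N) // IsCubicSimple G}) : Prop :=
  Nonempty (G.val ≃g G'.val)

/-- `Istar N`: the number of isomorphism classes of simple cubic graphs on `N` vertices. -/
noncomputable def Istar (N : ℕ) : ℕ := Nat.card (Quot (SimpleCubicIsoRel N))


section
open Finset

def nd (N : ℕ) : Finset (Sym2 (Fin N)) := univ.filter (fun e => ¬ e.IsDiag)

/-- product of values over an unordered pair -/
def ev {N : ℕ} {R : Type*} [CommMonoid R] (x : Fin N → R) : Sym2 (Fin N) → R :=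
  Sym2.lift ⟨fun i j => x i * x j, fun _ _ => mul_comm _ _⟩

lemma ev_mk {N : ℕ} {R : Type*} [CommMonoid R] (x : Fin N → R) (i j : Fin N) :
    ev x s(i, j) = x i * x j := rfl

lemma exp_log_four {R : Type*} [CommRing R] [Algebra ℚ R] (y : R) (hy : y ^ 4 = 0) :
    IsNilpotent.exp (y + (-1/2 : ℚ) • y ^ 2 + (1/3 : ℚ) • y ^ 3) = 1 + y := by
  have h0 : (y + (-1/2 : ℚ) • y ^ 2 + (1/3 : ℚ) • y ^ 3) ^ 4 = 0 := by
    have : (y + (-1/2 : ℚ) • y ^ 2 + (1/3 : ℚ) • y ^ 3) =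
      y * (1 + (-1/2 : ℚ) • y + (1/3 : ℚ) • y ^ 2) := by
      simp only [Algebra.smul_def]; ring
    rw [this, mul_pow, hy, zero_mul]
  rw [IsNilpotent.exp_eq_sum h0]
  simp only [sum_range_succ, sum_range_zero, Nat.factorial]
  obtain ⟨a, ha⟩ : ∃ a, a = algebraMap ℚ R (1/2) := ⟨_, rfl⟩
  obtain ⟨b, hb⟩ : ∃ a, a = algebraMap ℚ R (1/3) := ⟨_, rfl⟩
  have e6 : algebraMap ℚ R (1/6) = a * b := by rw [ha, hb, ← map_mul]; norm_num
  have en : algebraMap ℚ R (-1/2) = - a := by rw [ha, ← map_neg]; norm_num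
  have a2 : 2 * a = 1 := by
    have : (2 : R) = algebraMap ℚ R 2 := (map_ofNat _ 2).symm
    rw [this, ha, ← map_mul]; norm_num
  have hab : b - a + a * b = 0 := by
    rw [ha, hb, ← map_mul, ← map_sub, ← map_add]; norm_num
  simp only [Algebra.smul_def, en, ← hb]
  norm_num
  rw [e6, ← ha]
  have y5 : y ^ 5 = 0 := by rw [pow_succ, hy, zero_mul]
  have y6 : y ^ 6 = 0 := by rw [pow_succ, y5, zero_mul]
  have y7 : y ^ 7 = 0 := by rw [pow_succ, y6, zero_mul]
  have y8 : y ^ 8 = 0 := by rw [pow_succ, y7, zero_mul]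
  have y9 : y ^ 9 = 0 := by rw [pow_succ, y8, zero_mul]
  ring_nf
  simp only [hy, y5, y6, y7, y8, y9]
  ring_nf
  linear_combination y^3 * hab - a * y^3 * a2

lemma two_sum_nd {N : ℕ} {R : Type*} [CommRing R] (x : Fin N → R) :
    2 * ∑ e ∈ nd N, ev x e = (∑ i, x i) ^ 2 - ∑ i, x i ^ 2 := by
  have h1 : ∑ e ∈ nd N, ev x e = ∑ i : Fin N × Fin N with i.1 < i.2, x i.1 * x i.2 := by
    have := sum_sym2_filter_not_isDiag (univ : Finset (Fin N)) (ev x)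
    rw [nd, ← sym2_univ, this]
    apply sum_congr _ (fun _ _ => rfl)
    ext ⟨i, j⟩
    simp only [mem_filter, mem_offDiag, mem_univ, true_and]
    exact ⟨fun h => h.2, fun h => ⟨ne_of_lt h, h⟩⟩
  have h2 : ∑ i : Fin N × Fin N with i.1 < i.2, x i.1 * x i.2 =
      ∑ i : Fin N × Fin N with i.2 < i.1, x i.1 * x i.2 := by
    refine sum_bij' (fun i _ => i.swap) (fun i _ => i.swap) ?_ ?_ ?_ ?_ ?_ <;>
      simp [mul_comm]
  have h3 : (∑ i, x i) ^ 2 = ∑ i : Fin N × Fin N, x i.1 * x i.2 := by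
    rw [sq, sum_mul_sum, ← univ_product_univ, sum_product]
  have h4 : ∑ i, x i ^ 2 = ∑ i : Fin N × Fin N with i.1 = i.2, x i.1 * x i.2 := by
    rw [sum_filter, ← univ_product_univ, sum_product]
    simp [sq]
  have h5 : ∑ i : Fin N × Fin N, x i.1 * x i.2 = ∑ i : Fin N × Fin N with i.1 < i.2, x i.1 * x i.2
    + ∑ i : Fin N × Fin N with i.2 < i.1, x i.1 * x i.2 + ∑ i : Fin N × Fin N with i.1 = i.2, x i.1 * x i.2 := by
    simp only [sum_filter, ← sum_add_distrib]
    apply sum_congr rfl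
    rintro ⟨i, j⟩ -
    rcases lt_trichotomy i j with h | h | h
    · simp [h, h.ne, h.not_gt]
    · simp [h]
    · simp [h, h.ne', h.not_gt]
  rw [h1, h3, h5, h4, ← h2]; ring

lemma exp_sum_nilp {R ι : Type*} [CommRing R] [Algebra ℚ R] (s : Finset ι) (f : ι → R)
    (h : ∀ i ∈ s, IsNilpotent (f i)) :
    IsNilpotent.exp (∑ i ∈ s, f i) = ∏ i ∈ s, IsNilpotent.exp (f i) := by
  classical
  induction s using Finset.induction_on with
  | empty => simp
  | insert a s ha ih =>
    rw [sum_insert ha, prod_insert ha, IsNilpotent.exp_add_of_commute (Commute.all _ _)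
      (h a (mem_insert_self _ _)), ih (fun i hi => h i (mem_insert_of_mem hi))]
    exact isNilpotent_sum (fun i hi => h i (mem_insert_of_mem hi))

lemma ev_pow {N : ℕ} {R : Type*} [CommMonoid R] (x : Fin N → R) (e : Sym2 (Fin N)) (k : ℕ) :
    ev x e ^ k = ev (fun i => x i ^ k) e := by
  induction e with | _ i j => simp [ev_mk, mul_pow]

lemma prod_nd_eq_exp {N : ℕ} {R : Type*} [CommRing R] [Algebra ℚ R] (x : Fin N → R)
    (hx : ∀ i, x i ^ 4 = 0) :
    ∏ e ∈ nd N, (1 + ev x e) =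
      IsNilpotent.exp ((1/2 : ℚ) • (∑ i, x i) ^ 2) * IsNilpotent.exp ((-1/2 : ℚ) • ∑ i, x i ^ 2) *
      IsNilpotent.exp ((-1/4 : ℚ) • (∑ i, x i ^ 2) ^ 2) *
      IsNilpotent.exp ((1/6 : ℚ) • (∑ i, x i ^ 3) ^ 2) := by
  have hn1 : ∀ i, IsNilpotent (x i) := fun i => ⟨4, hx i⟩
  have hp1 : IsNilpotent (∑ i, x i) := isNilpotent_sum fun i _ => hn1 i
  have hp2 : IsNilpotent (∑ i, x i ^ 2) := isNilpotent_sum fun i _ => (hn1 i).pow_of_pos (by norm_num)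
  have hp3 : IsNilpotent (∑ i, x i ^ 3) := isNilpotent_sum fun i _ => (hn1 i).pow_of_pos (by norm_num)
  have hev : ∀ e : Sym2 (Fin N), ev x e ^ 4 = 0 := by
    intro e
    induction e with | _ i j => simp [ev_mk, mul_pow, hx]
  have hc : ∀ (c : ℚ) {y : R}, IsNilpotent y → IsNilpotent (c • y) := fun c y h => h.smul c
  have n1 := hc (1/2) (hp1.pow_of_pos (n := 2) (by norm_num))
  have n2 := hc (-1/2) hp2
  have n3 := hc (-1/4) (hp2.pow_of_pos (n := 2) (by norm_num))
  have n4 := hc (1/6) (hp3.pow_of_pos (n := 2) (by norm_num))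
  have n12 := (Commute.all _ _).isNilpotent_add n1 n2
  have n123 := (Commute.all _ _).isNilpotent_add n12 n3
  rw [← IsNilpotent.exp_add_of_commute (Commute.all _ _) n1 n2,
    ← IsNilpotent.exp_add_of_commute (Commute.all _ _) n12 n3,
    ← IsNilpotent.exp_add_of_commute (Commute.all _ _) n123 n4]
  rw [prod_congr rfl (fun e _ => (exp_log_four (ev x e) (hev e)).symm), ← exp_sum_nilp]
  · congr 1
    have t1 := two_sum_nd x
    have t2 := two_sum_nd (fun i => x i ^ 2)
    have t3 := two_sum_nd (fun i => x i ^ 3)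
    have z4 : ∑ i, (x i ^ 2) ^ 2 = 0 := sum_eq_zero fun i _ => by rw [← pow_mul]; exact hx i
    have z6 : ∑ i, (x i ^ 3) ^ 2 = 0 := sum_eq_zero fun i _ => by
      rw [← pow_mul, show 3 * 2 = 4 + 2 by norm_num, pow_add, hx, zero_mul]
    rw [z4, sub_zero] at t2
    rw [z6, sub_zero] at t3
    simp only [sum_add_distrib, ev_pow, ← smul_sum]
    rw [← t2, ← t3]
    have h1 : ∑ e ∈ nd N, ev x e = (1/2 : ℚ) • ((∑ i, x i) ^ 2 - ∑ i, x i ^ 2) := by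
      rw [← t1, two_mul, ← two_smul ℚ, smul_smul]; norm_num
    rw [h1]
    simp only [two_mul, ← two_smul ℚ, smul_smul, smul_sub]
    norm_num
    module
  · intro e _
    exact (Commute.all _ _).isNilpotent_add ((Commute.all _ _).isNilpotent_add ⟨4, hev e⟩
      (hc _ (IsNilpotent.pow_of_pos ⟨4, hev e⟩ (by norm_num))))
      (hc _ (IsNilpotent.pow_of_pos ⟨4, hev e⟩ (by norm_num)))

end

section
open Finset

def dg {N : ℕ} (E : Finset (Sym2 (Fin N))) (v : Fin N) : ℕ := #{e ∈ E | v ∈ e}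

def gr (N : ℕ) (d : Fin N → ℕ) : Finset (Finset (Sym2 (Fin N))) :=
  (nd N).powerset.filter (fun E => ∀ v, dg E v = d v)

def cub (N : ℕ) : Finset (Finset (Sym2 (Fin N))) := gr N (fun _ => 3)

noncomputable def ps (N j : ℕ) : MvPolynomial (Fin N) ℚ := ∑ i, MvPolynomial.X i ^ j

lemma ev_X_monomial {N : ℕ} (e : Sym2 (Fin N)) (he : ¬ e.IsDiag) :
    ev (MvPolynomial.X : Fin N → MvPolynomial (Fin N) ℚ) e =
      MvPolynomial.monomial (Finsupp.equivFunOnFinite.symm fun v => if v ∈ e then 1 else 0) 1 := by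
  induction e with
  | _ i j =>
    rw [ev_mk, MvPolynomial.X, MvPolynomial.X, MvPolynomial.monomial_mul]
    simp only [mul_one]
    refine congrArg (fun m => MvPolynomial.monomial m (1 : ℚ)) (Finsupp.ext fun v => ?_)
    have hij : i ≠ j := by simpa using he
    simp only [Finsupp.add_apply, Finsupp.single_apply, Finsupp.equivFunOnFinite_symm_apply_apply, Sym2.mem_iff]
    by_cases h1 : v = i
    · subst h1; simp [hij, hij.symm]
    · by_cases h2 : v = j
      · subst h2; simp [hij]
      · simp [h1, h2, Ne.symm h1, Ne.symm h2]

lemma prod_ev_X {N : ℕ} (E : Finset (Sym2 (Fin N))) (hE : E ⊆ nd N) :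
    ∏ e ∈ E, ev (MvPolynomial.X : Fin N → MvPolynomial (Fin N) ℚ) e =
      MvPolynomial.monomial (Finsupp.equivFunOnFinite.symm (dg E)) 1 := by
  have h : ∀ e ∈ E, ev (MvPolynomial.X : Fin N → MvPolynomial (Fin N) ℚ) e =
    MvPolynomial.monomial (Finsupp.equivFunOnFinite.symm fun v => if v ∈ e then 1 else 0) 1 := by
    intro e he
    exact ev_X_monomial e (by have := hE he; simpa [nd] using this)
  rw [prod_congr rfl h, ← MvPolynomial.monomial_sum_one]
  refine congrArg (fun m => MvPolynomial.monomial m (1 : ℚ)) (Finsupp.ext fun v => ?_)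
  simp [Finsupp.finsetSum_apply, dg]

lemma coeff_prod_nd {N : ℕ} (d : Fin N → ℕ) :
    MvPolynomial.coeff (Finsupp.equivFunOnFinite.symm d)
      (∏ e ∈ nd N, ((1 : MvPolynomial (Fin N) ℚ) + ev (MvPolynomial.X : Fin N → MvPolynomial (Fin N) ℚ) e)) = (#(gr N d) : ℚ) := by
  rw [prod_one_add, MvPolynomial.coeff_sum, gr, card_filter, Nat.cast_sum]
  apply sum_congr rfl
  intro E hE
  rw [prod_ev_X E (mem_powerset.1 hE), MvPolynomial.coeff_monomial]
  simp [funext_iff]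

lemma coeff_ps_mul {N : ℕ} (j : ℕ) (d : Fin N →₀ ℕ) (F : MvPolynomial (Fin N) ℚ) :
    MvPolynomial.coeff d (ps N j * F) =
      ∑ i, if j ≤ d i then MvPolynomial.coeff (d - Finsupp.single i j) F else 0 := by
  rw [ps, sum_mul, MvPolynomial.coeff_sum]
  apply sum_congr rfl
  intro i _
  rw [MvPolynomial.X_pow_eq_monomial, MvPolynomial.coeff_monomial_mul']
  simp

lemma coeff_ps_one {N : ℕ} (u : ℕ) (d : Fin N →₀ ℕ) :
    MvPolynomial.coeff d (ps N 1 ^ u) =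
      if ∑ i, d i = u then (u.factorial : ℚ) / ∏ i, ((d i).factorial : ℚ) else 0 := by
  induction u generalizing d with
  | zero =>
    rw [pow_zero, MvPolynomial.coeff_one]
    by_cases h : d = 0
    · subst h; simp
    · rw [if_neg (Ne.symm h), if_neg]
      intro h'
      apply h
      ext i
      simpa using (sum_eq_zero_iff.1 h') i (mem_univ i)
  | succ u ih =>
    rw [pow_succ', coeff_ps_mul]
    have key : ∀ i, (if 1 ≤ d i then MvPolynomial.coeff (d - Finsupp.single i 1) (ps N 1 ^ u) else 0)
        = if ∑ i, d i = u + 1 then (d i : ℚ) * ((u.factorial : ℚ) / ∏ i, ((d i).factorial : ℚ)) else 0 := by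
      intro i
      by_cases h : 1 ≤ d i
      · rw [if_pos h, ih]
        have h1 : ∑ k, (d - Finsupp.single i 1 : Fin N →₀ ℕ) k + 1 = ∑ k, d k := by
          rw [← add_sum_erase _ _ (mem_univ i), ← add_sum_erase univ (fun k => d k) (mem_univ i)]
          have : ∑ x ∈ univ.erase i, (d - Finsupp.single i 1 : Fin N →₀ ℕ) x = ∑ x ∈ univ.erase i, d x := by
            apply sum_congr rfl
            intro x hx
            simp [Finsupp.single_apply, (ne_of_mem_erase hx).symm]
          rw [this]; simp; omega
        have h2 : ∏ k, ((d k).factorial : ℚ) = d i * ∏ k, (((d - Finsupp.single i 1 : Fin N →₀ ℕ) k).factorial : ℚ) := by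
          rw [← mul_prod_erase _ _ (mem_univ i), ← mul_prod_erase univ (fun k => (((d - Finsupp.single i 1 : Fin N →₀ ℕ) k).factorial : ℚ)) (mem_univ i)]
          have : ∏ x ∈ univ.erase i, (((d - Finsupp.single i 1 : Fin N →₀ ℕ) x).factorial : ℚ) = ∏ x ∈ univ.erase i, ((d x).factorial : ℚ) := by
            apply prod_congr rfl
            intro x hx
            simp [Finsupp.single_apply, (ne_of_mem_erase hx).symm]
          rw [this, ← mul_assoc]; congr 1
          simp only [Finsupp.coe_tsub, Pi.sub_apply, Finsupp.single_eq_same]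
          rw [← Nat.cast_mul, Nat.mul_factorial_pred (by omega)]
        have h3 : (d i : ℚ) ≠ 0 := by norm_cast; omega
        rw [h2]
        by_cases h4 : ∑ k, d k = u + 1
        · rw [if_pos h4, if_pos (by omega)]
          field_simp
        · rw [if_neg h4, if_neg (by omega)]
      · have : d i = 0 := by omega
        simp [this]
    rw [sum_congr rfl (fun i _ => key i)]
    split_ifs with h
    · rw [← sum_mul, ← Nat.cast_sum, h, Nat.factorial_succ]; push_cast; ring
    · simp

def n3 {N : ℕ} (d : Fin N →₀ ℕ) : ℕ := #{i | d i = 3}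

lemma coeff_ps_all {N : ℕ} (u s t : ℕ) (d : Fin N →₀ ℕ) (hd : ∀ i, d i = 0 ∨ d i = 1 ∨ d i = 3) :
    MvPolynomial.coeff d (ps N 2 ^ s * (ps N 3 ^ t * ps N 1 ^ u)) =
      if ∑ i, d i = 2 * s + 3 * t + u then
        ((n3 d).descFactorial (s + t) : ℚ) * 6 ^ (s + t) * u.factorial / 6 ^ (n3 d) else 0 := by
  have step : ∀ (j : ℕ) (hj : j = 2 ∨ j = 3) (d : Fin N →₀ ℕ) (hd : ∀ i, d i = 0 ∨ d i = 1 ∨ d i = 3)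
      (F : MvPolynomial (Fin N) ℚ) (M w : ℕ)
      (hF : ∀ d : Fin N →₀ ℕ, (∀ i, d i = 0 ∨ d i = 1 ∨ d i = 3) → MvPolynomial.coeff d F =
        if ∑ i, d i = M then ((n3 d).descFactorial w : ℚ) * 6 ^ w * u.factorial / 6 ^ (n3 d) else 0),
      MvPolynomial.coeff d (ps N j * F) = if ∑ i, d i = j + M then
        ((n3 d).descFactorial (w + 1) : ℚ) * 6 ^ (w + 1) * u.factorial / 6 ^ (n3 d) else 0 := by
    intro j hj d hd F M w hF
    rw [coeff_ps_mul]
    have key : ∀ i, (if j ≤ d i then MvPolynomial.coeff (d - Finsupp.single i j) F else 0)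
        = if d i = 3 then (if ∑ i, d i = j + M then
          ((n3 d - 1).descFactorial w : ℚ) * 6 ^ (w + 1) * u.factorial / 6 ^ (n3 d) else 0) else 0 := by
      intro i
      by_cases h : d i = 3
      · rw [if_pos h, if_pos (by omega), hF]
        · have h1 : ∑ k, (d - Finsupp.single i j) k + j = ∑ k, d k := by
            rw [← add_sum_erase _ _ (mem_univ i), ← add_sum_erase univ (fun k => d k) (mem_univ i)]
            have : ∑ x ∈ univ.erase i, (d - Finsupp.single i j) x = ∑ x ∈ univ.erase i, d x := by
              apply sum_congr rfl
              intro x hx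
              simp [Finsupp.single_apply, (ne_of_mem_erase hx).symm]
            rw [this]; simp; omega
          have h2 : n3 d = n3 (d - Finsupp.single i j) + 1 := by
            unfold n3
            rw [← card_erase_add_one (s := ({k | d k = 3} : Finset (Fin N))) (a := i) (by simp [h])]
            congr 2
            ext k
            simp only [mem_erase, mem_filter, mem_univ, true_and, Finsupp.coe_tsub, Pi.sub_apply, Finsupp.single_apply]
            by_cases hk : k = i
            · subst hk; simp; omega
            · simp [hk, Ne.symm hk]
          rw [h2]
          by_cases h4 : ∑ k, d k = j + M
          · rw [if_pos h4, if_pos (by omega)]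
            simp only [Nat.add_sub_cancel]
            field_simp
            ring
          · rw [if_neg h4, if_neg (by omega)]
        · intro k
          simp only [Finsupp.coe_tsub, Pi.sub_apply, Finsupp.single_apply]
          by_cases hk : i = k
          · subst hk; simp; omega
          · simp [hk]; exact hd k
      · rw [if_neg h, if_neg]
        have := hd i; omega
    rw [sum_congr rfl (fun i _ => key i), ← sum_filter, sum_const, nsmul_eq_mul]
    change ((n3 d : ℕ) : ℚ) * _ = _
    split_ifs with h
    · have : (n3 d).descFactorial (w + 1) = n3 d * (n3 d - 1).descFactorial w := by
        rcases n3 d with _ | k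
        · simp
        · rw [Nat.succ_descFactorial_succ]; simp
      rw [this]; push_cast; ring
    · simp
  induction s generalizing d with
  | zero =>
    induction t generalizing d with
    | zero =>
      simp only [pow_zero, one_mul, mul_zero, zero_add, Nat.descFactorial_zero, Nat.cast_one, add_zero]
      rw [coeff_ps_one]
      congr 2
      have : ∀ i, ((d i).factorial : ℚ) = if d i = 3 then 6 else 1 := by
        intro i
        rcases hd i with h | h | h <;> simp [h, Nat.factorial]
      rw [prod_congr rfl (fun i _ => this i), prod_ite]
      simp [n3]
    | succ t ih =>
      have := step 3 (Or.inr rfl) d hd (ps N 2 ^ 0 * (ps N 3 ^ t * ps N 1 ^ u)) (2 * 0 + 3 * t + u) (0 + t) ih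
      rw [show ps N 2 ^ 0 * (ps N 3 ^ (t + 1) * ps N 1 ^ u) = ps N 3 * (ps N 2 ^ 0 * (ps N 3 ^ t * ps N 1 ^ u)) by ring, this]
      congr 2
      ring
  | succ s ih =>
      have := step 2 (Or.inl rfl) d hd (ps N 2 ^ s * (ps N 3 ^ t * ps N 1 ^ u)) (2 * s + 3 * t + u) (s + t) ih
      rw [show ps N 2 ^ (s + 1) * (ps N 3 ^ t * ps N 1 ^ u) = ps N 2 * (ps N 2 ^ s * (ps N 3 ^ t * ps N 1 ^ u)) by ring, this,
        show s + 1 + t = s + t + 1 by ring]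
      congr 2
      ring

end

section
open Finset

noncomputable def DD (q : ℕ) : ℚ := ((2 * q).factorial : ℚ) / (2 ^ q * q.factorial)

noncomputable def tau (n : ℕ) (p : ℕ × ℕ × ℕ) : ℚ :=
  ((-1/2) ^ p.1 / p.1.factorial) * ((-1/4) ^ p.2.1 / p.2.1.factorial) *
    ((1/6) ^ p.2.2 / p.2.2.factorial) *
    (((2 * n).descFactorial (p.1 + 2 * p.2.1 + 2 * p.2.2) : ℚ) * 6 ^ (p.1 + 2 * p.2.1 + 2 * p.2.2) *
      DD (3 * n - (p.1 + 2 * p.2.1 + 3 * p.2.2)) / 6 ^ (2 * n))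

lemma coeff_ideal_zero {N : ℕ} (f : MvPolynomial (Fin N) ℚ)
    (hf : f ∈ Ideal.span (Set.range fun i : Fin N => (MvPolynomial.X i : MvPolynomial (Fin N) ℚ) ^ 4)) :
    MvPolynomial.coeff (Finsupp.equivFunOnFinite.symm fun _ => 3) f = 0 := by
  have : (Set.range fun i : Fin N => (MvPolynomial.X i : MvPolynomial (Fin N) ℚ) ^ 4) =
      (fun s => MvPolynomial.monomial s (1 : ℚ)) '' (Set.range fun i : Fin N => Finsupp.single i 4) := by
    rw [← Set.range_comp]
    congr 1
    funext i
    simp [MvPolynomial.X_pow_eq_monomial]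
  rw [this, MvPolynomial.mem_ideal_span_monomial_image] at hf
  by_contra h
  obtain ⟨s, ⟨i, rfl⟩, hs⟩ := hf _ (MvPolynomial.mem_support_iff.2 h)
  have := hs i
  simp at this

lemma four_sum {R : Type*} [CommRing R] (K : ℕ) (f g h k : ℕ → R) :
    (∑ i ∈ range K, f i) * (∑ i ∈ range K, g i) * (∑ i ∈ range K, h i) * (∑ i ∈ range K, k i) =
    ∑ p ∈ range K ×ˢ range K ×ˢ range K, ∑ q ∈ range K, g p.1 * h p.2.1 * k p.2.2 * f q := by
  simp only [sum_product, ← mul_sum, ← sum_mul]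
  ring

lemma card_cub_sum (n : ℕ) : ∃ K, 2 * n < K ∧ (#(cub (2 * n)) : ℚ) =
    ∑ p ∈ range K ×ˢ range K ×ˢ range K, tau n p := by
  set N := 2 * n with hN
  set I := Ideal.span (Set.range fun i : Fin N => (MvPolynomial.X i : MvPolynomial (Fin N) ℚ) ^ 4) with hI
  set mk := Ideal.Quotient.mkₐ ℚ I with hmk
  set x : Fin N → MvPolynomial (Fin N) ℚ ⧸ I := fun i => mk (MvPolynomial.X i) with hx
  have hx4 : ∀ i, x i ^ 4 = 0 := by
    intro i
    rw [hx]; simp only [← map_pow]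
    rw [hmk, Ideal.Quotient.mkₐ_eq_mk, Ideal.Quotient.eq_zero_iff_mem]
    exact Ideal.subset_span ⟨i, rfl⟩
  have hP := prod_nd_eq_exp x hx4
  have hn1 : ∀ i, IsNilpotent (x i) := fun i => ⟨4, hx4 i⟩
  have hps : ∀ j, ∑ i, x i ^ j = mk (ps N j) := by intro j; simp [ps, hx]
  have hps1 : ∑ i, x i = mk (ps N 1) := by rw [← hps]; simp
  have hnil : ∀ j, j ≠ 0 → IsNilpotent (mk (ps N j)) := fun j hj => by
    rw [← hps]; exact isNilpotent_sum fun i _ => (hn1 i).pow_of_pos hj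
  rw [hps, hps, hps1] at hP
  have n1 := ((hnil 1 (by norm_num)).pow_of_pos (n := 2) (by norm_num)).smul (1/2 : ℚ)
  have n2 := ((hnil 2 (by norm_num))).smul (-1/2 : ℚ)
  have n3' := ((hnil 2 (by norm_num)).pow_of_pos (n := 2) (by norm_num)).smul (-1/4 : ℚ)
  have n4 := ((hnil 3 (by norm_num)).pow_of_pos (n := 2) (by norm_num)).smul (1/6 : ℚ)
  obtain ⟨k1, hk1⟩ := n1
  obtain ⟨k2, hk2⟩ := n2
  obtain ⟨k3, hk3⟩ := n3'
  obtain ⟨k4, hk4⟩ := n4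
  set K := k1 + k2 + k3 + k4 + 3 * N + 1 with hK
  refine ⟨K, by omega, ?_⟩
  have e1 := pow_eq_zero_of_le (show k1 ≤ K by omega) hk1
  have e2 := pow_eq_zero_of_le (show k2 ≤ K by omega) hk2
  have e3 := pow_eq_zero_of_le (show k3 ≤ K by omega) hk3
  have e4 := pow_eq_zero_of_le (show k4 ≤ K by omega) hk4
  rw [IsNilpotent.exp_eq_sum e1, IsNilpotent.exp_eq_sum e2, IsNilpotent.exp_eq_sum e3,
    IsNilpotent.exp_eq_sum e4] at hP
  set Q : MvPolynomial (Fin N) ℚ :=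
    (∑ i ∈ range K, (i.factorial : ℚ)⁻¹ • ((1/2 : ℚ) • ps N 1 ^ 2) ^ i) *
    (∑ i ∈ range K, (i.factorial : ℚ)⁻¹ • ((-1/2 : ℚ) • ps N 2) ^ i) *
    (∑ i ∈ range K, (i.factorial : ℚ)⁻¹ • ((-1/4 : ℚ) • ps N 2 ^ 2) ^ i) *
    (∑ i ∈ range K, (i.factorial : ℚ)⁻¹ • ((1/6 : ℚ) • ps N 3 ^ 2) ^ i) with hQ
  have hmkev : ∀ e, mk (ev MvPolynomial.X e) = ev x e := by
    intro e
    induction e with | _ i j => simp [ev_mk, hx]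
  have hPQ : mk (∏ e ∈ nd N, ((1 : MvPolynomial (Fin N) ℚ) + ev MvPolynomial.X e)) = mk Q := by
    rw [map_prod, hQ]
    simp only [map_add, map_one, map_mul, map_sum, map_pow, map_smul, hmkev]
    exact hP
  have hc : MvPolynomial.coeff (Finsupp.equivFunOnFinite.symm fun _ => 3)
      (∏ e ∈ nd N, ((1 : MvPolynomial (Fin N) ℚ) + ev MvPolynomial.X e)) =
      MvPolynomial.coeff (Finsupp.equivFunOnFinite.symm fun _ => 3) Q := by
    rw [← sub_eq_zero, ← MvPolynomial.coeff_sub]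
    apply coeff_ideal_zero
    rw [hmk, Ideal.Quotient.mkₐ_eq_mk] at hPQ
    exact Ideal.Quotient.eq.1 hPQ
  rw [coeff_prod_nd] at hc
  rw [cub, hc]
  have hQ2 : Q = ∑ p ∈ range K ×ˢ range K ×ˢ range K, ∑ q ∈ range K,
      (((-1/2 : ℚ) ^ p.1 / p.1.factorial) * ((-1/4) ^ p.2.1 / p.2.1.factorial) *
      ((1/6) ^ p.2.2 / p.2.2.factorial) * ((1/2) ^ q / q.factorial)) •
      (ps N 2 ^ (p.1 + 2 * p.2.1) * (ps N 3 ^ (2 * p.2.2) * ps N 1 ^ (2 * q))) := by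
    rw [hQ, four_sum]
    apply sum_congr rfl
    rintro ⟨a, b, c⟩ -
    apply sum_congr rfl
    intro q _
    simp only
    simp only [MvPolynomial.smul_eq_C_mul, mul_pow, ← map_pow]
    have : ∀ a b c d e f g h : ℚ, MvPolynomial.C (σ := Fin N) (e / a * (f / b) * (g / c) * (h / d))
      = MvPolynomial.C a⁻¹ * MvPolynomial.C b⁻¹ * MvPolynomial.C c⁻¹ * MvPolynomial.C d⁻¹ *
       (MvPolynomial.C e * MvPolynomial.C f * MvPolynomial.C g * MvPolynomial.C h) := by
      intros; simp only [← map_mul]; congr 1; field_simp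
    rw [this]
    ring
  rw [hQ2, MvPolynomial.coeff_sum]
  apply sum_congr rfl
  rintro ⟨a, b, c⟩ -
  rw [MvPolynomial.coeff_sum]
  have hd3 : n3 (Finsupp.equivFunOnFinite.symm fun _ : Fin N => 3) = N := by
    simp [n3]
  have hsum : ∑ i, (Finsupp.equivFunOnFinite.symm fun _ : Fin N => 3) i = 6 * n := by
    simp [hN]; omega
  have hterm : ∀ q, MvPolynomial.coeff (Finsupp.equivFunOnFinite.symm fun _ : Fin N => 3)
      (ps N 2 ^ (a + 2 * b) * (ps N 3 ^ (2 * c) * ps N 1 ^ (2 * q))) =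
      if 6 * n = 2 * (a + 2 * b) + 3 * (2 * c) + 2 * q then
        ((N).descFactorial (a + 2 * b + 2 * c) : ℚ) * 6 ^ (a + 2 * b + 2 * c) * (2 * q).factorial / 6 ^ N else 0 := by
    intro q
    rw [coeff_ps_all _ _ _ _ (by intro i; simp), hd3, hsum]
  simp only [MvPolynomial.coeff_smul, smul_eq_mul, hterm]
  by_cases h : a + 2 * b + 3 * c ≤ 3 * n
  · rw [sum_eq_single (3 * n - (a + 2 * b + 3 * c))]
    · rw [if_pos (by omega), tau, DD]
      simp only [← hN]
      have : ∀ k : ℕ, (1/2 : ℚ)^k = 1 / 2 ^ k := by intro k; rw [div_pow, one_pow]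
      rw [this (3 * n - (a + 2 * b + 3 * c))]
      field_simp
    · intro q _ hq
      rw [if_neg (by omega), mul_zero]
    · intro h'
      exfalso; apply h'; rw [mem_range]; omega
  · rw [sum_eq_zero]
    · rw [tau]
      simp only [← hN]
      have : N.descFactorial (a + 2 * b + 2 * c) = 0 := by
        rw [Nat.descFactorial_eq_zero_iff_lt]; omega
      rw [this]; simp
    · intro q _
      rw [if_neg (by omega), mul_zero]

lemma card_cub_tsum (n : ℕ) : (#(cub (2 * n)) : ℝ) = ∑' p, (tau n p : ℝ) := by
  obtain ⟨K, hK, h⟩ := card_cub_sum n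
  rw [tsum_eq_sum (s := range K ×ˢ range K ×ˢ range K)]
  · exact_mod_cast h
  · rintro ⟨a, b, c⟩ hp
    have : 2 * n < a + 2 * b + 2 * c := by
      by_contra h
      apply hp
      simp only [mem_product, mem_range]
      omega
    rw [tau]
    simp only
    rw [Nat.descFactorial_eq_zero_iff_lt.2 this]
    simp

end

section
open Finset Filter Topology

lemma DD_succ (q : ℕ) : DD (q + 1) = (2 * q + 1) * DD q := by
  unfold DD
  rw [show 2 * (q + 1) = 2 * q + 1 + 1 by ring, Nat.factorial_succ, Nat.factorial_succ,
    Nat.factorial_succ]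
  push_cast
  field_simp
  ring

lemma DD_pos (q : ℕ) : 0 < DD q := by unfold DD; positivity

lemma DD_mono : Monotone DD := by
  apply monotone_nat_of_le_succ
  intro q
  rw [DD_succ]
  have := DD_pos q
  have h : (0 : ℚ) ≤ q := by positivity
  nlinarith

noncomputable def rho (n w : ℕ) : ℝ := ((2 * n).descFactorial w : ℝ) * (DD (3 * n - w) : ℝ) / (DD (3 * n) : ℝ)

lemma rho_succ (n w : ℕ) (h : w < 3 * n) :
    rho n (w + 1) = rho n w * (((2 * n - w : ℕ) : ℝ) / (2 * (3 * n - w : ℕ) - 1 : ℝ)) := by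
  unfold rho
  obtain ⟨k, hk⟩ : ∃ k, 3 * n - w = k + 1 := ⟨3 * n - w - 1, by omega⟩
  rw [show 3 * n - (w + 1) = k by omega, hk, DD_succ, Nat.descFactorial_succ]
  have h1 : (DD (3 * n) : ℝ) ≠ 0 := by exact_mod_cast (DD_pos _).ne'
  push_cast
  have : (2 * ((k : ℝ) + 1) - 1) ≠ 0 := by
    have : (0 : ℝ) ≤ k := by positivity
    linarith
  have : (2 * (k : ℝ) + 1) ≠ 0 := by
    have : (0 : ℝ) ≤ k := by positivity
    linarith
  field_simp
  ring

lemma rho_zero (n : ℕ) : rho n 0 = 1 := by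
  unfold rho
  have h1 : (DD (3 * n) : ℝ) ≠ 0 := by exact_mod_cast (DD_pos _).ne'
  simp [h1]

lemma rho_nonneg (n w : ℕ) : 0 ≤ rho n w := by
  unfold rho
  have h1 : (0 : ℝ) < (DD (3 * n) : ℝ) := by exact_mod_cast (DD_pos _)
  have h2 : (0 : ℝ) < (DD (3 * n - w) : ℝ) := by exact_mod_cast (DD_pos _)
  positivity

lemma rho_le (n w : ℕ) (hn : 1 ≤ n) : rho n w * 3 ^ w ≤ 3 / 2 := by
  by_cases hw : w ≤ 2 * n
  swap
  · unfold rho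
    rw [Nat.descFactorial_eq_zero_iff_lt.2 (by omega)]; norm_num
  induction w with
  | zero => rw [rho_zero]; norm_num
  | succ w ih =>
    rw [rho_succ n w (by omega)]
    have ih := ih (by omega)
    have h0 := rho_nonneg n w
    have e1 : ((2 * n - w : ℕ) : ℝ) = 2 * n - w := by rw [Nat.cast_sub (by omega)]; push_cast; ring
    have e2 : ((3 * n - w : ℕ) : ℝ) = 3 * n - w := by rw [Nat.cast_sub (by omega)]; push_cast; ring
    rw [e1, e2]
    have hw' : (w : ℝ) + 1 ≤ 2 * n := by exact_mod_cast hw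
    have hn' : (1 : ℝ) ≤ n := by exact_mod_cast hn
    have hpos : 0 < 2 * (3 * (n : ℝ) - w) - 1 := by linarith
    rcases Nat.eq_zero_or_pos w with h | h
    · subst h
      rw [rho_zero]
      simp only [Nat.cast_zero, sub_zero, zero_add, pow_one, one_mul] at hpos ⊢
      rw [div_mul_eq_mul_div, div_le_iff₀ hpos]
      linarith
    · have hw1 : (1 : ℝ) ≤ w := by exact_mod_cast h
      have : (2 * (n : ℝ) - w) / (2 * (3 * (n : ℝ) - w) - 1) * 3 ≤ 1 := by
        rw [div_mul_eq_mul_div, div_le_one hpos]; linarith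
      have h3 : 0 ≤ rho n w * 3 ^ w := by positivity
      rw [pow_succ]
      nlinarith

lemma rho_tendsto (w : ℕ) : Tendsto (fun n => rho n w) atTop (𝓝 ((1/3) ^ w)) := by
  induction w with
  | zero => simp [rho_zero]
  | succ w ih =>
    have h1 : Tendsto (fun n : ℕ => (2 * (n : ℝ) - w) / (2 * (3 * n - w) - 1)) atTop (𝓝 (1/3)) := by
      have e : Tendsto (fun n : ℕ => (2 - w * (1 / (n : ℝ))) / (6 - (2 * w + 1) * (1 / (n : ℝ)))) atTop
          (𝓝 ((2 - w * 0) / (6 - (2 * w + 1) * 0))) := by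
        have := tendsto_one_div_atTop_nhds_zero_nat (𝕜 := ℝ)
        refine Tendsto.div ?_ ?_ (by norm_num)
        · exact tendsto_const_nhds.sub (this.const_mul _)
        · exact tendsto_const_nhds.sub (this.const_mul _)
      have e' : ((2 : ℝ) - w * 0) / (6 - (2 * w + 1) * 0) = 1 / 3 := by norm_num
      rw [e'] at e
      apply e.congr'
      filter_upwards [eventually_gt_atTop 0] with n hn
      have : (n : ℝ) ≠ 0 := by positivity
      have a1 : (2 * (n : ℝ) - w) = (2 - w * (1 / (n : ℝ))) * n := by field_simp
      have a2 : (2 * (3 * (n : ℝ) - w) - 1) = (6 - (2 * w + 1) * (1 / (n : ℝ))) * n := by field_simp; ring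
      rw [a1, a2, mul_div_mul_right _ _ this]
    have h2 := ih.mul h1
    rw [← pow_succ] at h2
    apply h2.congr'
    filter_upwards [eventually_gt_atTop w] with n hn
    rw [rho_succ n w (by omega)]
    have e1 : ((2 * n - w : ℕ) : ℝ) = 2 * n - w := by rw [Nat.cast_sub (by omega)]; push_cast; ring
    have e2 : ((3 * n - w : ℕ) : ℝ) = 3 * n - w := by rw [Nat.cast_sub (by omega)]; push_cast; ring
    rw [e1, e2]

lemma DD_ratio_tendsto (w c : ℕ) :
    Tendsto (fun n : ℕ => (DD (3 * n - (w + c)) : ℝ) / (DD (3 * n - w) : ℝ)) atTop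
      (𝓝 (if c = 0 then 1 else 0)) := by
  have hp : ∀ q, (0 : ℝ) < DD q := fun q => by exact_mod_cast DD_pos q
  split_ifs with h
  · subst h
    simp only [add_zero]
    refine tendsto_const_nhds.congr fun n => ?_
    rw [div_self (hp _).ne']
  · have h1 : Tendsto (fun n : ℕ => 1 / ((n : ℝ))) atTop (𝓝 0) := tendsto_one_div_atTop_nhds_zero_nat
    refine squeeze_zero' (Eventually.of_forall fun n => (div_nonneg (hp _).le (hp _).le)) ?_ h1
    filter_upwards [eventually_gt_atTop w] with n hn
    obtain ⟨k, hk⟩ : ∃ k, 3 * n - w = k + 1 := ⟨3 * n - w - 1, by omega⟩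
    have hm : (DD (3 * n - (w + c)) : ℝ) ≤ DD k := by exact_mod_cast DD_mono (by omega)
    rw [hk, DD_succ, div_le_div_iff₀ (by have := hp (k+1); rwa [DD_succ] at this)
      (by have : 0 < n := by omega
          exact_mod_cast this)]
    push_cast
    have hnk : (n : ℝ) ≤ 2 * k + 1 := by
      have : n ≤ 2 * k + 1 := by omega
      exact_mod_cast this
    have := hp (3 * n - (w + c))
    have := hp k
    calc (DD (3 * n - (w + c)) : ℝ) * n ≤ DD k * (2 * k + 1) := by gcongr
      _ = _ := by ring

lemma tau_ratio (n : ℕ) (p : ℕ × ℕ × ℕ) :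
    (tau n p : ℝ) / ((DD (3 * n) : ℝ) / 6 ^ (2 * n)) =
    ((-1/2) ^ p.1 / p.1.factorial) * ((-1/4) ^ p.2.1 / p.2.1.factorial) *
    ((1/6) ^ p.2.2 / p.2.2.factorial) * 6 ^ (p.1 + 2 * p.2.1 + 2 * p.2.2) *
      (rho n (p.1 + 2 * p.2.1 + 2 * p.2.2) *
      ((DD (3 * n - ((p.1 + 2 * p.2.1 + 2 * p.2.2) + p.2.2)) : ℝ) /
        (DD (3 * n - (p.1 + 2 * p.2.1 + 2 * p.2.2)) : ℝ))) := by
  have hp : ∀ q, (DD q : ℝ) ≠ 0 := fun q => by exact_mod_cast (DD_pos q).ne'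
  unfold tau rho
  rw [show p.1 + 2 * p.2.1 + 2 * p.2.2 + p.2.2 = p.1 + 2 * p.2.1 + 3 * p.2.2 by ring]
  have h1 := hp (3 * n)
  have h2 := hp (3 * n - (p.1 + 2 * p.2.1 + 2 * p.2.2))
  push_cast
  field_simp

lemma coef_simp (a b c : ℕ) : ((-1/2 : ℝ) ^ a / a.factorial) * ((-1/4) ^ b / b.factorial) *
    ((1/6) ^ c / c.factorial) * 6 ^ (a + 2 * b + 2 * c) * (1/3) ^ (a + 2 * b + 2 * c) =
    ((-1) ^ a / a.factorial) * ((-1) ^ b / b.factorial) * ((2/3) ^ c / c.factorial) := by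
  have : ((-1/2 : ℝ) ^ a / a.factorial) * ((-1/4) ^ b / b.factorial) *
    ((1/6) ^ c / c.factorial) * 6 ^ (a + 2 * b + 2 * c) * (1/3) ^ (a + 2 * b + 2 * c) =
    (((-1/2 : ℝ) ^ a * 6 ^ a * (1/3) ^ a) * ((-1/4) ^ b * (6 ^ 2) ^ b * ((1/3) ^ 2) ^ b) *
    ((1/6) ^ c * (6 ^ 2) ^ c * ((1/3) ^ 2) ^ c)) / (a.factorial * b.factorial * c.factorial) := by
    rw [pow_add, pow_add, pow_add, pow_add, pow_mul, pow_mul, pow_mul, pow_mul]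
    field_simp
  rw [this]
  simp only [← mul_pow]
  norm_num
  field_simp

set_option maxHeartbeats 1000000 in
lemma cub_asymp : Tendsto (fun n : ℕ => (#(cub (2 * n)) : ℝ) / ((DD (3 * n) : ℝ) / 6 ^ (2 * n))) atTop
    (𝓝 (Real.exp (-2))) := by
  have hp : ∀ q, (0 : ℝ) < DD q := fun q => by exact_mod_cast DD_pos q
  have hsf : ∀ x : ℝ, Summable fun k : ℕ => x ^ k / k.factorial := Real.summable_pow_div_factorial
  have hexp : ∀ x : ℝ, HasSum (fun k : ℕ => x ^ k / k.factorial) (Real.exp x) := fun x => by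
    have := NormedSpace.expSeries_div_hasSum_exp (𝔸 := ℝ) x
    rwa [← Real.exp_eq_exp_ℝ] at this
  have hb2 : Summable fun p : ℕ × ℕ => (1 ^ p.1 / p.1.factorial : ℝ) * ((2/3) ^ p.2 / p.2.factorial : ℝ) :=
    Summable.mul_of_nonneg (hsf 1) (hsf (2/3)) (fun k => by positivity) (fun k => by positivity)
  have hb3 : Summable fun p : ℕ × ℕ × ℕ => (1 ^ p.1 / p.1.factorial : ℝ) *
      ((1 ^ p.2.1 / p.2.1.factorial : ℝ) * ((2/3) ^ p.2.2 / p.2.2.factorial : ℝ)) :=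
    Summable.mul_of_nonneg (hsf 1) hb2 (fun k => by positivity) (fun k => by positivity)
  have key := tendsto_tsum_of_dominated_convergence (𝓕 := atTop)
    (f := fun n p => (tau n p : ℝ) / ((DD (3 * n) : ℝ) / 6 ^ (2 * n)))
    (g := fun p : ℕ × ℕ × ℕ => ((-1) ^ p.1 / p.1.factorial : ℝ) *
      (((-1) ^ p.2.1 / p.2.1.factorial) * (if p.2.2 = 0 then 1 else 0)))
    (hb3.mul_left (3/2)) ?_ ?_
  · have hlim : ∑' p : ℕ × ℕ × ℕ, ((-1) ^ p.1 / p.1.factorial : ℝ) *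
      (((-1) ^ p.2.1 / p.2.1.factorial) * (if p.2.2 = 0 then 1 else 0)) = Real.exp (-2) := by
      have hz : HasSum (fun c : ℕ => if c = 0 then (1 : ℝ) else 0) 1 := hasSum_ite_eq 0 1
      have hzn : Summable (fun c : ℕ => ‖(if c = 0 then (1 : ℝ) else 0)‖) := by
        refine (hz.summable).congr fun c => ?_
        split_ifs <;> simp
      have hen : Summable (fun k : ℕ => ‖((-1 : ℝ) ^ k / k.factorial)‖) := by
        refine (hsf 1).congr fun k => ?_
        simp
      have h2 := tsum_mul_tsum_of_summable_norm hen hzn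
      have h2n := Summable.mul_norm hen hzn
      have h3 := tsum_mul_tsum_of_summable_norm hen h2n
      rw [← h3, ← h2, hz.tsum_eq, (hexp (-1)).tsum_eq, mul_one, ← Real.exp_add]
      norm_num
    rw [hlim] at key
    refine key.congr fun n => ?_
    rw [card_cub_tsum, tsum_div_const]
  · rintro ⟨a, b, c⟩
    simp only [tau_ratio]
    have h1 := (rho_tendsto (a + 2 * b + 2 * c)).mul (DD_ratio_tendsto (a + 2 * b + 2 * c) c)
    have h2 := h1.const_mul (((-1/2 : ℝ) ^ a / a.factorial) * ((-1/4) ^ b / b.factorial) *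
      ((1/6) ^ c / c.factorial) * 6 ^ (a + 2 * b + 2 * c))
    rw [← mul_assoc, coef_simp] at h2
    convert h2 using 2
    split_ifs with hc
    · subst hc; simp
    · simp
  · filter_upwards [eventually_ge_atTop 1] with n hn
    rintro ⟨a, b, c⟩
    rw [tau_ratio]
    simp only
    rw [norm_mul]
    have h1 : ‖rho n (a + 2 * b + 2 * c) *
      ((DD (3 * n - ((a + 2 * b + 2 * c) + c)) : ℝ) / (DD (3 * n - (a + 2 * b + 2 * c)) : ℝ))‖ ≤
      (3/2) * (1/3) ^ (a + 2 * b + 2 * c) := by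
      have h3 := rho_le n (a + 2 * b + 2 * c) hn
      have h4 : (DD (3 * n - ((a + 2 * b + 2 * c) + c)) : ℝ) / (DD (3 * n - (a + 2 * b + 2 * c)) : ℝ) ≤ 1 := by
        rw [div_le_one (hp _)]
        exact_mod_cast DD_mono (by omega)
      have h5 : 0 ≤ (DD (3 * n - ((a + 2 * b + 2 * c) + c)) : ℝ) / (DD (3 * n - (a + 2 * b + 2 * c)) : ℝ) :=
        div_nonneg (hp _).le (hp _).le
      have h6 := rho_nonneg n (a + 2 * b + 2 * c)
      rw [Real.norm_of_nonneg (mul_nonneg h6 h5), one_div, inv_pow, ← div_eq_mul_inv, le_div_iff₀ (by positivity)]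
      calc _ ≤ rho n (a + 2 * b + 2 * c) * 1 * 3 ^ (a + 2 * b + 2 * c) := by gcongr
        _ ≤ _ := by rw [mul_one]; exact h3
    refine (mul_le_mul_of_nonneg_left h1 (norm_nonneg _)).trans (le_of_eq ?_)
    have h7 : (1/3 : ℝ) ^ (a + 2 * b + 2 * c) = ‖(1/3 : ℝ) ^ (a + 2 * b + 2 * c)‖ := by
      rw [Real.norm_of_nonneg (by positivity)]
    rw [mul_left_comm]
    congr 1
    rw [h7, ← norm_mul, coef_simp]
    simp [mul_assoc]

end

section
open Finset Filter Topology

lemma sum_dg {N : ℕ} (E : Finset (Sym2 (Fin N))) (hE : E ⊆ nd N) : ∑ v, dg E v = 2 * #E := by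
  unfold dg
  simp only [card_filter]
  rw [sum_comm, mul_comm, ← smul_eq_mul, ← sum_const]
  apply sum_congr rfl
  intro e he
  have : ¬ e.IsDiag := by simpa [nd] using hE he
  rw [← Sym2.card_toFinset_of_not_isDiag e this, ← card_filter]
  congr 1
  ext v; simp

lemma prod_fact_erase {N : ℕ} (d : Fin N → ℕ) (e : Sym2 (Fin N)) (he : ¬ e.IsDiag) (hd : ∀ v ∈ e, 1 ≤ d v) :
    ∏ v, ((d v).factorial : ℚ) = ev (fun v => (d v : ℚ)) e *
      ∏ v, ((d v - if v ∈ e then 1 else 0).factorial : ℚ) := by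
  induction e with
  | _ i j =>
    have hij : i ≠ j := by simpa using he
    have hji : j ∈ univ.erase i := by simp [hij.symm]
    rw [ev_mk]
    rw [← mul_prod_erase _ _ (mem_univ i), ← mul_prod_erase _ _ hji,
      ← mul_prod_erase univ (fun v => ((d v - if v ∈ s(i, j) then 1 else 0).factorial : ℚ)) (mem_univ i),
      ← mul_prod_erase _ (fun v => ((d v - if v ∈ s(i, j) then 1 else 0).factorial : ℚ)) hji]
    have h1 : ∏ x ∈ (univ.erase i).erase j, ((d x - if x ∈ s(i, j) then 1 else 0).factorial : ℚ) =
      ∏ x ∈ (univ.erase i).erase j, ((d x).factorial : ℚ) := by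
      apply prod_congr rfl
      intro x hx
      simp only [mem_erase, mem_univ, and_true] at hx
      simp [hx.1, hx.2]
    rw [h1]
    simp only [Sym2.mem_iff, true_or, or_true, if_true]
    have hi : ((d i).factorial : ℚ) = d i * (d i - 1).factorial := by
      rw [← Nat.mul_factorial_pred (n := d i) (by have := hd i (by simp); omega)]; push_cast; rfl
    have hj : ((d j).factorial : ℚ) = d j * (d j - 1).factorial := by
      rw [← Nat.mul_factorial_pred (n := d j) (by have := hd j (by simp); omega)]; push_cast; rfl
    rw [hi, hj]; ring

lemma gr_le {N : ℕ} (q : ℕ) (d : Fin N → ℕ) (hd : ∑ v, d v = 2 * q) :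
    (#(gr N d) : ℚ) * ∏ v, ((d v).factorial : ℚ) ≤ DD q := by
  induction q generalizing d with
  | zero =>
    have h0 : ∀ v, d v = 0 := by simpa using hd
    have : #(gr N d) ≤ 1 := by
      rw [card_le_one]
      have : ∀ E ∈ gr N d, E = ∅ := by
        intro E hE
        simp only [gr, mem_filter, mem_powerset] at hE
        have := sum_dg E hE.1
        rw [sum_congr rfl (fun v _ => hE.2 v), hd] at this
        rw [← card_eq_zero]; omega
      intro a ha b hb
      rw [this a ha, this b hb]
    simp only [h0, DD]
    norm_num
    exact_mod_cast this
  | succ q ih =>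
    have hcard : ∀ E ∈ gr N d, #E = q + 1 := by
      intro E hE
      simp only [gr, mem_filter, mem_powerset] at hE
      have := sum_dg E hE.1
      rw [sum_congr rfl (fun v _ => hE.2 v), hd] at this
      omega
    have hdc : (q + 1) * #(gr N d) = ∑ e ∈ nd N, #{E ∈ gr N d | e ∈ E} := by
      simp only [card_filter]
      rw [sum_comm, mul_comm, ← smul_eq_mul, ← sum_const]
      apply sum_congr rfl
      intro E hE
      rw [← hcard E hE, ← card_filter]
      congr 1
      ext e
      simp only [mem_filter]
      refine ⟨fun h => ⟨?_, h⟩, fun h => h.2⟩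
      simp only [gr, mem_filter, mem_powerset] at hE
      exact hE.1 h
    have hone : ∀ e ∈ nd N, (#{E ∈ gr N d | e ∈ E} : ℚ) * ∏ v, ((d v).factorial : ℚ) ≤
        ev (fun v => (d v : ℚ)) e * DD q := by
      intro e he
      have he' : ¬ e.IsDiag := by simpa [nd] using he
      have hevn : 0 ≤ ev (fun v => (d v : ℚ)) e := by
        induction e with | _ i j => rw [ev_mk]; positivity
      by_cases hemp : ({E ∈ gr N d | e ∈ E} : Finset _) = ∅
      · rw [hemp]; simp
        exact mul_nonneg hevn (DD_pos q).le
      obtain ⟨E₀, hE₀⟩ := nonempty_iff_ne_empty.2 hemp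
      simp only [gr, mem_filter, mem_powerset] at hE₀
      have hd1 : ∀ v ∈ e, 1 ≤ d v := by
        intro v hv
        rw [← hE₀.1.2 v, dg, Nat.one_le_iff_ne_zero, ← Nat.pos_iff_ne_zero, card_pos]
        exact ⟨e, by simp [hE₀.2, hv]⟩
      rw [prod_fact_erase d e he' hd1]
      set d' : Fin N → ℕ := fun v => d v - if v ∈ e then 1 else 0 with hd'
      have hsum' : ∑ v, d' v = 2 * q := by
        have h1 : ∑ v, d' v + ∑ v, (if v ∈ e then 1 else 0) = ∑ v, d v := by
          rw [← sum_add_distrib]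
          apply sum_congr rfl
          intro v _
          simp only [hd']
          split_ifs with h
          · have := hd1 v h; omega
          · omega
        have h2 : ∑ v, (if v ∈ e then 1 else 0) = 2 := by
          rw [← card_filter, ← Sym2.card_toFinset_of_not_isDiag e he']
          congr 1; ext v; simp
        omega
      have hinj : #{E ∈ gr N d | e ∈ E} ≤ #(gr N d') := by
        apply card_le_card_of_injOn (fun E => E.erase e)
        · intro E hE
          simp only [gr, coe_filter, mem_filter, mem_powerset, Set.mem_ofPred_eq] at hE ⊢
          refine ⟨(erase_subset _ _).trans hE.1.1, fun v => ?_⟩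
          simp only [hd']
          rw [← hE.1.2 v, dg, dg, filter_erase, card_erase_eq_ite]
          simp only [mem_filter, hE.2, true_and]
          split_ifs <;> rfl
        · intro E hE E' hE' h
          simp only [coe_filter, Set.mem_ofPred_eq] at hE hE'
          rw [← insert_erase hE.2, ← insert_erase hE'.2]
          simp only at h
          rw [h]
      have := ih d' hsum'
      calc _ = ev (fun v => (d v : ℚ)) e * ((#{E ∈ gr N d | e ∈ E} : ℚ) * ∏ v, ((d' v).factorial : ℚ)) := by ring
        _ ≤ ev (fun v => (d v : ℚ)) e * ((#(gr N d') : ℚ) * ∏ v, ((d' v).factorial : ℚ)) := by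
          gcongr
        _ ≤ _ := by gcongr
    have hsumev : 2 * ∑ e ∈ nd N, ev (fun v => (d v : ℚ)) e ≤ 2 * ((q + 1) * (2 * q + 1)) := by
      rw [two_sum_nd]
      have h1 : ∑ i, (d i : ℚ) = 2 * (q + 1) := by exact_mod_cast hd
      have h2 : ∑ i, (d i : ℚ) ≤ ∑ i, (d i : ℚ) ^ 2 := by
        apply sum_le_sum
        intro i _
        have : d i ≤ d i ^ 2 := Nat.le_self_pow (by norm_num) _
        exact_mod_cast this
      rw [h1] at h2 ⊢
      nlinarith
    have hfin : ((q : ℚ) + 1) * ((#(gr N d) : ℚ) * ∏ v, ((d v).factorial : ℚ)) ≤ (q + 1) * ((2 * q + 1) * DD q) := by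
      calc _ = (((q + 1) * #(gr N d) : ℕ) : ℚ) * ∏ v, ((d v).factorial : ℚ) := by push_cast; ring
        _ = ∑ e ∈ nd N, (#{E ∈ gr N d | e ∈ E} : ℚ) * ∏ v, ((d v).factorial : ℚ) := by
          rw [hdc, Nat.cast_sum, sum_mul]
        _ ≤ ∑ e ∈ nd N, ev (fun v => (d v : ℚ)) e * DD q := sum_le_sum hone
        _ = (∑ e ∈ nd N, ev (fun v => (d v : ℚ)) e) * DD q := by rw [sum_mul]
        _ ≤ ((q + 1) * (2 * q + 1)) * DD q := by
          have := DD_pos q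
          gcongr
          linarith
        _ = _ := by ring
    rw [DD_succ]
    have : (0 : ℚ) < q + 1 := by positivity
    exact le_of_mul_le_mul_left hfin this

lemma pow_succ_le_three (q k : ℕ) (hk : k ≤ q) : ((q : ℝ) + 1) ^ k ≤ 3 * (q : ℝ) ^ k := by
  rcases Nat.eq_zero_or_pos q with h | h
  · subst h
    have : k = 0 := by omega
    subst this; norm_num
  have hq : (0 : ℝ) < q := by exact_mod_cast h
  have h1 : (1 + 1 / (q : ℝ)) ^ k ≤ 3 := by
    calc (1 + 1 / (q : ℝ)) ^ k ≤ (Real.exp (1 / q)) ^ k := by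
          gcongr
          have := Real.add_one_le_exp (1 / (q : ℝ)); linarith
      _ = Real.exp (k * (1 / q)) := by rw [Real.exp_nat_mul]
      _ ≤ Real.exp 1 := by
          apply Real.exp_le_exp.2
          rw [mul_one_div, div_le_one hq]
          exact_mod_cast hk
      _ ≤ 3 := by have := Real.exp_one_lt_d9; linarith
  calc ((q : ℝ) + 1) ^ k = (1 + 1 / (q : ℝ)) ^ k * (q : ℝ) ^ k := by
        rw [← mul_pow]; congr 1; field_simp
    _ ≤ _ := by gcongr

lemma DD_ratio_le (q k : ℕ) (hk : k ≤ q) : (q : ℝ) ^ k * (DD (q - k) : ℝ) ≤ 3 ^ k * (DD q : ℝ) := by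
  induction q generalizing k with
  | zero =>
    have : k = 0 := by omega
    subst this; simp
  | succ q ih =>
    rcases k with _ | k
    · simp
    have h := ih k (by omega)
    have hp : ∀ q, (0 : ℝ) < DD q := fun q => by exact_mod_cast DD_pos q
    rw [show q + 1 - (k + 1) = q - k by omega, DD_succ]
    push_cast
    have h3 := pow_succ_le_three q k (by omega)
    have := hp (q - k)
    have := hp q
    calc ((q : ℝ) + 1) ^ (k + 1) * (DD (q - k) : ℝ) = (q + 1) * ((q + 1) ^ k * (DD (q - k) : ℝ)) := by ring
      _ ≤ (q + 1) * ((3 * q ^ k) * (DD (q - k) : ℝ)) := by gcongr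
      _ = (q + 1) * 3 * (q ^ k * (DD (q - k) : ℝ)) := by ring
      _ ≤ (q + 1) * 3 * (3 ^ k * (DD q : ℝ)) := by gcongr
      _ = 3 ^ (k + 1) * ((q + 1) * (DD q : ℝ)) := by ring
      _ ≤ _ := by
        gcongr
        have : (0 : ℝ) ≤ q := by positivity
        linarith

noncomputable def BB (n : ℕ) : ℝ := (DD (3 * n) : ℝ) / 6 ^ (2 * n)

lemma cub_containing_le (n : ℕ) (hn : 1 ≤ n) (H : Finset (Sym2 (Fin (2 * n)))) :
    (#{E ∈ cub (2 * n) | H ⊆ E} : ℝ) ≤ (36 / n) ^ #H * BB n := by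
  have hp : ∀ q, (0 : ℝ) < DD q := fun q => by exact_mod_cast DD_pos q
  by_cases hemp : ({E ∈ cub (2 * n) | H ⊆ E} : Finset _) = ∅
  · rw [hemp, BB]
    have := hp (3 * n)
    simp; positivity
  obtain ⟨E₀, hE₀⟩ := nonempty_iff_ne_empty.2 hemp
  simp only [cub, gr, mem_filter, mem_powerset] at hE₀
  obtain ⟨⟨hE1, hE2⟩, hHE⟩ := hE₀
  have hH := hHE.trans hE1
  have hdg : ∀ v, dg H v ≤ 3 := by
    intro v
    rw [← hE2 v]
    exact card_le_card (filter_subset_filter _ hHE)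
  have hsH := sum_dg H hH
  have hsE := sum_dg E₀ hE1
  simp only [hE2, sum_const, card_univ, Fintype.card_fin, smul_eq_mul] at hsE
  have hkle : #H ≤ 3 * n := by
    have := card_le_card hHE
    omega
  set d : Fin (2 * n) → ℕ := fun v => 3 - dg H v with hd
  have hsd : ∑ v, d v = 2 * (3 * n - #H) := by
    have : ∑ v, d v + ∑ v, dg H v = ∑ v : Fin (2 * n), 3 := by
      rw [← sum_add_distrib]
      apply sum_congr rfl
      intro v _
      have := hdg v
      simp only [hd]; omega
    simp only [sum_const, card_univ, Fintype.card_fin, smul_eq_mul] at this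
    omega
  have hinj : #{E ∈ cub (2 * n) | H ⊆ E} ≤ #(gr (2 * n) d) := by
    apply card_le_card_of_injOn (fun E => E \ H)
    · intro E hE
      simp only [cub, gr, coe_filter, mem_filter, mem_powerset, Set.mem_ofPred_eq] at hE ⊢
      refine ⟨sdiff_subset.trans hE.1.1, fun v => ?_⟩
      simp only [hd]
      rw [← hE.1.2 v, dg, dg, dg, ← card_sdiff_of_subset (filter_subset_filter _ hE.2)]
      congr 1
      ext e
      simp only [mem_filter, Finset.mem_sdiff]
      tauto
    · intro E hE E' hE' h
      simp only [coe_filter, Set.mem_ofPred_eq] at hE hE'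
      rw [← sdiff_union_of_subset hE.2, ← sdiff_union_of_subset hE'.2]
      simp only at h
      rw [h]
  have hgr := gr_le (3 * n - #H) d hsd
  have hfac : (6 : ℚ) ^ (2 * n) ≤ 36 ^ #H * ∏ v, ((d v).factorial : ℚ) := by
    have h1 : (36 : ℚ) ^ #H = ∏ v, (6 : ℚ) ^ dg H v := by
      rw [prod_pow_eq_pow_sum, hsH, pow_mul]; norm_num
    rw [h1, ← prod_mul_distrib]
    have h2 : (6 : ℚ) ^ (2 * n) = ∏ v : Fin (2 * n), (6 : ℚ) := by simp
    rw [h2]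
    apply Finset.prod_le_prod
    · intros; norm_num
    · intro v _
      have := hdg v
      simp only [hd]
      interval_cases dg H v <;> norm_num [Nat.factorial]
  have hq : (#(gr (2 * n) d) : ℚ) * 6 ^ (2 * n) ≤ 36 ^ #H * DD (3 * n - #H) := by
    calc (#(gr (2 * n) d) : ℚ) * 6 ^ (2 * n) ≤ #(gr (2 * n) d) * (36 ^ #H * ∏ v, ((d v).factorial : ℚ)) := by gcongr
      _ = 36 ^ #H * (#(gr (2 * n) d) * ∏ v, ((d v).factorial : ℚ)) := by ring
      _ ≤ _ := by gcongr
  have hq' : (#(gr (2 * n) d) : ℝ) * 6 ^ (2 * n) ≤ 36 ^ #H * (DD (3 * n - #H) : ℝ) := by exact_mod_cast hq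
  have hr := DD_ratio_le (3 * n) (#H) hkle
  have hn' : (0 : ℝ) < n := by exact_mod_cast hn
  have hr' : (DD (3 * n - #H) : ℝ) ≤ (1 / n) ^ #H * DD (3 * n) := by
    push_cast at hr
    rw [mul_pow, mul_assoc] at hr
    have h3 : (0 : ℝ) < 3 ^ #H := by positivity
    have := le_of_mul_le_mul_left hr h3
    rw [one_div, inv_pow, ← div_eq_inv_mul, le_div_iff₀ (by positivity)]
    linarith
  have hc : (#{E ∈ cub (2 * n) | H ⊆ E} : ℝ) ≤ #(gr (2 * n) d) := by exact_mod_cast hinj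
  refine hc.trans ?_
  rw [BB, ← mul_div_assoc, le_div_iff₀ (by positivity)]
  calc _ ≤ 36 ^ #H * (DD (3 * n - #H) : ℝ) := hq'
    _ ≤ 36 ^ #H * ((1 / n) ^ #H * DD (3 * n)) := by gcongr
    _ = _ := by rw [← mul_assoc, ← mul_pow]; congr 2; field_simp

end

section
open Finset Filter Topology

/-- sum over a family of subsets compatible with translates -/
lemma sum_family_le {α : Type*} [Fintype α] [DecidableEq α] (X : Finset α) (F : Finset (Finset α))
    (hF : ∀ H ∈ F, H ⊆ X) (y b : α → ℝ) (hy0 : ∀ e ∈ X, 0 ≤ y e) (hy1 : ∀ e ∈ X, y e ≤ 1)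
    (hb0 : ∀ e ∈ X, 0 ≤ b e)
    (hb : ∀ e ∈ X, ∃ T : Finset α, T ⊆ X ∧ (∀ H ∈ F, ∀ e' ∈ T, (e ∈ H ↔ e' ∈ H)) ∧ ∏ e' ∈ T, y e' ≤ b e) :
    ∑ H ∈ F, ∏ e ∈ H, y e ≤ ∏ e ∈ X, (1 + b e) := by
  classical
  let s : Setoid α := ⟨fun e e' => ∀ H ∈ F, (e ∈ H ↔ e' ∈ H),
    ⟨fun _ _ _ => Iff.rfl, fun h H hH => (h H hH).symm, fun h h' H hH => (h H hH).trans (h' H hH)⟩⟩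
  let rep : α → α := fun e => (Quotient.mk s e).out
  have hrep : ∀ e, ∀ H ∈ F, (rep e ∈ H ↔ e ∈ H) := fun e => Quotient.exact (s := s) (Quotient.out_eq _)
  have hrep2 : ∀ e e', (∀ H ∈ F, (e ∈ H ↔ e' ∈ H)) → rep e = rep e' := by
    intro e e' h
    have : Quotient.mk s e = Quotient.mk s e' := Quotient.sound h
    simp only [rep, this]
  have hrr : ∀ e, rep (rep e) = rep e := fun e => hrep2 _ _ (hrep e)
  have key : ∀ H ∈ F, ∏ e ∈ H, y e ≤ ∏ e ∈ H.filter (fun e => rep e = e), b e := by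
    intro H hH
    have hm : ∀ e ∈ H, rep e ∈ H.filter (fun e => rep e = e) := by
      intro e he
      exact Finset.mem_filter.2 ⟨(hrep e H hH).2 he, hrr e⟩
    rw [← Finset.prod_fiberwise_of_maps_to hm]
    refine Finset.prod_le_prod (fun e he => Finset.prod_nonneg fun e' he' => hy0 _ (hF H hH (Finset.mem_filter.1 he').1)) ?_
    intro e he
    obtain ⟨heH, hre⟩ := Finset.mem_filter.1 he
    obtain ⟨T, hTX, hT, hTb⟩ := hb e (hF H hH heH)
    refine le_trans ?_ hTb
    have hsub : T ⊆ H.filter (fun e' => rep e' = e) := by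
      intro e' he'
      refine Finset.mem_filter.2 ⟨(hT H hH e' he').1 heH, ?_⟩
      rw [← hre]
      exact (hrep2 _ _ (fun H' hH' => hT H' hH' e' he')).symm.trans (by rw [hre])
    rw [← Finset.prod_sdiff hsub]
    refine mul_le_of_le_one_left (Finset.prod_nonneg fun e' he' => hy0 _ (hTX he')) ?_
    refine Finset.prod_le_one (fun e' he' => ?_) (fun e' he' => ?_)
    · exact hy0 _ (hF H hH (Finset.mem_filter.1 (Finset.mem_sdiff.1 he').1).1)
    · exact hy1 _ (hF H hH (Finset.mem_filter.1 (Finset.mem_sdiff.1 he').1).1)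
  calc ∑ H ∈ F, ∏ e ∈ H, y e ≤ ∑ H ∈ F, ∏ e ∈ H.filter (fun e => rep e = e), b e := Finset.sum_le_sum key
    _ = ∑ K ∈ F.image (fun H => H.filter (fun e => rep e = e)), ∏ e ∈ K, b e := by
        rw [Finset.sum_image]
        intro H hH H' hH' h
        ext e
        rw [← hrep e H hH, ← hrep e H' hH']
        have := congrArg (fun K => rep e ∈ K) h
        simpa [hrr] using this
    _ ≤ ∑ K ∈ X.powerset, ∏ e ∈ K, b e := by
        apply Finset.sum_le_sum_of_subset_of_nonneg
        · intro K hK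
          obtain ⟨H, hH, rfl⟩ := Finset.mem_image.1 hK
          exact Finset.mem_powerset.2 ((Finset.filter_subset _ _).trans (hF H hH))
        · intro K hK _
          exact Finset.prod_nonneg fun e he => hb0 e (Finset.mem_powerset.1 hK he)
    _ = ∏ e ∈ X, (1 + b e) := by
        rw [Finset.prod_one_add]

lemma sum_le_sum_pairs {α β : Type*} [DecidableEq α] (X : Finset α) (P : Finset β) (g : β → α)
    (b : α → ℝ) (B : β → ℝ) (hB0 : ∀ p ∈ P, 0 ≤ B p) (h : ∀ e ∈ X, ∃ p ∈ P, g p = e ∧ b e ≤ B p) :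
    ∑ e ∈ X, b e ≤ ∑ p ∈ P, B p := by
  classical
  rcases X.eq_empty_or_nonempty with rfl | ⟨e₀, he₀⟩
  · simpa using Finset.sum_nonneg hB0
  have : Nonempty β := ⟨(h e₀ he₀).choose⟩
  choose! f hf using h
  calc ∑ e ∈ X, b e ≤ ∑ e ∈ X, B (f e) := Finset.sum_le_sum fun e he => (hf e he).2.2
    _ = ∑ p ∈ X.image f, B p := by
        rw [Finset.sum_image]
        intro e he e' he' hh
        rw [← (hf e he).2.1, hh, (hf e' he').2.1]
    _ ≤ _ := Finset.sum_le_sum_of_subset_of_nonneg (by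
        intro p hp
        obtain ⟨e, he, rfl⟩ := Finset.mem_image.1 hp
        exact (hf e he).1) (fun p hp _ => hB0 p hp)

lemma map_iter {N : ℕ} (σ : Equiv.Perm (Fin N)) (j : ℕ) (u v : Fin N) :
    (Sym2.map σ)^[j] s(u, v) = s(σ^[j] u, σ^[j] v) := by
  induction j with
  | zero => rfl
  | succ j ih => rw [Function.iterate_succ_apply', ih, Sym2.map_mk, Function.iterate_succ_apply', Function.iterate_succ_apply']

lemma collision {N : ℕ} (σ : Equiv.Perm (Fin N)) (u v : Fin N)
    (h : ¬ Set.InjOn (fun j => (Sym2.map σ)^[j] s(u, v)) (Set.Iio (Function.minimalPeriod σ u))) :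
    ∃ d, σ^[d] u = v ∧ σ^[d] v = u ∧ 2 * d = Function.minimalPeriod σ u := by
  have hinj : Function.Injective (Sym2.map σ) := Sym2.map.injective σ.injective
  have key : ∀ i j, i < j → j < Function.minimalPeriod σ u →
      (Sym2.map σ)^[i] s(u, v) = (Sym2.map σ)^[j] s(u, v) →
      ∃ d, σ^[d] u = v ∧ σ^[d] v = u ∧ 2 * d = Function.minimalPeriod σ u := by
    intro i j hij hj he
    obtain ⟨d, rfl⟩ := Nat.exists_eq_add_of_lt hij
    rw [add_assoc, Function.iterate_add_apply] at he
    have he := hinj.iterate i he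
    rw [map_iter] at he
    have hd : d + 1 < Function.minimalPeriod σ u := by omega
    rcases Sym2.eq_iff.1 he with ⟨h1, h2⟩ | ⟨h1, h2⟩
    · have := Function.IsPeriodicPt.minimalPeriod_le (f := σ) (x := u) (n := d+1) (by omega) h1.symm
      omega
    · refine ⟨d + 1, h2.symm, h1.symm, ?_⟩
      have h3 : Function.IsPeriodicPt σ (2 * (d + 1)) u := by
        show σ^[2 * (d+1)] u = u
        rw [two_mul, Function.iterate_add_apply, ← h2, ← h1]
      obtain ⟨c, hc⟩ := h3.minimalPeriod_dvd
      have : c = 1 := by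
        have h1 : c < 2 := by nlinarith
        have h2 : c ≠ 0 := by rintro rfl; omega
        omega
      rw [hc, this, mul_one]
  by_contra hcon
  apply h
  intro i hi j hj he
  rcases lt_trichotomy i j with hh | hh | hh
  · exact (hcon (key i j hh hj he)).elim
  · exact hh
  · exact (hcon (key j i hh hi he.symm)).elim

lemma no_collision {N : ℕ} (σ : Equiv.Perm (Fin N)) (u v : Fin N)
    (h : v ≠ σ^[Function.minimalPeriod σ u / 2] u) :
    Set.InjOn (fun j => (Sym2.map σ)^[j] s(u, v)) (Set.Iio (Function.minimalPeriod σ u)) ∧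
    Set.InjOn (fun j => (Sym2.map σ)^[j] s(u, v)) (Set.Iio (Function.minimalPeriod σ v)) := by
  constructor
  · by_contra hc
    obtain ⟨d, h1, h2, h3⟩ := collision σ u v hc
    apply h
    rw [← h3, Nat.mul_div_cancel_left _ (by norm_num), h1]
  · by_contra hc
    rw [Sym2.eq_swap] at hc
    obtain ⟨d, h1, h2, h3⟩ := collision σ v u hc
    apply h
    have hp : v ∈ Function.periodicPts σ := by
      have : Function.minimalPeriod σ v ≠ 0 := by
        intro h0
        rw [h0] at hc
        apply hc
        intro i hi; simp at hi
      exact Function.minimalPeriod_pos_iff_mem_periodicPts.1 (Nat.pos_of_ne_zero this)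
    have : Function.minimalPeriod σ u = Function.minimalPeriod σ v := by
      rw [← h1, Function.minimalPeriod_apply_iterate hp]
    rw [this, ← h3, Nat.mul_div_cancel_left _ (by norm_num), h2]

end

section
open Finset Filter Topology

/-- period of a point -/
noncomputable def ell {N : ℕ} (σ : Equiv.Perm (Fin N)) (u : Fin N) : ℕ := Function.minimalPeriod σ u

noncomputable def zz {N : ℕ} (σ : Equiv.Perm (Fin N)) (u : Fin N) : ℝ :=
  if u ∈ σ.support then Real.sqrt N * (#σ.support : ℝ) ^ (-(1 / (2 * (ell σ u : ℝ)))) else 1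

noncomputable def yy {N : ℕ} (σ : Equiv.Perm (Fin N)) (e : Sym2 (Fin N)) : ℝ := ev (zz σ) e / N

lemma mem_per {N : ℕ} (σ : Equiv.Perm (Fin N)) (u : Fin N) : u ∈ Function.periodicPts σ := by
  refine ⟨orderOf σ, orderOf_pos σ, ?_⟩
  show σ^[orderOf σ] u = u
  rw [← Equiv.Perm.coe_pow, pow_orderOf_eq_one]; rfl

lemma ell_pos {N : ℕ} (σ : Equiv.Perm (Fin N)) (u : Fin N) : 0 < ell σ u :=
  Function.minimalPeriod_pos_of_mem_periodicPts (mem_per σ u)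

lemma ell_ge_two {N : ℕ} (σ : Equiv.Perm (Fin N)) (u : Fin N) (hu : u ∈ σ.support) : 2 ≤ ell σ u := by
  have h0 := ell_pos σ u
  have h1 : ell σ u ≠ 1 := by
    intro h
    rw [ell, Function.minimalPeriod_eq_one_iff_isFixedPt] at h
    exact Equiv.Perm.mem_support.1 hu h
  omega

lemma zz_apply {N : ℕ} (σ : Equiv.Perm (Fin N)) (u : Fin N) : zz σ (σ u) = zz σ u := by
  simp only [zz, Equiv.Perm.apply_mem_support, ell, Function.minimalPeriod_apply (mem_per σ u)]

lemma yy_map {N : ℕ} (σ : Equiv.Perm (Fin N)) (e : Sym2 (Fin N)) : yy σ (Sym2.map σ e) = yy σ e := by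
  induction e with
  | _ u v => simp only [yy, Sym2.map_mk, ev_mk, zz_apply]

lemma yy_iter {N : ℕ} (σ : Equiv.Perm (Fin N)) (e : Sym2 (Fin N)) (j : ℕ) :
    yy σ ((Sym2.map σ)^[j] e) = yy σ e := by
  induction j with
  | zero => rfl
  | succ j ih => rw [Function.iterate_succ_apply', yy_map, ih]

lemma zz_pos {N : ℕ} (σ : Equiv.Perm (Fin N)) (u : Fin N) : 0 < zz σ u := by
  rw [zz]
  split_ifs with h
  · have : 0 < #σ.support := Finset.card_pos.2 ⟨u, h⟩
    have hN : 0 < N := u.pos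
    positivity
  · norm_num

lemma zz_le {N : ℕ} (σ : Equiv.Perm (Fin N)) (u : Fin N) : zz σ u ≤ Real.sqrt N := by
  rw [zz]
  split_ifs with h
  · have : 1 ≤ #σ.support := Finset.card_pos.2 ⟨u, h⟩
    apply mul_le_of_le_one_right (Real.sqrt_nonneg _)
    apply Real.rpow_le_one_of_one_le_of_nonpos
    · exact_mod_cast this
    · have := ell_pos σ u
      rw [neg_nonpos]; positivity
  · rw [Real.one_le_sqrt]
    have hN : 1 ≤ N := u.pos
    exact_mod_cast hN

lemma yy_nonneg {N : ℕ} (σ : Equiv.Perm (Fin N)) (e : Sym2 (Fin N)) : 0 ≤ yy σ e := by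
  induction e with
  | _ u v =>
    have := zz_pos σ u
    have := zz_pos σ v
    simp only [yy, ev_mk]; positivity

lemma yy_le_one {N : ℕ} (σ : Equiv.Perm (Fin N)) (e : Sym2 (Fin N)) : yy σ e ≤ 1 := by
  induction e with
  | _ u v =>
    simp only [yy, ev_mk]
    have hN : (0 : ℝ) < N := by exact_mod_cast u.pos
    rw [div_le_one hN]
    calc zz σ u * zz σ v ≤ Real.sqrt N * Real.sqrt N :=
          mul_le_mul (zz_le σ u) (zz_le σ v) (zz_pos σ v).le (Real.sqrt_nonneg _)
      _ = N := Real.mul_self_sqrt hN.le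

lemma yy_out {N : ℕ} (σ : Equiv.Perm (Fin N)) (u v : Fin N) (hu : u ∈ σ.support) (hv : v ∉ σ.support) :
    yy σ s(u, v) ^ ell σ u ≤ 1 / N := by
  have hN : (0 : ℝ) < N := by exact_mod_cast u.pos
  have h2 := ell_ge_two σ u hu
  have h3 : yy σ s(u, v) ≤ Real.sqrt N / N := by
    simp only [yy, ev_mk]
    rw [show zz σ v = 1 from if_neg hv, mul_one]
    have := zz_le σ u
    gcongr
  calc yy σ s(u, v) ^ ell σ u ≤ yy σ s(u, v) ^ 2 :=
        pow_le_pow_of_le_one (yy_nonneg σ _) (yy_le_one σ _) h2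
    _ ≤ (Real.sqrt N / N) ^ 2 := by
        have := yy_nonneg σ s(u,v)
        gcongr
    _ = 1 / N := by
        rw [div_pow, Real.sq_sqrt hN.le]; field_simp

lemma yy_in {N : ℕ} (σ : Equiv.Perm (Fin N)) (u v : Fin N) (hu : u ∈ σ.support) (hv : v ∈ σ.support) :
    yy σ s(u, v) ^ (max (ell σ u) (ell σ v)) ≤ 1 / #σ.support := by
  have hN : (0 : ℝ) < N := by exact_mod_cast u.pos
  have hm : 1 ≤ #σ.support := Finset.card_pos.2 ⟨u, hu⟩
  have hm' : (1 : ℝ) ≤ #σ.support := by exact_mod_cast hm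
  have h1 : yy σ s(u, v) = (#σ.support : ℝ) ^ (-(1 / (2 * (ell σ u : ℝ))) + -(1 / (2 * (ell σ v : ℝ)))) := by
    simp only [yy, ev_mk, zz, if_pos hu, if_pos hv]
    rw [Real.rpow_add (by linarith), mul_mul_mul_comm, Real.mul_self_sqrt hN.le]
    field_simp
  rw [h1, ← Real.rpow_natCast, ← Real.rpow_mul (by linarith),
    show (1 : ℝ) / #σ.support = (#σ.support : ℝ) ^ (-1 : ℝ) by rw [Real.rpow_neg_one, one_div]]
  apply Real.rpow_le_rpow_of_exponent_le hm'
  have ha : (0 : ℝ) < ell σ u := by exact_mod_cast ell_pos σ u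
  have hb : (0 : ℝ) < ell σ v := by exact_mod_cast ell_pos σ v
  push_cast
  have h2 : (1 : ℝ) / 2 ≤ 1 / (2 * (ell σ u : ℝ)) * max (ell σ u : ℝ) (ell σ v) := by
    rw [div_mul_eq_mul_div, one_mul, div_le_div_iff₀ (by norm_num) (by positivity)]
    have := le_max_left (ell σ u : ℝ) (ell σ v)
    linarith
  have h3 : (1 : ℝ) / 2 ≤ 1 / (2 * (ell σ v : ℝ)) * max (ell σ u : ℝ) (ell σ v) := by
    rw [div_mul_eq_mul_div, one_mul, div_le_div_iff₀ (by norm_num) (by positivity)]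
    have := le_max_right (ell σ u : ℝ) (ell σ v)
    linarith
  nlinarith

/-- edges touching the support -/
def XX {N : ℕ} (σ : Equiv.Perm (Fin N)) : Finset (Sym2 (Fin N)) := (nd N).filter (fun e => ∃ u ∈ e, u ∈ σ.support)

def FF {N : ℕ} (σ : Equiv.Perm (Fin N)) : Finset (Finset (Sym2 (Fin N))) :=
  (XX σ).powerset.filter (fun H => H.image (Sym2.map σ) = H ∧ ∀ u ∈ σ.support, dg H u = 3)

lemma inv_iff {N : ℕ} (σ : Equiv.Perm (Fin N)) (H : Finset (Sym2 (Fin N))) (h : H.image (Sym2.map σ) = H)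
    (e : Sym2 (Fin N)) (j : ℕ) : e ∈ H ↔ (Sym2.map σ)^[j] e ∈ H := by
  have hinj : Function.Injective (Sym2.map σ) := Sym2.map.injective σ.injective
  induction j with
  | zero => rfl
  | succ j ih =>
    refine ih.trans ?_
    rw [Function.iterate_succ_apply']
    constructor
    · intro hh
      rw [← h]; exact Finset.mem_image_of_mem _ hh
    · intro hh
      rw [← h] at hh
      obtain ⟨e', he', hh⟩ := Finset.mem_image.1 hh
      rwa [← hinj hh]

lemma XX_map {N : ℕ} (σ : Equiv.Perm (Fin N)) (e : Sym2 (Fin N)) (he : e ∈ XX σ) : Sym2.map σ e ∈ XX σ := by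
  induction e with
  | _ u v =>
    simp only [XX, nd, Finset.mem_filter, Finset.mem_univ, true_and, Sym2.map_mk, Sym2.mem_iff,
      Sym2.mk_isDiag_iff, exists_eq_or_imp, exists_eq_left, Equiv.Perm.apply_mem_support,
      σ.injective.eq_iff] at he ⊢
    exact he

lemma XX_iter {N : ℕ} (σ : Equiv.Perm (Fin N)) (e : Sym2 (Fin N)) (he : e ∈ XX σ) (j : ℕ) :
    (Sym2.map σ)^[j] e ∈ XX σ := by
  induction j with
  | zero => exact he
  | succ j ih => rw [Function.iterate_succ_apply']; exact XX_map σ _ ih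

lemma trans_exists {N : ℕ} (σ : Equiv.Perm (Fin N)) (e : Sym2 (Fin N)) (he : e ∈ XX σ) (t : ℕ)
    (ht : Set.InjOn (fun j => (Sym2.map σ)^[j] e) (Set.Iio t)) :
    ∃ T : Finset (Sym2 (Fin N)), T ⊆ XX σ ∧ (∀ H ∈ FF σ, ∀ e' ∈ T, (e ∈ H ↔ e' ∈ H)) ∧
      ∏ e' ∈ T, yy σ e' = yy σ e ^ t := by
  refine ⟨(Finset.range t).image (fun j => (Sym2.map σ)^[j] e), ?_, ?_, ?_⟩
  · intro e' he'
    obtain ⟨j, _, rfl⟩ := Finset.mem_image.1 he'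
    exact XX_iter σ e he j
  · intro H hH e' he'
    obtain ⟨j, _, rfl⟩ := Finset.mem_image.1 he'
    exact inv_iff σ H (Finset.mem_filter.1 hH).2.1 e j
  · rw [Finset.prod_image (by simpa using ht)]
    simp [yy_iter]

noncomputable def Bf {N : ℕ} (σ : Equiv.Perm (Fin N)) (p : Fin N × Fin N) : ℝ :=
  if p.2 ∈ σ.support then 1 / #σ.support + (if p.2 = σ^[ell σ p.1 / 2] p.1 then 1 else 0) else 1 / N

lemma trans_bound {N : ℕ} (σ : Equiv.Perm (Fin N)) (u v : Fin N) (he : s(u, v) ∈ XX σ) (hu : u ∈ σ.support) :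
    ∃ T : Finset (Sym2 (Fin N)), T ⊆ XX σ ∧ (∀ H ∈ FF σ, ∀ e' ∈ T, (s(u, v) ∈ H ↔ e' ∈ H)) ∧
      ∏ e' ∈ T, yy σ e' ≤ Bf σ (u, v) := by
  by_cases hv : v ∈ σ.support
  · by_cases ha : v = σ^[ell σ u / 2] u
    · obtain ⟨T, h1, h2, h3⟩ := trans_exists σ s(u, v) he 0 (by intro i hi; simp at hi)
      refine ⟨T, h1, h2, ?_⟩
      rw [h3, pow_zero, Bf]
      simp only [if_pos hv, if_pos ha]
      have : (0 : ℝ) ≤ 1 / #σ.support := by positivity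
      linarith
    · have hc := no_collision σ u v ha
      obtain ⟨T, h1, h2, h3⟩ := trans_exists σ s(u, v) he (max (ell σ u) (ell σ v)) (by
        rcases max_choice (ell σ u) (ell σ v) with h | h <;> rw [h]
        · exact hc.1
        · exact hc.2)
      refine ⟨T, h1, h2, ?_⟩
      rw [h3, Bf]
      simp only [if_pos hv, if_neg ha]
      rw [add_zero]
      exact yy_in σ u v hu hv
  · have ha : v ≠ σ^[ell σ u / 2] u := by
      intro h
      apply hv
      rw [h, ← Equiv.Perm.coe_pow]
      exact Equiv.Perm.pow_apply_mem_support.2 hu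
    obtain ⟨T, h1, h2, h3⟩ := trans_exists σ s(u, v) he (ell σ u) (no_collision σ u v ha).1
    refine ⟨T, h1, h2, ?_⟩
    rw [h3, Bf]
    simp only [if_neg hv]
    exact yy_out σ u v hu hv

lemma Bf_nonneg {N : ℕ} (σ : Equiv.Perm (Fin N)) (p : Fin N × Fin N) : 0 ≤ Bf σ p := by
  rw [Bf]; split_ifs <;> positivity

lemma Bf_sum {N : ℕ} (σ : Equiv.Perm (Fin N)) (u : Fin N) : ∑ v, Bf σ (u, v) ≤ 3 := by
  have h : ∀ v, Bf σ (u, v) ≤ (if v ∈ σ.support then 1 / (#σ.support : ℝ) else 0) +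
      (if v = σ^[ell σ u / 2] u then 1 else 0) + 1 / N := by
    intro v
    have h1 : (0 : ℝ) ≤ 1 / N := by positivity
    rw [Bf]; simp only
    split_ifs <;> linarith
  refine (Finset.sum_le_sum fun v _ => h v).trans ?_
  rw [Finset.sum_add_distrib, Finset.sum_add_distrib, Finset.sum_ite_eq', if_pos (Finset.mem_univ _),
    ← Finset.sum_filter, Finset.filter_mem_eq_inter, Finset.univ_inter, Finset.sum_const, Finset.sum_const,
    nsmul_eq_mul, nsmul_eq_mul, Finset.card_univ, Fintype.card_fin]
  have h1 : (#σ.support : ℝ) * (1 / #σ.support) ≤ 1 := by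
    rw [mul_one_div]; exact div_self_le_one _
  have h2 : (N : ℝ) * (1 / N) ≤ 1 := by
    rw [mul_one_div]; exact div_self_le_one _
  linarith

lemma sum_FF_le {N : ℕ} (σ : Equiv.Perm (Fin N)) :
    ∑ H ∈ FF σ, ∏ e ∈ H, yy σ e ≤ Real.exp (3 * #σ.support) := by
  have hex : ∀ e : Sym2 (Fin N), ∃ p : Fin N × Fin N, e ∈ XX σ → s(p.1, p.2) = e ∧ p.1 ∈ σ.support := by
    intro e
    by_cases he : e ∈ XX σ
    · obtain ⟨u, hu, huS⟩ := (Finset.mem_filter.1 he).2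
      obtain ⟨v, rfl⟩ := Sym2.mem_iff_exists.1 hu
      exact ⟨(u, v), fun _ => ⟨rfl, huS⟩⟩
    · induction e with
      | _ u v => exact ⟨(u, v), fun h => (he h).elim⟩
  choose pr hpr using hex
  have h1 := sum_family_le (XX σ) (FF σ) (fun H hH => Finset.mem_powerset.1 (Finset.mem_filter.1 hH).1)
    (yy σ) (fun e => Bf σ (pr e)) (fun e _ => yy_nonneg σ e) (fun e _ => yy_le_one σ e)
    (fun e _ => Bf_nonneg σ _) (by
      intro e he
      obtain ⟨ha, hb⟩ := hpr e he
      have := trans_bound σ (pr e).1 (pr e).2 (by rw [ha]; exact he) hb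
      rw [ha] at this
      exact this)
  refine h1.trans ?_
  have h2 : ∏ e ∈ XX σ, (1 + Bf σ (pr e)) ≤ ∏ e ∈ XX σ, Real.exp (Bf σ (pr e)) := by
    refine Finset.prod_le_prod (fun e _ => ?_) (fun e _ => ?_)
    · have := Bf_nonneg σ (pr e); linarith
    · rw [add_comm]; exact Real.add_one_le_exp _
  refine h2.trans ?_
  rw [← Real.exp_sum]
  apply Real.exp_le_exp.2
  have h3 := sum_le_sum_pairs (XX σ) (σ.support ×ˢ Finset.univ) (fun p : Fin N × Fin N => s(p.1, p.2))
    (fun e => Bf σ (pr e)) (Bf σ) (fun p _ => Bf_nonneg σ p) (by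
      intro e he
      exact ⟨pr e, by simp [(hpr e he).2], (hpr e he).1, le_rfl⟩)
  refine h3.trans ?_
  rw [Finset.sum_product]
  calc ∑ u ∈ σ.support, ∑ v, Bf σ (u, v) ≤ ∑ u ∈ σ.support, (3 : ℝ) := Finset.sum_le_sum fun u _ => Bf_sum σ u
    _ = _ := by rw [Finset.sum_const, nsmul_eq_mul, mul_comm]

end

section
open Finset Filter Topology

lemma ev_eq_prod {N : ℕ} (z : Fin N → ℝ) (e : Sym2 (Fin N)) (he : ¬ e.IsDiag) :
    ev z e = ∏ v, if v ∈ e then z v else 1 := by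
  induction e with
  | _ a b =>
    rw [Sym2.mk_isDiag_iff] at he
    rw [ev_mk, ← Finset.prod_filter]
    have : (univ.filter (fun v => v ∈ s(a, b))) = {a, b} := by
      ext v; simp
    rw [this, Finset.prod_pair he]

lemma prod_ev_dg {N : ℕ} (z : Fin N → ℝ) (H : Finset (Sym2 (Fin N))) (hH : H ⊆ nd N) :
    ∏ e ∈ H, ev z e = ∏ v, z v ^ dg H v := by
  rw [Finset.prod_congr rfl (fun e he => ev_eq_prod z e (Finset.mem_filter.1 (hH he)).2), Finset.prod_comm]
  refine Finset.prod_congr rfl fun v _ => ?_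
  rw [← Finset.prod_filter, Finset.prod_const, dg]

noncomputable def RR {N : ℕ} (σ : Equiv.Perm (Fin N)) : ℝ := ∑ u ∈ σ.support, 1 / (ell σ u : ℝ)

lemma prod_yy {N : ℕ} (σ : Equiv.Perm (Fin N)) (hm : 0 < #σ.support) (H : Finset (Sym2 (Fin N))) (hH : H ∈ FF σ) :
    ∏ e ∈ H, yy σ e = (1 / (N : ℝ)) ^ #H * ((Real.sqrt N) ^ (3 * #σ.support) * (#σ.support : ℝ) ^ (-(3 / 2 * RR σ))) := by
  obtain ⟨h1, h2, h3⟩ := Finset.mem_filter.1 hH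
  have h1' := Finset.mem_powerset.1 h1
  have hm' : (0 : ℝ) < #σ.support := by exact_mod_cast hm
  simp only [yy]
  rw [Finset.prod_div_distrib, Finset.prod_const, prod_ev_dg _ _ (h1'.trans (Finset.filter_subset _ _))]
  have h4 : ∏ v, zz σ v ^ dg H v = ∏ v ∈ σ.support, zz σ v ^ 3 := by
    rw [← Finset.prod_subset (Finset.subset_univ σ.support)]
    · exact Finset.prod_congr rfl fun v hv => by rw [h3 v hv]
    · intro v _ hv
      rw [zz, if_neg hv, one_pow]
  have h5 : ∏ v ∈ σ.support, zz σ v = (Real.sqrt N) ^ #σ.support * (#σ.support : ℝ) ^ (-(1 / 2 * RR σ)) := by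
    rw [Finset.prod_congr rfl (fun v hv => show zz σ v = _ from if_pos hv), Finset.prod_mul_distrib, Finset.prod_const,
      ← Real.rpow_sum_of_pos hm', RR]
    congr 2
    rw [Finset.mul_sum, Finset.sum_neg_distrib]
    congr 1
    refine Finset.sum_congr rfl fun v _ => ?_
    have : (0 : ℝ) < ell σ v := by exact_mod_cast ell_pos σ v
    field_simp
  rw [h4, Finset.prod_pow, h5, mul_pow, ← pow_mul, ← Real.rpow_natCast (_ ^ (-(1 / 2 * RR σ))), ← Real.rpow_mul hm'.le]
  have : -(1 / 2 * RR σ) * ((3 : ℕ) : ℝ) = -(3 / 2 * RR σ) := by push_cast; ring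
  rw [this, mul_comm #σ.support 3]
  rw [one_div_pow]
  ring

lemma FF_card {N : ℕ} (σ : Equiv.Perm (Fin N)) (H : Finset (Sym2 (Fin N))) (hH : H ∈ FF σ) : #H ≤ 3 * #σ.support := by
  obtain ⟨h1, h2, h3⟩ := Finset.mem_filter.1 hH
  have h1' := Finset.mem_powerset.1 h1
  have : H ⊆ σ.support.biUnion (fun u => H.filter (fun e => u ∈ e)) := by
    intro e he
    obtain ⟨u, hu, huS⟩ := (Finset.mem_filter.1 (h1' he)).2
    exact Finset.mem_biUnion.2 ⟨u, huS, Finset.mem_filter.2 ⟨he, hu⟩⟩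
  calc #H ≤ _ := Finset.card_le_card this
    _ ≤ ∑ u ∈ σ.support, #(H.filter (fun e => u ∈ e)) := Finset.card_biUnion_le
    _ = ∑ u ∈ σ.support, 3 := Finset.sum_congr rfl fun u hu => h3 u hu
    _ = _ := by rw [Finset.sum_const, smul_eq_mul, mul_comm]

def fx {N : ℕ} (σ : Equiv.Perm (Fin N)) : Finset (Finset (Sym2 (Fin N))) :=
  (cub N).filter (fun E => E.image (Sym2.map σ) = E)

lemma fx_sub {N : ℕ} (σ : Equiv.Perm (Fin N)) (E : Finset (Sym2 (Fin N))) (hE : E ∈ fx σ) :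
    E ∩ XX σ ∈ FF σ := by
  obtain ⟨h1, h2⟩ := Finset.mem_filter.1 hE
  obtain ⟨h3, h4⟩ := Finset.mem_filter.1 h1
  have hinj : Function.Injective (Sym2.map σ) := Sym2.map.injective σ.injective
  have hX : (XX σ).image (Sym2.map σ) = XX σ := by
    apply Finset.eq_of_subset_of_card_le
    · intro e he
      obtain ⟨e', he', rfl⟩ := Finset.mem_image.1 he
      exact XX_map σ _ he'
    · rw [Finset.card_image_of_injective _ hinj]
  refine Finset.mem_filter.2 ⟨Finset.mem_powerset.2 Finset.inter_subset_right, ?_, ?_⟩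
  · rw [Finset.image_inter _ _ hinj, h2, hX]
  · intro u hu
    have : dg E u = 3 := h4 u
    rw [← this, dg, dg]
    congr 1
    ext e
    simp only [Finset.mem_filter, Finset.mem_inter, XX]
    constructor
    · rintro ⟨⟨h, _⟩, h'⟩; exact ⟨h, h'⟩
    · rintro ⟨h, h'⟩
      exact ⟨⟨h, Finset.mem_powerset.1 h3 h, u, h', hu⟩, h'⟩

lemma BB_pos (n : ℕ) : 0 < BB n := by
  have : (0 : ℝ) < DD (3 * n) := by exact_mod_cast DD_pos (3 * n)
  rw [BB]; positivity

lemma fx_le (n : ℕ) (hn : 1 ≤ n) (σ : Equiv.Perm (Fin (2 * n))) (hm : 0 < #σ.support) :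
    (#(fx σ) : ℝ) ≤ BB n * (72 ^ (3 * #σ.support) * Real.exp (3 * #σ.support) *
      ((Real.sqrt (2 * n : ℕ)) ^ (3 * #σ.support))⁻¹ * (#σ.support : ℝ) ^ (3 / 2 * RR σ)) := by
  classical
  have hm' : (0 : ℝ) < #σ.support := by exact_mod_cast hm
  have hn' : (0 : ℝ) < n := by exact_mod_cast hn
  have hB := BB_pos n
  have h1 : fx σ ⊆ (FF σ).biUnion (fun H => (cub (2 * n)).filter (fun E => H ⊆ E)) := by
    intro E hE
    exact Finset.mem_biUnion.2 ⟨_, fx_sub σ E hE, Finset.mem_filter.2 ⟨(Finset.mem_filter.1 hE).1, Finset.inter_subset_left⟩⟩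
  have h2 : (#(fx σ) : ℝ) ≤ ∑ H ∈ FF σ, (#{E ∈ cub (2 * n) | H ⊆ E} : ℝ) := by
    exact_mod_cast (Finset.card_le_card h1).trans Finset.card_biUnion_le
  set W : ℝ := (Real.sqrt (2 * n : ℕ)) ^ (3 * #σ.support) * (#σ.support : ℝ) ^ (-(3 / 2 * RR σ)) with hW
  have hWpos : 0 < W := by
    have : (0 : ℝ) < ((2 * n : ℕ) : ℝ) := by exact_mod_cast (by omega : 0 < 2 * n)
    positivity
  have h3 : ∀ H ∈ FF σ, (#{E ∈ cub (2 * n) | H ⊆ E} : ℝ) ≤ BB n * 72 ^ (3 * #σ.support) * W⁻¹ * ∏ e ∈ H, yy σ e := by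
    intro H hH
    refine (cub_containing_le n hn H).trans ?_
    rw [prod_yy σ hm H hH, ← hW]
    have : ((36 : ℝ) / n) ^ #H = 72 ^ #H * (1 / ((2 * n : ℕ) : ℝ)) ^ #H := by
      rw [← mul_pow]; congr 1; push_cast; field_simp; norm_num
    rw [this]
    have h6 : (72 : ℝ) ^ #H ≤ 72 ^ (3 * #σ.support) := pow_le_pow_right₀ (by norm_num) (FF_card σ H hH)
    calc 72 ^ #H * (1 / ((2 * n : ℕ) : ℝ)) ^ #H * BB n ≤ 72 ^ (3 * #σ.support) * (1 / ((2 * n : ℕ) : ℝ)) ^ #H * BB n := by gcongr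
      _ = _ := by field_simp
  refine h2.trans ((Finset.sum_le_sum h3).trans ?_)
  rw [← Finset.mul_sum]
  have h4 := sum_FF_le σ
  calc BB n * 72 ^ (3 * #σ.support) * W⁻¹ * ∑ H ∈ FF σ, ∏ e ∈ H, yy σ e
      ≤ BB n * 72 ^ (3 * #σ.support) * W⁻¹ * Real.exp (3 * #σ.support) := by gcongr
    _ = _ := by
      rw [hW, Real.rpow_neg hm'.le, mul_inv, inv_inv]; ring

lemma RR_le {N : ℕ} (σ : Equiv.Perm (Fin N)) : RR σ ≤ #σ.support / 2 := by
  rw [RR]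
  calc ∑ u ∈ σ.support, 1 / (ell σ u : ℝ) ≤ ∑ u ∈ σ.support, (1 / 2 : ℝ) := by
        refine Finset.sum_le_sum fun u hu => ?_
        have : (2 : ℝ) ≤ ell σ u := by exact_mod_cast ell_ge_two σ u hu
        gcongr
    _ = _ := by rw [Finset.sum_const, nsmul_eq_mul]; ring

end

section
open Finset Filter Topology

lemma sum_fact_fibers (M k : ℕ) :
    ∑ f : Fin k → Fin M, ∏ i, (#{a | f a = i}).factorial = ∏ j ∈ Finset.range k, (M + j) := by
  induction k with
  | zero => simp
  | succ k ih =>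
    rw [Finset.prod_range_succ, ← ih, ← (Fin.consEquiv (fun _ : Fin (k+1) => Fin M)).sum_comp, Fintype.sum_prod_type,
      Finset.sum_comm, Finset.sum_mul]
    refine Finset.sum_congr rfl fun g _ => ?_
    have h1 : ∀ x : Fin M, ∏ i, (#{a : Fin (k+1) | (Fin.consEquiv (fun _ : Fin (k+1) => Fin M)) (x, g) a = i}).factorial
        = (#{a | g a = x} + 1) * ∏ i, (#{a | g a = i}).factorial := by
      intro x
      have h2 : ∀ i, #{a : Fin (k+1) | (Fin.consEquiv (fun _ : Fin (k+1) => Fin M)) (x, g) a = i} =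
          #{a | g a = i} + if x = i then 1 else 0 := by
        intro i
        rw [Fin.card_filter_univ_succ]
        simp only [Fin.consEquiv, Equiv.coe_fn_mk, Fin.cons_zero, Fin.cons_succ]
        split_ifs <;> rfl
      simp only [h2]
      rw [← Finset.mul_prod_erase _ _ (Finset.mem_univ x),
        ← Finset.mul_prod_erase _ (fun i => (#{a | g a = i}).factorial) (Finset.mem_univ x), if_pos rfl, Nat.factorial_succ,
        mul_assoc]
      congr 2
      refine Finset.prod_congr rfl fun i hi => ?_
      rw [if_neg (Finset.ne_of_mem_erase hi).symm, add_zero]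
    rw [Finset.sum_congr rfl (fun x _ => h1 x), ← Finset.sum_mul, mul_comm]
    congr 1
    rw [Finset.sum_add_distrib]
    have h3 : ∑ x : Fin M, #{a | g a = x} = k := by
      rw [← Finset.card_eq_sum_card_fiberwise (f := g) (s := Finset.univ) (t := Finset.univ) (by simp)]
      simp
    rw [h3]; simp; ring

/-- number of cycles including fixed points -/
noncomputable def cyc {α : Type*} [Fintype α] (τ : Equiv.Perm α) : ℕ :=
  Nat.card (Quotient (Equiv.Perm.SameCycle.setoid τ))

lemma card_class {α : Type*} [Fintype α] [DecidableEq α] (τ : Equiv.Perm α) (u : α) :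
    Nat.card {v // Equiv.Perm.SameCycle τ u v} = Function.minimalPeriod τ u := by
  classical
  have hp : u ∈ Function.periodicPts τ := by
    refine ⟨orderOf τ, orderOf_pos τ, ?_⟩
    show τ^[orderOf τ] u = u
    rw [← Equiv.Perm.coe_pow, pow_orderOf_eq_one]; rfl
  have h0 := Function.minimalPeriod_pos_of_mem_periodicPts hp
  rw [Nat.card_eq_fintype_card, Fintype.card_subtype]
  have : univ.filter (fun v => Equiv.Perm.SameCycle τ u v) =
      (Finset.range (Function.minimalPeriod τ u)).image (fun j => τ^[j] u) := by
    ext v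
    simp only [Finset.mem_filter, Finset.mem_univ, true_and, Finset.mem_image, Finset.mem_range]
    constructor
    · intro h
      obtain ⟨i, hi⟩ := h.exists_nat_pow_eq
      refine ⟨i % Function.minimalPeriod τ u, Nat.mod_lt _ h0, ?_⟩
      rw [Function.iterate_mod_minimalPeriod_eq, ← hi, Equiv.Perm.coe_pow]
    · rintro ⟨j, _, rfl⟩
      exact ⟨j, by rw [zpow_natCast, Equiv.Perm.coe_pow]⟩
  rw [this, Finset.card_image_of_injOn, Finset.card_range]
  have := Function.iterate_injOn_Iio_minimalPeriod (f := τ) (x := u)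
  simpa using this

lemma sum_inv_period {α : Type*} [Fintype α] [DecidableEq α] (τ : Equiv.Perm α) :
    ∑ u, 1 / (Function.minimalPeriod τ u : ℝ) = cyc τ := by
  classical
  let s := Equiv.Perm.SameCycle.setoid τ
  rw [← Finset.sum_fiberwise_of_maps_to (s := Finset.univ) (t := Finset.univ) (g := fun u => Quotient.mk s u) (by simp)]
  have h : ∀ q : Quotient s, ∑ u with Quotient.mk s u = q, 1 / (Function.minimalPeriod τ u : ℝ) = 1 := by
    intro q
    induction q using Quotient.inductionOn with
    | _ w =>
      have h1 : ∀ u ∈ Finset.univ.filter (fun u => Quotient.mk s u = Quotient.mk s w),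
          1 / (Function.minimalPeriod τ u : ℝ) = 1 / (Function.minimalPeriod τ w : ℝ) := by
        intro u hu
        have hs : Equiv.Perm.SameCycle τ w u := (Quotient.exact (Finset.mem_filter.1 hu).2 : Equiv.Perm.SameCycle τ u w).symm
        rw [← card_class τ u, ← card_class τ w]
        rw [Nat.card_congr (Equiv.subtypeEquivRight fun v => ⟨fun h => hs.trans h, fun h => hs.symm.trans h⟩)]
      rw [Finset.sum_congr rfl h1, Finset.sum_const, nsmul_eq_mul]
      have h2 : #{u | Quotient.mk s u = Quotient.mk s w} = Function.minimalPeriod τ w := by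
        rw [← card_class τ w, Nat.card_eq_fintype_card, Fintype.card_subtype]
        congr 1
        ext v
        simp only [Finset.mem_filter, Finset.mem_univ, true_and]
        exact ⟨fun h => (Quotient.exact h : Equiv.Perm.SameCycle τ v w).symm, fun h => Quotient.sound (Equiv.Perm.SameCycle.symm h)⟩
      rw [h2]
      have : 0 < Function.minimalPeriod τ w := by
        rw [← h2]; exact Finset.card_pos.2 ⟨w, by simp⟩
      have : (0 : ℝ) < Function.minimalPeriod τ w := by exact_mod_cast this
      field_simp
  rw [Finset.sum_congr rfl (fun q _ => h q)]
  simp [cyc, s]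

lemma pow_cyc_le {α : Type*} [Fintype α] [DecidableEq α] (τ : Equiv.Perm α) (M : ℕ) :
    M ^ cyc τ ≤ #{f : α → Fin M | f ∘ τ = f} := by
  classical
  have : M ^ cyc τ = #(Finset.univ : Finset (Quotient (Equiv.Perm.SameCycle.setoid τ) → Fin M)) := by
    simp [cyc]
  rw [this]
  apply Finset.card_le_card_of_injOn (fun f => f ∘ Quotient.mk _)
  · intro f _
    simp only [Finset.coe_filter, Finset.mem_univ, true_and]
    show _ ∘ _ = _
    funext x
    simp only [Function.comp]
    congr 1
    apply Quotient.sound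
    have h1 : Equiv.Perm.SameCycle τ x (τ x) := ⟨1, by simp⟩
    exact Equiv.Perm.SameCycle.symm h1
  · intro f _ g _ h
    funext q
    induction q using Quotient.inductionOn with
    | _ w => exact congrFun h w

lemma sum_pow_cyc {α : Type*} [Fintype α] [DecidableEq α] (M : ℕ) :
    ∑ τ : Equiv.Perm α, M ^ cyc τ ≤ ∏ j ∈ Finset.range (Fintype.card α), (M + j) := by
  classical
  calc ∑ τ : Equiv.Perm α, M ^ cyc τ ≤ ∑ τ : Equiv.Perm α, #{f : α → Fin M | f ∘ τ = f} :=
        Finset.sum_le_sum fun τ _ => pow_cyc_le τ M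
    _ = ∑ f : α → Fin M, #{τ : Equiv.Perm α | f ∘ τ = f} := by
        simp only [Finset.card_filter]
        rw [Finset.sum_comm]
    _ = ∑ f : α → Fin M, ∏ i, (#{a | f a = i}).factorial := by
        refine Finset.sum_congr rfl fun f _ => ?_
        rw [← Fintype.card_subtype, DomMulAct.stabilizer_card]
        simp only [Fintype.card_subtype]
    _ = ∑ f : Fin (Fintype.card α) → Fin M, ∏ i, (#{a | f a = i}).factorial := by
        let e := Fintype.equivFin α
        rw [← (Equiv.arrowCongr e (Equiv.refl (Fin M))).sum_comp]
        refine Finset.sum_congr rfl fun f _ => Finset.prod_congr rfl fun i _ => ?_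
        congr 1
        rw [← Fintype.card_subtype, ← Fintype.card_subtype]
        exact Fintype.card_congr (e.subtypeEquiv (fun a => by simp))
    _ = _ := sum_fact_fibers M _

lemma RR_ofSubtype {N : ℕ} (S : Finset (Fin N)) (τ : Equiv.Perm {x // x ∈ S}) :
    RR (Equiv.Perm.ofSubtype τ) ≤ cyc τ := by
  rw [← sum_inv_period, RR]
  have hper : ∀ u : {x // x ∈ S}, ell (Equiv.Perm.ofSubtype τ) u = Function.minimalPeriod τ u := by
    intro u
    rw [ell, Function.minimalPeriod_eq_minimalPeriod_iff]
    intro j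
    have : (Equiv.Perm.ofSubtype τ)^[j] (u : Fin N) = ((τ^[j] u : {x // x ∈ S}) : Fin N) := by
      induction j with
      | zero => rfl
      | succ j ih => rw [Function.iterate_succ_apply', ih, Equiv.Perm.ofSubtype_apply_coe, Function.iterate_succ_apply']
    show _ = _ ↔ _ = _
    rw [this, Subtype.coe_inj]
  have hsub : (Equiv.Perm.ofSubtype τ).support ⊆ S := by
    intro x hx
    by_contra hxS
    exact Equiv.Perm.mem_support.1 hx (Equiv.Perm.ofSubtype_apply_of_not_mem τ hxS)
  calc ∑ u ∈ (Equiv.Perm.ofSubtype τ).support, 1 / (ell (Equiv.Perm.ofSubtype τ) u : ℝ)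
      ≤ ∑ u ∈ S, 1 / (ell (Equiv.Perm.ofSubtype τ) u : ℝ) :=
        Finset.sum_le_sum_of_subset_of_nonneg hsub (fun _ _ _ => by positivity)
    _ = _ := by
        rw [← Finset.sum_coe_sort]
        exact Finset.sum_congr rfl fun u _ => by rw [hper]

lemma sum_RR_le (N m : ℕ) (hm : 1 ≤ m) :
    ∑ σ : Equiv.Perm (Fin N) with #σ.support = m, (m : ℝ) ^ RR σ ≤ (2 * Real.exp 1 * N) ^ m := by
  classical
  have hm' : (1 : ℝ) ≤ m := by exact_mod_cast hm
  have h1 : ∀ S ∈ Finset.powersetCard m (Finset.univ : Finset (Fin N)),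
      ∑ σ : Equiv.Perm (Fin N) with σ.support = S, (m : ℝ) ^ RR σ ≤ (2 * m) ^ m := by
    intro S hS
    have hc : #S = m := (Finset.mem_powersetCard.1 hS).2
    have hsub : Finset.univ.filter (fun σ : Equiv.Perm (Fin N) => σ.support = S) ⊆
        (Finset.univ : Finset (Equiv.Perm {x // x ∈ S})).image (fun τ => Equiv.Perm.ofSubtype τ) := by
      intro σ hσ
      have hs := (Finset.mem_filter.1 hσ).2
      have : σ ∈ (Equiv.Perm.ofSubtype (p := fun x => x ∈ S)).range := by
        rw [Equiv.Perm.mem_range_ofSubtype_iff, hs]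
        intro x hx; exact hx
      obtain ⟨τ, rfl⟩ := this
      exact Finset.mem_image.2 ⟨τ, Finset.mem_univ _, rfl⟩
    calc ∑ σ : Equiv.Perm (Fin N) with σ.support = S, (m : ℝ) ^ RR σ
        ≤ ∑ σ ∈ (Finset.univ : Finset (Equiv.Perm {x // x ∈ S})).image (fun τ => Equiv.Perm.ofSubtype τ), (m : ℝ) ^ RR σ :=
          Finset.sum_le_sum_of_subset_of_nonneg hsub (fun _ _ _ => by positivity)
      _ = ∑ τ : Equiv.Perm {x // x ∈ S}, (m : ℝ) ^ RR (Equiv.Perm.ofSubtype τ) := by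
          rw [Finset.sum_image]
          exact Equiv.Perm.ofSubtype_injective.injOn
      _ ≤ ∑ τ : Equiv.Perm {x // x ∈ S}, (m : ℝ) ^ cyc τ := by
          refine Finset.sum_le_sum fun τ _ => ?_
          rw [← Real.rpow_natCast]
          exact Real.rpow_le_rpow_of_exponent_le hm' (RR_ofSubtype S τ)
      _ ≤ ((∏ j ∈ Finset.range (Fintype.card {x // x ∈ S}), (m + j) : ℕ) : ℝ) := by
          exact_mod_cast sum_pow_cyc (α := {x // x ∈ S}) m
      _ ≤ (2 * m) ^ m := by
          rw [Fintype.card_coe, hc]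
          push_cast
          calc ∏ j ∈ Finset.range m, ((m : ℝ) + j) ≤ ∏ j ∈ Finset.range m, (2 * (m : ℝ)) := by
                refine Finset.prod_le_prod (fun _ _ => by positivity) fun j hj => ?_
                have : (j : ℝ) ≤ m := by exact_mod_cast (Finset.mem_range.1 hj).le
                linarith
            _ = _ := by simp
  have h2 : ∑ σ : Equiv.Perm (Fin N) with #σ.support = m, (m : ℝ) ^ RR σ =
      ∑ S ∈ Finset.powersetCard m (Finset.univ : Finset (Fin N)), ∑ σ : Equiv.Perm (Fin N) with σ.support = S, (m : ℝ) ^ RR σ := by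
    rw [← Finset.sum_fiberwise_of_maps_to (g := fun σ : Equiv.Perm (Fin N) => σ.support)
      (t := Finset.powersetCard m (Finset.univ : Finset (Fin N)))]
    · refine Finset.sum_congr rfl fun S hS => ?_
      rw [Finset.filter_filter]
      refine Finset.sum_congr ?_ fun _ _ => rfl
      ext σ
      simp only [Finset.mem_filter, Finset.mem_univ, true_and]
      constructor
      · exact fun h => h.2
      · rintro rfl; exact ⟨(Finset.mem_powersetCard.1 hS).2, rfl⟩
    · intro σ hσ
      exact Finset.mem_powersetCard.2 ⟨Finset.subset_univ _, (Finset.mem_filter.1 hσ).2⟩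
  rw [h2]
  refine (Finset.sum_le_sum h1).trans ?_
  rw [Finset.sum_const, Finset.card_powersetCard, Finset.card_univ, Fintype.card_fin, nsmul_eq_mul]
  have h3 : (N.choose m : ℝ) ≤ N ^ m / m.factorial := Nat.choose_le_pow_div m N
  have h4 := Real.pow_div_factorial_le_exp (m : ℝ) (by positivity) m
  calc (N.choose m : ℝ) * (2 * m) ^ m ≤ N ^ m / m.factorial * (2 * m) ^ m := by gcongr
    _ = (2 * N) ^ m * (m ^ m / m.factorial) := by rw [mul_pow, mul_pow]; ring
    _ ≤ (2 * N) ^ m * Real.exp m := by gcongr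
    _ = _ := by rw [← Real.exp_one_pow, ← mul_pow]; ring

end

section
open Finset Filter Topology

noncomputable def qq (n : ℕ) : ℝ := ((2 * n : ℕ) : ℝ) ^ (1 / 4 : ℝ)

noncomputable def CC : ℝ := 72 ^ 3 * Real.exp 3 * (2 * Real.exp 1)

lemma qq_pos (n : ℕ) (hn : 1 ≤ n) : 0 < qq n := by
  have : (0 : ℝ) < ((2 * n : ℕ) : ℝ) := by exact_mod_cast (by omega : 0 < 2 * n)
  exact Real.rpow_pos_of_pos this _

lemma qq_four (n : ℕ) : qq n ^ 4 = ((2 * n : ℕ) : ℝ) := by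
  rw [qq, ← Real.rpow_natCast, ← Real.rpow_mul (by positivity)]
  norm_num

lemma qq_two (n : ℕ) (hn : 1 ≤ n) : Real.sqrt ((2 * n : ℕ) : ℝ) = qq n ^ 2 := by
  rw [← qq_four, show qq n ^ 4 = (qq n ^ 2) ^ 2 by ring, Real.sqrt_sq (by positivity)]

lemma fx_le2 (n : ℕ) (hn : 1 ≤ n) (σ : Equiv.Perm (Fin (2 * n))) (m : ℕ) (hm : 1 ≤ m) (hσ : #σ.support = m) :
    (#(fx σ) : ℝ) ≤ BB n * (72 ^ 3 * Real.exp 3 / qq n ^ 5) ^ m * (m : ℝ) ^ RR σ := by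
  have h := fx_le n hn σ (by omega)
  have hR := RR_le σ
  have hB := BB_pos n
  have hq := qq_pos n hn
  rw [hσ] at h hR
  rw [qq_two n hn] at h
  have hm' : (1 : ℝ) ≤ m := by exact_mod_cast hm
  have hmN : (m : ℝ) ≤ ((2 * n : ℕ) : ℝ) := by
    have : #σ.support ≤ 2 * n := (Finset.card_le_univ _).trans (by simp)
    exact_mod_cast hσ ▸ this
  have h1 : (m : ℝ) ^ (3 / 2 * RR σ) ≤ qq n ^ m * (m : ℝ) ^ RR σ := by
    calc (m : ℝ) ^ (3 / 2 * RR σ) ≤ (m : ℝ) ^ ((1 / 4 : ℝ) * (m : ℝ) + RR σ) := by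
          apply Real.rpow_le_rpow_of_exponent_le hm'; linarith
      _ = ((m : ℝ) ^ (1 / 4 : ℝ)) ^ m * (m : ℝ) ^ RR σ := by
          rw [Real.rpow_add (by linarith), Real.rpow_mul (by linarith), Real.rpow_natCast]
      _ ≤ _ := by
          rw [qq]
          gcongr
  refine h.trans ?_
  have h2 : Real.exp (3 * m) = Real.exp 3 ^ m := by rw [← Real.exp_nat_mul]; ring_nf
  calc BB n * (72 ^ (3 * m) * Real.exp (3 * m) * ((qq n ^ 2) ^ (3 * m))⁻¹ * (m : ℝ) ^ (3 / 2 * RR σ))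
      ≤ BB n * (72 ^ (3 * m) * Real.exp (3 * m) * ((qq n ^ 2) ^ (3 * m))⁻¹ * (qq n ^ m * (m : ℝ) ^ RR σ)) := by gcongr
    _ = _ := by
      rw [h2, div_pow, mul_pow, ← pow_mul, ← pow_mul, ← pow_mul, div_eq_mul_inv]
      have : (qq n ^ (2 * (3 * m)))⁻¹ * qq n ^ m = (qq n ^ (5 * m))⁻¹ := by
        rw [show 2 * (3 * m) = 5 * m + m by ring, pow_add]
        field_simp
      rw [← this]; ring

lemma sum_fx_le (n : ℕ) (hn : 1 ≤ n) :
    ∑ σ : Equiv.Perm (Fin (2 * n)) with σ ≠ 1, (#(fx σ) : ℝ) ≤ BB n * ∑ m ∈ Finset.Icc 2 (2 * n), (CC / qq n) ^ m := by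
  classical
  have hB := BB_pos n
  have hq := qq_pos n hn
  rw [← Finset.sum_fiberwise_of_maps_to (g := fun σ : Equiv.Perm (Fin (2 * n)) => #σ.support) (t := Finset.Icc 2 (2 * n)),
    Finset.mul_sum]
  · refine Finset.sum_le_sum fun m hm => ?_
    have hm1 : 1 ≤ m := by have := (Finset.mem_Icc.1 hm).1; omega
    calc _ ≤ ∑ σ : Equiv.Perm (Fin (2 * n)) with #σ.support = m, (#(fx σ) : ℝ) := by
          apply Finset.sum_le_sum_of_subset_of_nonneg
          · intro σ hσ
            exact Finset.mem_filter.2 ⟨Finset.mem_univ _, (Finset.mem_filter.1 hσ).2⟩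
          · intros; positivity
      _ ≤ ∑ σ : Equiv.Perm (Fin (2 * n)) with #σ.support = m, BB n * (72 ^ 3 * Real.exp 3 / qq n ^ 5) ^ m * (m : ℝ) ^ RR σ :=
          Finset.sum_le_sum fun σ hσ => fx_le2 n hn σ m hm1 (Finset.mem_filter.1 hσ).2
      _ = BB n * (72 ^ 3 * Real.exp 3 / qq n ^ 5) ^ m * ∑ σ : Equiv.Perm (Fin (2 * n)) with #σ.support = m, (m : ℝ) ^ RR σ := by
          rw [Finset.mul_sum]
      _ ≤ BB n * (72 ^ 3 * Real.exp 3 / qq n ^ 5) ^ m * (2 * Real.exp 1 * ((2 * n : ℕ) : ℝ)) ^ m := by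
          have := sum_RR_le (2 * n) m hm1
          gcongr
      _ = _ := by
          rw [mul_assoc, ← mul_pow, ← qq_four, CC]
          congr 2
          field_simp
  · intro σ hσ
    have h1 := Equiv.Perm.two_le_card_support_of_ne_one (Finset.mem_filter.1 hσ).2
    have h2 : #σ.support ≤ 2 * n := (Finset.card_le_univ _).trans (by simp)
    exact Finset.mem_Icc.2 ⟨h1, h2⟩

lemma geom_small (x : ℝ) (h0 : 0 ≤ x) (h1 : x ≤ 1 / 2) (M : ℕ) : ∑ m ∈ Finset.Icc 2 M, x ^ m ≤ 2 * x ^ 2 := by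
  have h : ∀ k, ∑ m ∈ Finset.Icc 2 k, x ^ m ≤ 2 * x ^ 2 - (if 1 ≤ k then 2 * x ^ (k + 1) else 0) := by
    intro k
    induction k with
    | zero => simp; positivity
    | succ k ih =>
      rcases Nat.eq_zero_or_pos k with rfl | hk
      · simp
      · rw [Finset.sum_Icc_succ_top (by omega)]
        rw [if_pos (by omega)] at ih ⊢
        have : x ^ (k + 1 + 1) = x * x ^ (k + 1) := by ring
        have : 0 ≤ x ^ (k + 1) := by positivity
        nlinarith
  refine (h M).trans ?_
  split_ifs
  · have : 0 ≤ x ^ (M + 1) := by positivity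
    linarith
  · linarith

lemma CC_tendsto : Tendsto (fun n => CC / qq n) atTop (𝓝 0) := by
  have h1 : Tendsto (fun n : ℕ => ((2 * n : ℕ) : ℝ)) atTop atTop :=
    tendsto_natCast_atTop_atTop.comp (tendsto_id.const_mul_atTop' (by norm_num : (0 : ℕ) < 2))
  have h2 : Tendsto qq atTop atTop := (tendsto_rpow_atTop (by norm_num : (0 : ℝ) < 1 / 4)).comp h1
  exact h2.const_div_atTop CC

lemma sum_fx_tendsto :
    Tendsto (fun n => (∑ σ : Equiv.Perm (Fin (2 * n)) with σ ≠ 1, (#(fx σ) : ℝ)) / BB n) atTop (𝓝 0) := by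
  have h1 : Tendsto (fun n => 2 * (CC / qq n) ^ 2) atTop (𝓝 0) := by
    simpa using (CC_tendsto.pow 2).const_mul 2
  refine squeeze_zero' (Eventually.of_forall fun n => ?_) ?_ h1
  · have := BB_pos n
    positivity
  · filter_upwards [CC_tendsto.eventually (eventually_le_nhds (by norm_num : (0 : ℝ) < 1 / 2)), eventually_ge_atTop 1] with n hn hn1
    have hB := BB_pos n
    have hq := qq_pos n hn1
    rw [div_le_iff₀ hB, mul_comm _ (BB n)]
    refine (sum_fx_le n hn1).trans ?_
    have : 0 ≤ CC / qq n := by rw [CC]; positivity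
    exact mul_le_mul_of_nonneg_left (geom_small _ this hn _) hB.le

lemma sum_all_tendsto :
    Tendsto (fun n => (∑ σ : Equiv.Perm (Fin (2 * n)), (#(fx σ) : ℝ)) / BB n) atTop (𝓝 (Real.exp (-2))) := by
  have h := cub_asymp.add sum_fx_tendsto
  rw [add_zero] at h
  refine h.congr fun n => ?_
  rw [show (DD (3 * n) : ℝ) / 6 ^ (2 * n) = BB n from rfl, ← add_div]
  congr 1
  rw [← Finset.sum_filter_add_sum_filter_not Finset.univ (fun σ : Equiv.Perm (Fin (2 * n)) => σ ≠ 1), add_comm]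
  congr 1
  simp only [not_not]
  rw [Finset.filter_eq' , if_pos (Finset.mem_univ _), Finset.sum_singleton]
  congr 2
  ext E
  simp [fx]

end

section Burnside
open Finset

lemma mem_image_map {N : ℕ} (σ : Equiv.Perm (Fin N)) (E : Finset (Sym2 (Fin N))) (u v : Fin N) :
    s(u, v) ∈ E.image (Sym2.map σ) ↔ s(σ.symm u, σ.symm v) ∈ E := by
  have hinj : Function.Injective (Sym2.map σ) := Sym2.map.injective σ.injective
  have h : s(u, v) = Sym2.map σ s(σ.symm u, σ.symm v) := by simp
  rw [h, Finset.mem_image]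
  constructor
  · rintro ⟨e, he, hh⟩
    rw [← hinj hh]; exact he
  · intro he
    exact ⟨_, he, rfl⟩

lemma image_mem_cub {N : ℕ} (σ : Equiv.Perm (Fin N)) (E : Finset (Sym2 (Fin N))) (hE : E ∈ cub N) :
    E.image (Sym2.map σ) ∈ cub N := by
  have hinj : Function.Injective (Sym2.map σ) := Sym2.map.injective σ.injective
  obtain ⟨h1, h2⟩ := Finset.mem_filter.1 hE
  refine Finset.mem_filter.2 ⟨Finset.mem_powerset.2 ?_, fun v => ?_⟩
  · intro e he
    induction e with
    | _ u v =>
      rw [mem_image_map] at he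
      have := (Finset.mem_filter.1 (Finset.mem_powerset.1 h1 he)).2
      refine Finset.mem_filter.2 ⟨Finset.mem_univ _, ?_⟩
      simpa using this
  · rw [← h2 (σ.symm v), dg, dg, Finset.filter_image, Finset.card_image_of_injective _ hinj]
    congr 1
    ext e
    simp only [Finset.mem_filter, Sym2.mem_map]
    constructor
    · rintro ⟨h, a, ha, rfl⟩
      exact ⟨h, by simpa using ha⟩
    · rintro ⟨h, ha⟩
      exact ⟨h, _, ha, by simp⟩

instance cubAction (N : ℕ) : MulAction (Equiv.Perm (Fin N)) {E // E ∈ cub N} where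
  smul σ E := ⟨E.1.image (Sym2.map σ), image_mem_cub σ E.1 E.2⟩
  one_smul E := by
    apply Subtype.ext
    show E.1.image (Sym2.map (1 : Equiv.Perm (Fin N))) = E.1
    simp
  mul_smul σ τ E := by
    apply Subtype.ext
    show E.1.image (Sym2.map (σ * τ : Equiv.Perm (Fin N))) = (E.1.image (Sym2.map τ)).image (Sym2.map σ)
    rw [Finset.image_image, ← Sym2.map_comp, Equiv.Perm.coe_mul]

lemma smul_val {N : ℕ} (σ : Equiv.Perm (Fin N)) (E : {E // E ∈ cub N}) : (σ • E).1 = E.1.image (Sym2.map σ) := rfl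

open Classical in
noncomputable def edg {N : ℕ} (G : SimpleGraph (Fin N)) : Finset (Sym2 (Fin N)) := Finset.univ.filter (fun e => e ∈ G.edgeSet)

lemma mem_edg {N : ℕ} (G : SimpleGraph (Fin N)) (u v : Fin N) : s(u, v) ∈ edg G ↔ G.Adj u v := by
  simp [edg]

lemma dg_edg {N : ℕ} (G : SimpleGraph (Fin N)) (v : Fin N) : dg (edg G) v = Nat.card (G.neighborSet v) := by
  classical
  rw [Nat.card_eq_fintype_card, SimpleGraph.card_neighborSet_eq_degree, ← SimpleGraph.card_incidenceFinset_eq_degree, dg]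
  congr 1
  ext e
  simp [edg, SimpleGraph.incidenceSet]

lemma edg_mem {N : ℕ} (G : SimpleGraph (Fin N)) (hG : IsCubicSimple G) : edg G ∈ cub N := by
  refine Finset.mem_filter.2 ⟨Finset.mem_powerset.2 ?_, fun v => ?_⟩
  · intro e he
    refine Finset.mem_filter.2 ⟨Finset.mem_univ _, ?_⟩
    classical
    exact G.not_isDiag_of_mem_edgeSet (Finset.mem_filter.1 he).2
  · rw [dg_edg]; exact hG v

noncomputable def edgEquiv (N : ℕ) : {G : SimpleGraph (Fin N) // IsCubicSimple G} ≃ {E // E ∈ cub N} :=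
  Equiv.ofBijective (fun G => ⟨edg G.1, edg_mem G.1 G.2⟩) (by
    constructor
    · intro G G' h
      apply Subtype.ext
      ext u v
      have h' : edg G.1 = edg G'.1 := Subtype.ext_iff.1 h
      rw [← mem_edg, ← mem_edg, h']
    · rintro ⟨E, hE⟩
      have key : edg (SimpleGraph.fromEdgeSet (E : Set (Sym2 (Fin N)))) = E := by
        ext e
        induction e with
        | _ u v =>
          rw [mem_edg, SimpleGraph.fromEdgeSet_adj]
          constructor
          · exact fun h => h.1
          · intro h
            refine ⟨h, ?_⟩
            have := (Finset.mem_filter.1 (Finset.mem_powerset.1 (Finset.mem_filter.1 hE).1 h)).2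
            simpa using this
      refine ⟨⟨SimpleGraph.fromEdgeSet (E : Set (Sym2 (Fin N))), ?_⟩, Subtype.ext key⟩
      intro v
      rw [← dg_edg, key]
      exact (Finset.mem_filter.1 hE).2 v)

lemma edgEquiv_val {N : ℕ} (G : {G : SimpleGraph (Fin N) // IsCubicSimple G}) : (edgEquiv N G).1 = edg G.1 := rfl

lemma rel_iff {N : ℕ} (G G' : {G : SimpleGraph (Fin N) // IsCubicSimple G}) :
    SimpleCubicIsoRel N G G' ↔ (MulAction.orbitRel (Equiv.Perm (Fin N)) {E // E ∈ cub N}) (edgEquiv N G) (edgEquiv N G') := by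
  rw [MulAction.orbitRel_apply, MulAction.mem_orbit_iff]
  constructor
  · rintro ⟨φ⟩
    refine ⟨φ.symm.toEquiv, ?_⟩
    apply Subtype.ext
    rw [smul_val, edgEquiv_val, edgEquiv_val]
    ext e
    induction e with
    | _ u v =>
      rw [mem_image_map, mem_edg, mem_edg]
      exact φ.map_adj_iff
  · rintro ⟨σ, h⟩
    have h := Subtype.ext_iff.1 h
    rw [smul_val, edgEquiv_val, edgEquiv_val] at h
    refine ⟨⟨σ.symm, ?_⟩⟩
    intro u v
    rw [← mem_edg, ← mem_edg, ← h, mem_image_map]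

lemma burnside (N : ℕ) : Istar N * N.factorial = ∑ σ : Equiv.Perm (Fin N), #(fx σ) := by
  classical
  have h := MulAction.sum_card_fixedBy_eq_card_orbits_mul_card_group (Equiv.Perm (Fin N)) {E // E ∈ cub N}
  rw [Fintype.card_perm, Fintype.card_fin] at h
  have h1 : Istar N = Fintype.card (Quotient (MulAction.orbitRel (Equiv.Perm (Fin N)) {E // E ∈ cub N})) := by
    rw [Istar, ← Nat.card_eq_fintype_card]
    exact Nat.card_congr (Quot.congr (edgEquiv N) rel_iff)
  rw [h1, ← h]
  refine Finset.sum_congr rfl fun σ _ => ?_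
  rw [← Fintype.card_coe]
  refine Fintype.card_congr ⟨fun E => ⟨E.1.1, Finset.mem_filter.2 ⟨E.1.2, ?_⟩⟩, fun E => ⟨⟨E.1, (Finset.mem_filter.1 E.2).1⟩, ?_⟩, ?_, ?_⟩
  · exact Subtype.ext_iff.1 E.2
  · exact Subtype.ext (Finset.mem_filter.1 E.2).2
  · intro E; rfl
  · intro E; rfl

end Burnside

lemma fact_stirling (k : ℕ) (hk : 1 ≤ k) :
    (k.factorial : ℝ) = Stirling.stirlingSeq k * (Real.sqrt (2 * k) * (k / Real.exp 1) ^ k) := by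
  have : (0 : ℝ) < k := by exact_mod_cast hk
  rw [Stirling.stirlingSeq]
  field_simp

lemma bracket_eq (n : ℕ) (hn : 1 ≤ n) :
    BB n / (2 * n).factorial * Real.sqrt (π * ((2 * n : ℕ) : ℝ)) * ((4 * Real.exp 1) / (3 * ((2 * n : ℕ) : ℝ))) ^ n =
    Real.sqrt π * Stirling.stirlingSeq (6 * n) / (Stirling.stirlingSeq (3 * n) * Stirling.stirlingSeq (2 * n)) := by
  have hn' : (0 : ℝ) < n := by exact_mod_cast hn
  have hs : ∀ k, 1 ≤ k → 0 < Stirling.stirlingSeq k := by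
    intro k hk
    have : (0 : ℝ) < k := by exact_mod_cast hk
    rw [Stirling.stirlingSeq]; positivity
  have h2 := hs (2 * n) (by omega)
  have h3 := hs (3 * n) (by omega)
  have h6 := hs (6 * n) (by omega)
  have hBB : BB n = ((6 * n).factorial : ℝ) / (((3 * n).factorial : ℝ) * 288 ^ n) := by
    rw [BB, DD]
    push_cast
    rw [show 2 * (3 * n) = 6 * n by ring, div_div, pow_mul, pow_mul,
      show (288 : ℝ) = 2 ^ 3 * 6 ^ 2 by norm_num, mul_pow]
    congr 1
    ring
  rw [hBB, fact_stirling (6 * n) (by omega), fact_stirling (3 * n) (by omega), fact_stirling (2 * n) (by omega)]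
  push_cast
  have e1 : Real.sqrt (2 * (6 * n)) = Real.sqrt 12 * Real.sqrt n := by
    rw [← Real.sqrt_mul (by norm_num)]; ring_nf
  have e2 : Real.sqrt (2 * (3 * n)) = Real.sqrt 6 * Real.sqrt n := by
    rw [← Real.sqrt_mul (by norm_num)]; ring_nf
  have e3 : Real.sqrt (2 * (2 * n)) = Real.sqrt 4 * Real.sqrt n := by
    rw [← Real.sqrt_mul (by norm_num)]; ring_nf
  have e4 : Real.sqrt (π * (2 * n)) = Real.sqrt π * (Real.sqrt 2 * Real.sqrt n) := by
    rw [Real.sqrt_mul Real.pi_pos.le, Real.sqrt_mul (by norm_num)]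
  have e5 : Real.sqrt 12 * Real.sqrt 2 = Real.sqrt 6 * Real.sqrt 4 := by
    rw [← Real.sqrt_mul (by norm_num), ← Real.sqrt_mul (by norm_num)]; norm_num
  have p : (6 * n / Real.exp 1) ^ (6 * n) * ((4 * Real.exp 1) / (3 * (2 * n))) ^ n =
      (3 * n / Real.exp 1) ^ (3 * n) * 288 ^ n * (2 * n / Real.exp 1) ^ (2 * n) := by
    rw [pow_mul, pow_mul, pow_mul, ← mul_pow, ← mul_pow, ← mul_pow]
    congr 1
    have := Real.exp_pos 1
    field_simp
    norm_num
  rw [e1, e2, e3, e4]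
  set A := (6 * n / Real.exp 1 : ℝ) ^ (6 * n)
  set B := ((4 * Real.exp 1) / (3 * (2 * n)) : ℝ) ^ n
  set C := (3 * n / Real.exp 1 : ℝ) ^ (3 * n) with hC
  set D := (2 * n / Real.exp 1 : ℝ) ^ (2 * n) with hD
  have hCp : 0 < C := by positivity
  have hDp : 0 < D := by positivity
  have hr : 0 < Real.sqrt n := Real.sqrt_pos.2 hn'
  have h4 : 0 < Real.sqrt 4 := Real.sqrt_pos.2 (by norm_num)
  have h5 : 0 < Real.sqrt 6 := Real.sqrt_pos.2 (by norm_num)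
  have h7 : (0 : ℝ) < 288 ^ n := by positivity
  set s2 := Stirling.stirlingSeq (2 * n)
  set s3 := Stirling.stirlingSeq (3 * n)
  set s6 := Stirling.stirlingSeq (6 * n)
  set r := Real.sqrt (n : ℝ)
  set w := Real.sqrt π
  set z := (288 : ℝ) ^ n
  rw [div_div, div_mul_eq_mul_div, div_mul_eq_mul_div, div_eq_div_iff (by positivity) (by positivity)]
  calc _ = (s6 * w * s3 * s2 * r ^ 2) * (Real.sqrt 12 * Real.sqrt 2) * (A * B) := by ring
    _ = _ := by rw [e5, p]; ring

lemma bracket_tendsto : Tendsto (fun n : ℕ => BB n / (2 * n).factorial * Real.sqrt (π * ((2 * n : ℕ) : ℝ)) *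
      ((4 * Real.exp 1) / (3 * ((2 * n : ℕ) : ℝ))) ^ n) atTop (𝓝 1) := by
  have hm : ∀ c : ℕ, 0 < c → Tendsto (fun n => Stirling.stirlingSeq (c * n)) atTop (𝓝 (Real.sqrt π)) := fun c hc =>
    Stirling.tendsto_stirlingSeq_sqrt_pi.comp (tendsto_id.const_mul_atTop' hc)
  have hp : Real.sqrt π ≠ 0 := (Real.sqrt_pos.2 Real.pi_pos).ne'
  have h := ((hm 6 (by norm_num)).const_mul (Real.sqrt π)).div ((hm 3 (by norm_num)).mul (hm 2 (by norm_num)))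
    (mul_ne_zero hp hp)
  rw [div_self (mul_ne_zero hp hp)] at h
  refine h.congr' ?_
  filter_upwards [eventually_ge_atTop 1] with n hn
  exact (bracket_eq n hn).symm

lemma even_filter_le : atTop ⊓ 𝓟 {N : ℕ | Even N} ≤ Filter.map (fun n : ℕ => 2 * n) atTop := by
  intro s hs
  rw [Filter.mem_map, Filter.mem_atTop_sets] at hs
  obtain ⟨a, ha⟩ := hs
  rw [Filter.mem_inf_principal]
  filter_upwards [eventually_ge_atTop (2 * a)] with N hN hE
  obtain ⟨k, hk⟩ := hE
  have := ha k (by omega)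
  have h2 : 2 * k = N := by omega
  rw [← h2]
  exact this

/-- Theorem (Bender–Canfield, Bollobás, McKay–Wormald):
`I*_N ∼ (1/(e²√(πN))) (3N/(4e))^{N/2}` as `N → ∞` through even `N`. -/
theorem simple_cubic_graph_count_asymptotics :
    Tendsto
      (fun N : ℕ => (Istar N : ℝ) * Real.exp 2 * Real.sqrt (π * N) *
        ((4 * Real.exp 1) / (3 * (N : ℝ))) ^ ((N : ℝ) / 2))
      (atTop ⊓ 𝓟 {N : ℕ | Even N}) (𝓝 1) := by
  refine Tendsto.mono_left ?_ even_filter_le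
  rw [tendsto_map'_iff]
  have h := (sum_all_tendsto.mul bracket_tendsto).mul_const (Real.exp 2)
  rw [mul_one, ← Real.exp_add, show (-2 : ℝ) + 2 = 0 by norm_num, Real.exp_zero] at h
  refine h.congr fun n => ?_
  have hb : (∑ σ : Equiv.Perm (Fin (2 * n)), ((fx σ).card : ℝ)) = (Istar (2 * n) : ℝ) * ((2 * n).factorial : ℝ) := by
    have := burnside (2 * n)
    exact_mod_cast this.symm
  have hB := (BB_pos n).ne'
  have hf : ((2 * n).factorial : ℝ) ≠ 0 := by positivity
  have he : (((2 * n : ℕ) : ℝ) / 2) = (n : ℝ) := by push_cast; ring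
  simp only [Function.comp]
  rw [he, Real.rpow_natCast, hb]
  push_cast
  field_simp
end

section
/- The probability that the random cubic multigraph produced by the configuration model admits a nontrivial automorphism tends to 0: as N → ∞ through even values of N, the proportion of ω ∈ Ω_N for which there exists a permutation σ ≠ id of Fin N satisfying mult_ω(σu, σv) = mult_ω(u,v) for all u, v ∈ Fin N tends to 0. -/
open Filter Real Topology

/-- `Omega N`: the perfect matchings of the `3N` half-edges, i.e. fixed-point-free
involutions of `Fin (3N)`. -/
def Omega (N : ℕ) : Type := {ω : Equiv.Perm (Fin (3 * N)) // ∀ a, ω (ω a) = a ∧ ω a ≠ a}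

instance (N : ℕ) : Fintype (Omega N) := by unfold Omega; exact Subtype.fintype _

/-- The block (vertex) containing a half-edge: `B_v = {3v, 3v+1, 3v+2}`. -/
def blk {N : ℕ} (a : Fin (3 * N)) : Fin N := ⟨a.val / 3, by have := a.isLt; omega⟩

/-- The multiplicity of the pair of blocks `{u, v}` in the multigraph `Γ(ω)`:
for `u ≠ v` the number of half-edges in `B_u` matched into `B_v`; for `u = v`
the number of matched pairs contained in `B_u` (loops at `u`). -/
noncomputable def mult {N : ℕ} (ω : Omega N) (u v : Fin N) : ℕ :=
  if u = v then Nat.card {a : Fin (3 * N) // blk a = u ∧ blk (ω.val a) = u} / 2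
  else Nat.card {a : Fin (3 * N) // blk a = u ∧ blk (ω.val a) = v}

section partOne
open scoped Classical
open Finset

namespace CubicAut

variable {N : ℕ}

theorem om_inv (ω : Omega N) (a : Fin (3 * N)) : ω.val (ω.val a) = a := (ω.property a).1
theorem om_ne (ω : Omega N) (a : Fin (3 * N)) : ω.val a ≠ a := (ω.property a).2

/-- Matchings agreeing with `ω₀` on `D`. -/
noncomputable def agr (ω₀ : Omega N) (D : Finset (Fin (3 * N))) : Finset (Omega N) :=
  univ.filter (fun ω => ∀ a ∈ D, ω.val a = ω₀.val a)

theorem mem_agr {ω₀ ω : Omega N} {D : Finset (Fin (3 * N))} :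
    ω ∈ agr ω₀ D ↔ ∀ a ∈ D, ω.val a = ω₀.val a := by simp [agr]

/-- Conjugating a matching by a permutation. -/
def conjOm (τ : Equiv.Perm (Fin (3 * N))) (ω : Omega N) : Omega N :=
  ⟨τ * ω.val * τ⁻¹, by
    intro a
    refine ⟨by simp [om_inv], ?_⟩
    intro h
    have h2 : ω.val (τ⁻¹ a) = τ⁻¹ a := by
      apply τ.injective
      simpa using h
    exact om_ne ω _ h2⟩

theorem conjOm_val (τ : Equiv.Perm (Fin (3 * N))) (ω : Omega N) (a : Fin (3 * N)) :
    (conjOm τ ω).val a = τ (ω.val (τ⁻¹ a)) := rfl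

theorem conjOm_inj (τ : Equiv.Perm (Fin (3 * N))) {ω ω' : Omega N}
    (h : conjOm τ ω = conjOm τ ω') : ω = ω' := by
  apply Subtype.ext
  have h1 : τ * ω.val * τ⁻¹ = τ * ω'.val * τ⁻¹ := congrArg Subtype.val h
  exact mul_left_cancel (mul_right_cancel h1)

theorem agr_step (ω₀ : Omega N) (D : Finset (Fin (3 * N)))
    (hD : ∀ a ∈ D, ω₀.val a ∈ D) (a : Fin (3 * N)) (ha : a ∉ D) :
    (3 * N - (#D + 1)) * #(agr ω₀ (insert a (insert (ω₀.val a) D))) ≤ #(agr ω₀ D) := by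
  set b := ω₀.val a with hb
  have hab : a ≠ b := fun h => om_ne ω₀ a (by rw [← hb, ← h])
  have hbD : b ∉ D := by
    intro h
    apply ha
    have := hD b h
    rwa [hb, om_inv] at this
  have hc : #((insert a D)ᶜ) = 3 * N - (#D + 1) := by
    rw [card_compl, card_insert_of_notMem ha, Fintype.card_fin]
  rw [← hc, ← card_product]
  have key : ∀ b' ∈ (insert a D)ᶜ, ∀ ω ∈ agr ω₀ (insert a (insert b D)),
      (conjOm (Equiv.swap b b') ω).val a = b' := by
    intro b' hb' ω hω
    rw [mem_agr] at hω
    simp only [mem_compl, mem_insert, not_or] at hb'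
    rw [conjOm_val, Equiv.swap_inv, Equiv.swap_apply_of_ne_of_ne hab (Ne.symm hb'.1),
      hω a (by simp), ← hb, Equiv.swap_apply_left]
  apply card_le_card_of_injOn (fun x => conjOm (Equiv.swap b x.1) x.2)
  · rintro ⟨b', ω⟩ h
    simp only [coe_product, Set.mem_prod, mem_coe] at h
    have hb' := h.1
    have hω := h.2
    simp only [mem_compl, mem_insert, not_or] at hb'
    rw [mem_agr] at hω
    simp only [mem_coe, mem_agr]
    intro d hd
    have h1 : d ≠ b := fun h => hbD (h ▸ hd)
    have h2 : d ≠ b' := fun h => hb'.2 (h ▸ hd)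
    have h3 := hD d hd
    have h4 : ω₀.val d ≠ b := fun h => hbD (h ▸ h3)
    have h5 : ω₀.val d ≠ b' := fun h => hb'.2 (h ▸ h3)
    rw [conjOm_val, Equiv.swap_inv, Equiv.swap_apply_of_ne_of_ne h1 h2,
      hω d (by simp [hd]), Equiv.swap_apply_of_ne_of_ne h4 h5]
  · rintro ⟨b1, ω1⟩ h1 ⟨b2, ω2⟩ h2 h
    simp only [coe_product, Set.mem_prod, mem_coe] at h1 h2 h
    have e1 := key b1 h1.1 ω1 h1.2
    have e2 := key b2 h2.1 ω2 h2.2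
    have e : b1 = b2 := by rw [← e1, ← e2, h]
    subst e
    rw [conjOm_inj _ h]

theorem agr_desc (M : ℕ) (hM : 3 * N = 2 * M) (k : ℕ) : ∀ (ω₀ : Omega N) (D : Finset (Fin (3 * N))),
    #D ≤ k → (∀ a ∈ D, ω₀.val a ∈ D) →
    ∃ e, #D = 2 * e ∧ e ≤ M ∧ M.descFactorial e * #(agr ω₀ D) ≤ Fintype.card (Omega N) := by
  induction k with
  | zero =>
    intro ω₀ D h _
    exact ⟨0, by omega, by omega, by simpa using card_le_univ _⟩
  | succ k ih =>
    intro ω₀ D hk hD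
    rcases D.eq_empty_or_nonempty with h0 | ⟨a, ha⟩
    · exact ⟨0, by simp [h0], by omega, by simpa using card_le_univ _⟩
    · set b := ω₀.val a with hb
      have hab : a ≠ b := fun h => om_ne ω₀ a (by rw [← hb, ← h])
      set D' := (D.erase a).erase b with hD'
      have hbD : b ∈ D := hD a ha
      have hbe : b ∈ D.erase a := by simp [hbD, hab.symm]
      have hbn : b ∉ D' := by simp [hD']
      have han : a ∉ D' := by simp [hD']
      have hcard : #D = #D' + 2 := by
        have h1 := card_erase_add_one hbe
        have h2 := card_erase_add_one ha
        rw [← hD'] at h1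
        omega
      have hins : insert a (insert b D') = D := by
        rw [hD', insert_erase hbe, insert_erase ha]
      have hcl : ∀ d ∈ D', ω₀.val d ∈ D' := by
        intro d hd
        simp only [hD', mem_erase] at hd ⊢
        refine ⟨?_, ?_, hD d hd.2.2⟩
        · intro h
          exact hd.2.1 (ω₀.val.injective h)
        · intro h
          apply hd.1
          rw [hb, ← h, om_inv]
      obtain ⟨e, he, heM, hle⟩ := ih ω₀ D' (by omega) hcl
      have hst := agr_step ω₀ D' hcl a han
      rw [← hb, hins] at hst
      have hDn : #D ≤ 3 * N := by simpa using card_le_univ D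
      refine ⟨e + 1, by omega, by omega, ?_⟩
      rw [Nat.descFactorial_succ]
      calc (M - e) * M.descFactorial e * #(agr ω₀ D)
          = M.descFactorial e * ((M - e) * #(agr ω₀ D)) := by ring
        _ ≤ M.descFactorial e * ((3 * N - (#D' + 1)) * #(agr ω₀ D)) := by
            have hx : M - e ≤ 3 * N - (#D' + 1) := by omega
            exact Nat.mul_le_mul_left _ (Nat.mul_le_mul_right _ hx)
        _ ≤ M.descFactorial e * #(agr ω₀ D') := by gcongr
        _ ≤ _ := hle

theorem pow_le_desc (M : ℕ) : ∀ e, e ≤ M → ((M : ℝ) / 3) ^ e ≤ (M.descFactorial e : ℝ) := by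
  induction M with
  | zero =>
    intro e he
    have : e = 0 := by omega
    subst this
    simp
  | succ M ih =>
    intro e he
    cases e with
    | zero => simp
    | succ e =>
      have heM : e ≤ M := by omega
      rw [Nat.succ_descFactorial_succ]
      have h1 := ih e heM
      have h2 : (((M + 1 : ℕ) : ℝ) / 3) ^ e ≤ 3 * ((M : ℝ) / 3) ^ e := by
        rcases Nat.eq_zero_or_pos M with h0 | h0
        · have : e = 0 := by omega
          subst this
          norm_num
        · have hMp : (0 : ℝ) < M := by exact_mod_cast h0
          have h3 : (((M + 1 : ℕ) : ℝ) / 3) = (1 + 1 / (M : ℝ)) * ((M : ℝ) / 3) := by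
            push_cast
            field_simp
          rw [h3, mul_pow]
          gcongr
          calc (1 + 1 / (M : ℝ)) ^ e ≤ (1 + 1 / (M : ℝ)) ^ M := by
                apply pow_le_pow_right₀ _ heM
                have : 0 ≤ 1 / (M : ℝ) := by positivity
                linarith
            _ ≤ (Real.exp (1 / (M : ℝ))) ^ M := by
                gcongr
                rw [add_comm]
                exact Real.add_one_le_exp _
            _ = Real.exp 1 := by
                rw [← Real.exp_nat_mul]
                congr 1
                field_simp
            _ ≤ 3 := by
                have := Real.exp_one_lt_d9
                linarith
      push_cast
      calc (((M : ℝ) + 1) / 3) ^ (e + 1) = (((M : ℝ) + 1) / 3) ^ e * (((M : ℝ) + 1) / 3) := pow_succ _ _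
        _ ≤ (3 * ((M : ℝ) / 3) ^ e) * (((M : ℝ) + 1) / 3) := by
            gcongr
            simpa using h2
        _ = ((M : ℝ) + 1) * ((M : ℝ) / 3) ^ e := by ring
        _ ≤ ((M : ℝ) + 1) * (M.descFactorial e : ℝ) := by gcongr

theorem agr_bound (hN : Even N) (hN0 : 0 < N) (ω₀ : Omega N) (D : Finset (Fin (3 * N)))
    (hD : ∀ a ∈ D, ω₀.val a ∈ D) :
    (#(agr ω₀ D) : ℝ) ≤ Fintype.card (Omega N) * (Real.sqrt (2 / N)) ^ #D := by
  obtain ⟨m, hm⟩ := hN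
  obtain ⟨e, he, heM, hle⟩ := agr_desc (3 * m) (by omega) _ ω₀ D le_rfl hD
  have h1 := pow_le_desc (3 * m) e heM
  have hmp : 0 < m := by omega
  have hmR : (0 : ℝ) < m := by exact_mod_cast hmp
  have h2 : (((3 * m : ℕ) : ℝ) / 3) = m := by push_cast; ring
  rw [h2] at h1
  have h3 : Real.sqrt (2 / N) ^ #D = (1 / (m : ℝ)) ^ e := by
    rw [he, pow_mul, Real.sq_sqrt (by positivity)]
    congr 1
    rw [hm]
    push_cast
    field_simp
    norm_num
  rw [h3, one_div, inv_pow, ← div_eq_mul_inv, le_div_iff₀ (by positivity)]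
  calc (#(agr ω₀ D) : ℝ) * (m : ℝ) ^ e ≤ #(agr ω₀ D) * ((3 * m).descFactorial e : ℝ) := by gcongr
    _ = (((3 * m).descFactorial e * #(agr ω₀ D) : ℕ) : ℝ) := by push_cast; ring
    _ ≤ _ := by exact_mod_cast hle

end CubicAut
end partOne


section partTwo
open scoped Classical
open Finset

namespace CubicAut

variable {N : ℕ}

theorem blk_mod_ext {a b : Fin (3 * N)} (h : blk a = blk b) (h' : a.val % 3 = b.val % 3) : a = b := by
  have h1 : a.val / 3 = b.val / 3 := congrArg Fin.val h
  apply Fin.ext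
  omega

/-- Half-edges at `u` matched into block `v`. -/
noncomputable def edg (ω : Omega N) (u v : Fin N) : Finset (Fin (3 * N)) :=
  univ.filter (fun a => blk a = u ∧ blk (ω.val a) = v)

theorem mem_edg {ω : Omega N} {u v : Fin N} {a : Fin (3 * N)} :
    a ∈ edg ω u v ↔ blk a = u ∧ blk (ω.val a) = v := by simp [edg]

theorem card_edg (ω : Omega N) (u v : Fin N) :
    Nat.card {a : Fin (3 * N) // blk a = u ∧ blk (ω.val a) = v} = #(edg ω u v) := by
  rw [Nat.card_eq_fintype_card, Fintype.card_subtype, edg]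

theorem edg_diag_even (ω : Omega N) (u : Fin N) : Even (#(edg ω u u)) := by
  have h : ∑ a ∈ edg ω u u, (1 : ZMod 2) = 0 := by
    apply Finset.sum_involution (fun a _ => ω.val a)
    · intro a _
      decide
    · intro a _ _
      exact om_ne ω a
    · intro a ha
      rw [mem_edg] at ha ⊢
      rw [om_inv]
      exact ⟨ha.2, ha.1⟩
    · intro a _
      exact om_inv ω a
  rw [Finset.sum_const, nsmul_eq_mul, mul_one] at h
  exact (ZMod.natCast_eq_zero_iff_even).1 h

theorem edg_card_le (ω : Omega N) (u v : Fin N) : #(edg ω u v) ≤ 3 := by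
  have : #(edg ω u v) ≤ #(range 3) := by
    apply card_le_card_of_injOn (fun a => a.val % 3)
    · intro a _
      simp only [mem_coe, mem_range]
      omega
    · intro a ha b hb h
      rw [mem_coe, mem_edg] at ha hb
      exact blk_mod_ext (ha.1.trans hb.1.symm) h
  simpa using this

theorem edg_card_eq (ω : Omega N) (σ : Equiv.Perm (Fin N))
    (h : ∀ u v, mult ω (σ u) (σ v) = mult ω u v) (u v : Fin N) :
    #(edg ω u v) = #(edg ω (σ u) (σ v)) := by
  have h1 := h u v
  unfold mult at h1
  by_cases huv : u = v
  · subst huv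
    simp only [if_true] at h1
    rw [card_edg, card_edg] at h1
    have e1 := edg_diag_even ω u
    have e2 := edg_diag_even ω (σ u)
    obtain ⟨x, hx⟩ := e1
    obtain ⟨y, hy⟩ := e2
    omega
  · have : σ u ≠ σ v := fun h => huv (σ.injective h)
    rw [if_neg this, if_neg huv, card_edg, card_edg] at h1
    exact h1.symm

theorem exists_lift (ω : Omega N) (σ : Equiv.Perm (Fin N))
    (h : ∀ u v, mult ω (σ u) (σ v) = mult ω u v) :
    ∃ ρ : Equiv.Perm (Fin (3 * N)), (∀ a, blk (ρ a) = σ (blk a)) ∧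
      ∀ a, ω.val (ρ a) = ρ (ω.val a) := by
  have hφ : ∀ u v, ∃ f : Fin (3 * N) → Fin (3 * N),
      (∀ a ∈ edg ω u v, f a ∈ edg ω (σ u) (σ v)) ∧
      (∀ a ∈ edg ω u v, ∀ b ∈ edg ω u v, f a = f b → a = b) := by
    intro u v
    let e := Finset.equivOfCardEq (edg_card_eq ω σ h u v)
    refine ⟨fun a => if ha : a ∈ edg ω u v then (e ⟨a, ha⟩).val else a, ?_, ?_⟩
    · intro a ha
      simp only [ha, dif_pos]
      exact (e ⟨a, ha⟩).property
    · intro a ha b hb hab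
      simp only [ha, hb, dif_pos] at hab
      have := e.injective (Subtype.ext hab)
      exact congrArg Subtype.val this
  choose φ hφ1 hφ2 using hφ
  have hself : ∀ a, a ∈ edg ω (blk a) (blk (ω.val a)) := fun a => mem_edg.2 ⟨rfl, rfl⟩
  have hself' : ∀ a, ω.val a ∈ edg ω (blk (ω.val a)) (blk a) := fun a =>
    mem_edg.2 ⟨rfl, by rw [om_inv]⟩
  have hflip : ∀ {a u v}, a ∈ edg ω u v → ω.val a ∈ edg ω v u := by
    intro a u v ha
    rw [mem_edg] at ha ⊢
    rw [om_inv]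
    exact ⟨ha.2, ha.1⟩
  let F : Fin (3 * N) → Fin (3 * N) := fun a =>
    if blk a ≤ blk (ω.val a) then φ (blk a) (blk (ω.val a)) a
    else ω.val (φ (blk (ω.val a)) (blk a) (ω.val a))
  have hFmem : ∀ a, F a ∈ edg ω (σ (blk a)) (σ (blk (ω.val a))) := by
    intro a
    by_cases hle : blk a ≤ blk (ω.val a)
    · simp only [F, if_pos hle]
      exact hφ1 _ _ _ (hself a)
    · simp only [F, if_neg hle]
      exact hflip (hφ1 _ _ _ (hself' a))
  have hFinj : Function.Injective F := by
    intro a b hab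
    have h1 := mem_edg.1 (hFmem a)
    have h2 := mem_edg.1 (hFmem b)
    rw [hab] at h1
    have e1 : blk a = blk b := σ.injective (h1.1.symm.trans h2.1)
    have e2 : blk (ω.val a) = blk (ω.val b) := σ.injective (h1.2.symm.trans h2.2)
    have ha := hself a
    have ha' := hself' a
    have hb := hself b
    have hb' := hself' b
    simp only [F] at hab
    rw [e1, e2] at hab ha ha'
    by_cases hle : blk b ≤ blk (ω.val b)
    · rw [if_pos hle, if_pos hle] at hab
      exact hφ2 _ _ _ ha _ hb hab
    · rw [if_neg hle, if_neg hle] at hab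
      have := hφ2 _ _ _ ha' _ hb' (ω.val.injective hab)
      exact ω.val.injective this
  refine ⟨Equiv.ofBijective F (Finite.injective_iff_bijective.1 hFinj), ?_, ?_⟩
  · intro a
    exact (mem_edg.1 (hFmem a)).1
  · intro a
    change ω.val (F a) = F (ω.val a)
    rcases lt_trichotomy (blk a) (blk (ω.val a)) with hlt | heq | hgt
    · simp only [F, if_pos hlt.le, om_inv, if_neg (not_le.2 hlt)]
    · have m1 := hFmem a
      have m2 := hFmem (ω.val a)
      rw [om_inv, ← heq] at m2
      rw [← heq] at m1
      have m3 := hflip m1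
      by_contra hne
      have n1 : F a ≠ ω.val (F a) := fun h => om_ne ω _ h.symm
      have n2 : F a ≠ F (ω.val a) := fun h => om_ne ω a (hFinj h).symm
      have hsub : ({F a, ω.val (F a), F (ω.val a)} : Finset _) ⊆
          edg ω (σ (blk a)) (σ (blk a)) := by
        intro x hx
        simp only [mem_insert, mem_singleton] at hx
        rcases hx with rfl | rfl | rfl
        · exact m1
        · exact m3
        · exact m2
      have hc := card_le_card hsub
      rw [card_eq_three.2 ⟨_, _, _, n1, n2, hne, rfl⟩] at hc
      have h3 := edg_card_le ω (σ (blk a)) (σ (blk a))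
      obtain ⟨y, hy⟩ := edg_diag_even ω (σ (blk a))
      omega
    · simp only [F, if_neg (not_le.2 hgt), om_inv, if_pos hgt.le]

end CubicAut
end partTwo


section partThree
open scoped Classical
open Finset

namespace CubicAut

variable {N : ℕ}

/-- `ω` is compatible with the permutation `ρ` of the half-edges ovr `S`. -/
def Cpt (S : Finset (Fin N)) (ρ : Equiv.Perm (Fin (3 * N))) (ω : Omega N) : Prop :=
  ∀ a, blk a ∈ S → (blk (ω.val a) ∈ S → ω.val (ρ a) = ρ (ω.val a)) ∧
    (blk (ω.val a) ∉ S → blk (ω.val (ρ a)) = blk (ω.val a))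

/-- Forward orbit. -/
noncomputable def orb (ρ : Equiv.Perm (Fin (3 * N))) (a : Fin (3 * N)) : Finset (Fin (3 * N)) :=
  univ.filter (fun b => ∃ k : ℕ, (ρ ^ k) a = b)

theorem mem_orb {ρ : Equiv.Perm (Fin (3 * N))} {a b : Fin (3 * N)} :
    b ∈ orb ρ a ↔ ∃ k : ℕ, (ρ ^ k) a = b := by simp [orb]

theorem self_mem_orb (ρ : Equiv.Perm (Fin (3 * N))) (a : Fin (3 * N)) : a ∈ orb ρ a :=
  mem_orb.2 ⟨0, rfl⟩

theorem orb_closed {ρ : Equiv.Perm (Fin (3 * N))} {a b : Fin (3 * N)} (h : b ∈ orb ρ a) :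
    ρ b ∈ orb ρ a := by
  obtain ⟨k, rfl⟩ := mem_orb.1 h
  exact mem_orb.2 ⟨k + 1, by rw [pow_succ', Equiv.Perm.mul_apply]⟩

theorem back_closed {ρ : Equiv.Perm (Fin (3 * N))} (C : Finset (Fin (3 * N)))
    (h : ∀ x ∈ C, ρ x ∈ C) {x : Fin (3 * N)} (hx : ρ x ∈ C) : x ∈ C := by
  have himg : C.image ρ = C := by
    apply eq_of_subset_of_card_le
    · intro y hy
      obtain ⟨x, hx, rfl⟩ := mem_image.1 hy
      exact h x hx
    · rw [card_image_of_injective _ ρ.injective]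
  rw [← himg] at hx
  obtain ⟨y, hy, hyx⟩ := mem_image.1 hx
  rwa [← ρ.injective hyx]

theorem back_closed_pow {ρ : Equiv.Perm (Fin (3 * N))} (C : Finset (Fin (3 * N)))
    (h : ∀ x ∈ C, ρ x ∈ C) {x : Fin (3 * N)} (k : ℕ) (hx : (ρ ^ k) x ∈ C) : x ∈ C := by
  induction k with
  | zero => exact hx
  | succ k ih =>
    rw [pow_succ', Equiv.Perm.mul_apply] at hx
    exact ih (back_closed C h hx)

theorem le_card_orb {ρ : Equiv.Perm (Fin (3 * N))} {a : Fin (3 * N)} {p : ℕ}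
    (h : ∀ k, 0 < k → k < p → (ρ ^ k) a ≠ a) : p ≤ #(orb ρ a) := by
  have hlt : ∀ i j, i < j → j < p → (ρ ^ i) a ≠ (ρ ^ j) a := by
    intro i j hij hj heq
    apply h (j - i) (by omega) (by omega)
    apply (ρ ^ i).injective
    rw [← Equiv.Perm.mul_apply, ← pow_add, heq]
    congr 2
    omega
  have : #(range p) ≤ #(orb ρ a) := by
    apply card_le_card_of_injOn (fun k => (ρ ^ k) a)
    · intro k _
      exact mem_coe.2 (mem_orb.2 ⟨k, rfl⟩)
    · intro i hi j hj hij
      simp only [coe_range, Set.mem_Iio] at hi hj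
      rcases lt_trichotomy i j with h1 | h1 | h1
      · exact absurd hij (hlt i j h1 hj)
      · exact h1
      · exact absurd hij.symm (hlt j i h1 hi)
  simpa using this

theorem class_bound {K : Type*} [DecidableEq K] (X : Finset (Omega N)) (f : Omega N → K) (T : Finset K)
    (hf : ∀ ω ∈ X, f ω ∈ T) (β : ℝ) (hβ0 : 0 ≤ β)
    (hβ : ∀ ω₁ ∈ X, (#(X.filter (fun ω => f ω = f ω₁)) : ℝ) ≤ β) :
    (#X : ℝ) ≤ #T * β := by
  rw [card_eq_sum_card_fiberwise hf]
  push_cast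
  rw [← nsmul_eq_mul]
  apply sum_le_card_nsmul
  intro k _
  rcases (X.filter (fun ω => f ω = k)).eq_empty_or_nonempty with h | ⟨ω₁, h⟩
  · rw [h]
    simpa using hβ0
  · rw [mem_filter] at h
    obtain ⟨h1, rfl⟩ := h
    exact hβ ω₁ h1

theorem cpt_in {S : Finset (Fin N)} {ρ : Equiv.Perm (Fin (3 * N))} {ω : Omega N}
    (hρ : ∀ a, blk a ∈ S → blk (ρ a) ∈ S) (h : Cpt S ρ ω) {a : Fin (3 * N)} (ha : blk a ∈ S)
    (hωa : blk (ω.val a) ∈ S) (k : ℕ) :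
    blk ((ρ ^ k) a) ∈ S ∧ blk ((ρ ^ k) (ω.val a)) ∈ S ∧
      ω.val ((ρ ^ k) a) = (ρ ^ k) (ω.val a) := by
  induction k with
  | zero => exact ⟨ha, hωa, rfl⟩
  | succ k ih =>
    obtain ⟨h1, h2, h3⟩ := ih
    simp only [pow_succ', Equiv.Perm.mul_apply]
    refine ⟨hρ _ h1, hρ _ h2, ?_⟩
    rw [← h3]
    exact (h _ h1).1 (by rw [h3]; exact h2)

theorem cpt_out {S : Finset (Fin N)} {ρ : Equiv.Perm (Fin (3 * N))} {ω : Omega N}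
    (hρ : ∀ a, blk a ∈ S → blk (ρ a) ∈ S) (h : Cpt S ρ ω) {a : Fin (3 * N)} (ha : blk a ∈ S)
    (hωa : blk (ω.val a) ∉ S) (k : ℕ) :
    blk ((ρ ^ k) a) ∈ S ∧ blk (ω.val ((ρ ^ k) a)) = blk (ω.val a) := by
  induction k with
  | zero => exact ⟨ha, rfl⟩
  | succ k ih =>
    obtain ⟨h1, h2⟩ := ih
    simp only [pow_succ', Equiv.Perm.mul_apply]
    refine ⟨hρ _ h1, ?_⟩
    rw [← h2]
    exact (h _ h1).2 (by rw [h2]; exact hωa)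

/-- Half-edges ovr `S`. -/
noncomputable def ovr (S : Finset (Fin N)) : Finset (Fin (3 * N)) := univ.filter (fun a => blk a ∈ S)

theorem mem_ovr {S : Finset (Fin N)} {a : Fin (3 * N)} : a ∈ ovr S ↔ blk a ∈ S := by simp [ovr]

theorem card_ovr_le (S : Finset (Fin N)) : #(ovr S) ≤ 3 * #S := by
  have : #(ovr S) ≤ #(S ×ˢ range 3) := by
    apply card_le_card_of_injOn (fun a => (blk a, a.val % 3))
    · intro a ha
      simp only [mem_coe, mem_product, mem_range]
      exact ⟨mem_ovr.1 (mem_coe.1 ha), by omega⟩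
    · intro a _ b _ h
      simp only [Prod.mk.injEq] at h
      exact blk_mod_ext h.1 h.2
  rw [card_product, card_range] at this
  omega

theorem sdiff_sdiff_left_eq (A B C : Finset (Fin (3 * N))) : (A \ B) \ C = A \ (B ∪ C) := by
  ext x
  simp only [Finset.mem_sdiff, Finset.mem_union]
  tauto

theorem core (hN : Even N) (hN0 : 0 < N) (S : Finset (Fin N)) (ρ : Equiv.Perm (Fin (3 * N)))
    (p : ℕ) (hρ : ∀ a, blk a ∈ S → blk (ρ a) ∈ S)
    (hlen : ∀ a, blk a ∈ S → ∀ k, 0 < k → k < p → (ρ ^ k) a ≠ a)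
    (q z : ℝ) (hq : q = Real.sqrt (2 / N)) (hz : 0 < z)
    (h1 : ∀ L : ℕ, p ≤ L → (L : ℝ) * q ^ L ≤ 1 / 3 * z ^ L)
    (h2 : ∀ L : ℕ, p ≤ L → (3 * #S : ℝ) * q ^ (2 * L) ≤ 1 / 3 * z ^ (2 * L))
    (h3 : ∀ L : ℕ, p ≤ L → (N * 3 ^ L : ℝ) * q ^ (2 * L) ≤ 1 / 3 * z ^ L)
    (m : ℕ) : ∀ (ω₀ : Omega N) (D : Finset (Fin (3 * N))), #(ovr S \ D) ≤ m →
      (∀ a ∈ D, ω₀.val a ∈ D) → (∀ a ∈ D, blk a ∈ S → ρ a ∈ D) →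
      (#((agr ω₀ D).filter (Cpt S ρ)) : ℝ) ≤
        Fintype.card (Omega N) * (q ^ #D * z ^ #(ovr S \ D)) := by
  have hq0 : 0 ≤ q := by rw [hq]; positivity
  have base : ∀ (ω₀ : Omega N) (D : Finset (Fin (3 * N))), #(ovr S \ D) = 0 →
      (∀ a ∈ D, ω₀.val a ∈ D) → (#((agr ω₀ D).filter (Cpt S ρ)) : ℝ) ≤
        Fintype.card (Omega N) * (q ^ #D * z ^ #(ovr S \ D)) := by
    intro ω₀ D hD hcl
    rw [hD, pow_zero, mul_one, hq]
    refine le_trans ?_ (agr_bound hN hN0 ω₀ D hcl)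
    exact_mod_cast card_filter_le _ _
  induction m with
  | zero =>
    intro ω₀ D hm hcl _
    exact base ω₀ D (by omega) hcl
  | succ m ih =>
    intro ω₀ D hm hcl hDρ
    rcases (ovr S \ D).eq_empty_or_nonempty with hR | ⟨a, ha⟩
    · exact base ω₀ D (by rw [hR]; rfl) hcl
    rw [Finset.mem_sdiff, mem_ovr] at ha
    obtain ⟨haS, haD⟩ := ha
    set C := orb ρ a with hC
    set L := #C with hL
    have hpL : p ≤ L := le_card_orb (hlen a haS)
    have hL1 : 1 ≤ L := card_pos.2 ⟨a, self_mem_orb ρ a⟩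
    have hCS : ∀ x ∈ C, blk x ∈ S := by
      intro x hx
      obtain ⟨k, rfl⟩ := mem_orb.1 hx
      induction k with
      | zero => exact haS
      | succ k ihk =>
        rw [pow_succ', Equiv.Perm.mul_apply]
        exact hρ _ (ihk (mem_orb.2 ⟨k, rfl⟩))
    have hCD : ∀ x ∈ C, x ∉ D := by
      intro x hx hxD
      obtain ⟨k, rfl⟩ := mem_orb.1 hx
      have : a ∈ D ∩ ovr S := by
        apply back_closed_pow (ρ := ρ) (D ∩ ovr S) _ k
        · rw [mem_inter, mem_ovr]
          exact ⟨hxD, hCS _ hx⟩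
        · intro y hy
          rw [mem_inter, mem_ovr] at hy ⊢
          exact ⟨hDρ y hy.1 hy.2, hρ y hy.2⟩
      exact haD (mem_inter.1 this).1
    set R := ovr S \ D with hRdef
    have hCR : C ⊆ R := by
      intro x hx
      rw [hRdef, Finset.mem_sdiff, mem_ovr]
      exact ⟨hCS x hx, hCD x hx⟩
    set X := (agr ω₀ D).filter (Cpt S ρ) with hX
    have hXmem : ∀ ω ∈ X, (∀ d ∈ D, ω.val d = ω₀.val d) ∧ Cpt S ρ ω := by
      intro ω h
      rw [hX, mem_filter, mem_agr] at h
      exact h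
    have hXD : ∀ ω ∈ X, ∀ x, ω.val x ∈ D → x ∈ D := by
      intro ω h x hx
      have := hcl _ hx
      rw [← (hXmem ω h).1 _ hx, om_inv] at this
      exact this
    -- the general fibre estimate
    have fibre : ∀ ω₁ ∈ X, ∀ Y : Finset (Omega N),
        (∀ ω ∈ Y, ω ∈ X ∧ ∀ c ∈ C, ω.val c = ω₁.val c) →
        (∀ x ∈ C.image ω₁.val, blk x ∈ S → ρ x ∈ C.image ω₁.val) →
        (#Y : ℝ) ≤ Fintype.card (Omega N) *
          (q ^ #(D ∪ (C ∪ C.image ω₁.val)) * z ^ #(ovr S \ (D ∪ (C ∪ C.image ω₁.val)))) := by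
      intro ω₁ hω₁ Y hY hcl1
      have hstep := ih ω₁ (D ∪ (C ∪ C.image ω₁.val)) ?_ ?_ ?_
      · refine le_trans ?_ hstep
        norm_cast
        apply card_le_card
        intro ω hω
        obtain ⟨hωX, hag⟩ := hY ω hω
        rw [mem_filter, mem_agr]
        refine ⟨?_, (hXmem ω hωX).2⟩
        intro x hx
        rw [mem_union, mem_union] at hx
        rcases hx with hx | hx | hx
        · rw [(hXmem ω hωX).1 x hx, (hXmem ω₁ hω₁).1 x hx]
        · exact hag x hx
        · obtain ⟨c, hc, rfl⟩ := mem_image.1 hx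
          rw [om_inv, ← hag c hc, om_inv]
      · have : ovr S \ (D ∪ (C ∪ C.image ω₁.val)) ⊂ R := by
          rw [ssubset_iff_of_subset]
          · refine ⟨a, hCR (self_mem_orb ρ a), ?_⟩
            simp only [Finset.mem_sdiff, mem_union, not_and, not_not]
            exact fun _ => Or.inr (Or.inl (self_mem_orb ρ a))
          · exact sdiff_subset_sdiff le_rfl subset_union_left
        have := card_lt_card this
        omega
      · intro x hx
        simp only [mem_union] at hx ⊢
        rcases hx with hx | hx | hx
        · left
          rw [(hXmem ω₁ hω₁).1 x hx]
          exact hcl x hx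
        · right; right
          exact mem_image_of_mem _ hx
        · obtain ⟨c, hc, rfl⟩ := mem_image.1 hx
          right; left
          rw [om_inv]
          exact hc
      · intro x hx hxS
        simp only [mem_union] at hx ⊢
        rcases hx with hx | hx | hx
        · exact Or.inl (hDρ x hx hxS)
        · exact Or.inr (Or.inl (orb_closed hx))
        · exact Or.inr (Or.inr (hcl1 x hx hxS))
    have himgD : ∀ ω₁ ∈ X, ∀ x ∈ C.image ω₁.val, x ∉ D := by
      intro ω₁ hω₁ x hx hxD
      obtain ⟨c, hc, rfl⟩ := mem_image.1 hx
      exact hCD c hc (hXD ω₁ hω₁ c hxD)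
    have himgcard : ∀ ω₁ : Omega N, #(C.image ω₁.val) = L := by
      intro ω₁
      rw [card_image_of_injective _ ω₁.val.injective]
    have himgin : ∀ ω₁ ∈ X, blk (ω₁.val a) ∈ S → ∀ x ∈ C.image ω₁.val, blk x ∈ S ∧
        ρ x ∈ C.image ω₁.val := by
      intro ω₁ hω₁ hin x hx
      obtain ⟨c, hc, rfl⟩ := mem_image.1 hx
      obtain ⟨k, rfl⟩ := mem_orb.1 hc
      obtain ⟨e1, e2, e3⟩ := cpt_in hρ (hXmem ω₁ hω₁).2 haS hin k
      obtain ⟨f1, f2, f3⟩ := cpt_in hρ (hXmem ω₁ hω₁).2 haS hin (k + 1)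
      refine ⟨by rw [e3]; exact e2, ?_⟩
      rw [mem_image]
      refine ⟨_, mem_orb.2 ⟨k + 1, rfl⟩, ?_⟩
      rw [f3, e3, pow_succ', Equiv.Perm.mul_apply]
    set A : ℝ := (Fintype.card (Omega N) : ℝ) with hA
    have hA0 : 0 ≤ A := by rw [hA]; positivity
    set X1 := X.filter (fun ω => ω.val a ∈ C) with hX1
    set X2 := X.filter (fun ω => ω.val a ∉ C ∧ blk (ω.val a) ∈ S) with hX2
    set X3 := X.filter (fun ω => blk (ω.val a) ∉ S) with hX3
    have hLR : L ≤ #R := card_le_card hCR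
    have hzR : z ^ #R = z ^ (#R - L) * z ^ L := by rw [← pow_add]; congr 1; omega
    have b1 : (#X1 : ℝ) ≤ 1 / 3 * (A * (q ^ #D * z ^ #R)) := by
      have hb := class_bound X1 (fun ω => ω.val a) C (fun ω h => (mem_filter.1 h).2)
        (A * (q ^ (#D + L) * z ^ (#R - L))) (by positivity) ?_
      · refine hb.trans ?_
        have := h1 L hpL
        calc (L : ℝ) * (A * (q ^ (#D + L) * z ^ (#R - L)))
            = (A * (q ^ #D * z ^ (#R - L))) * (L * q ^ L) := by rw [pow_add]; ring
          _ ≤ (A * (q ^ #D * z ^ (#R - L))) * (1 / 3 * z ^ L) := by gcongr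
          _ = _ := by rw [hzR]; ring
      · intro ω₁ hω₁
        obtain ⟨hω₁X, hω₁C⟩ := mem_filter.1 hω₁
        have hin : blk (ω₁.val a) ∈ S := hCS _ hω₁C
        have hf := fibre ω₁ hω₁X (X1.filter (fun ω => ω.val a = ω₁.val a)) ?_
          (fun x hx _ => (himgin ω₁ hω₁X hin x hx).2)
        · have hsub : C ∪ C.image ω₁.val = C := by
            rw [union_eq_left]
            intro x hx
            obtain ⟨c, hc, rfl⟩ := mem_image.1 hx
            obtain ⟨k, rfl⟩ := mem_orb.1 hc
            rw [(cpt_in hρ (hXmem ω₁ hω₁X).2 haS hin k).2.2]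
            obtain ⟨j, hj⟩ := mem_orb.1 hω₁C
            rw [← hj]
            exact mem_orb.2 ⟨k + j, by rw [pow_add, Equiv.Perm.mul_apply]⟩
          rw [hsub] at hf
          have c1 : #(D ∪ C) = #D + L := by
            rw [card_union_of_disjoint]
            rw [disjoint_left]
            exact fun x hx hxC => hCD x hxC hx
          have c2 : #(ovr S \ (D ∪ C)) = #R - L := by
            rw [← sdiff_sdiff_left_eq, ← hRdef, card_sdiff_of_subset hCR]
          rw [c1, c2] at hf
          exact hf
        · intro ω hω
          obtain ⟨hω1, hωa⟩ := mem_filter.1 hω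
          obtain ⟨hωX, hωC⟩ := mem_filter.1 hω1
          refine ⟨hωX, ?_⟩
          intro c hc
          obtain ⟨k, rfl⟩ := mem_orb.1 hc
          rw [(cpt_in hρ (hXmem ω hωX).2 haS (hCS _ hωC) k).2.2,
            (cpt_in hρ (hXmem ω₁ hω₁X).2 haS hin k).2.2, hωa]
    have b2 : (#X2 : ℝ) ≤ 1 / 3 * (A * (q ^ #D * z ^ #R)) := by
      rcases X2.eq_empty_or_nonempty with hemp | ⟨ω₂, hω₂⟩
      · rw [hemp, card_empty, Nat.cast_zero]
        positivity
      have hgeo : ∀ ω₁ ∈ X2, (∀ x ∈ C.image ω₁.val, x ∈ R) ∧ Disjoint C (C.image ω₁.val) := by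
        intro ω₁ hω₁
        obtain ⟨hω₁X, hω₁C, hin⟩ := mem_filter.1 hω₁
        refine ⟨?_, ?_⟩
        · intro x hx
          rw [hRdef, Finset.mem_sdiff, mem_ovr]
          exact ⟨(himgin ω₁ hω₁X hin x hx).1, himgD ω₁ hω₁X x hx⟩
        · rw [disjoint_right]
          intro x hx hxC
          obtain ⟨c, hc, rfl⟩ := mem_image.1 hx
          obtain ⟨k, rfl⟩ := mem_orb.1 hc
          rw [(cpt_in hρ (hXmem ω₁ hω₁X).2 haS hin k).2.2] at hxC
          exact hω₁C (back_closed_pow C (fun x hx => orb_closed hx) k hxC)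
      have hcardU : ∀ ω₁ ∈ X2, #(C ∪ C.image ω₁.val) = 2 * L := by
        intro ω₁ hω₁
        rw [card_union_of_disjoint (hgeo ω₁ hω₁).2, himgcard]
        omega
      have hUR : ∀ ω₁ ∈ X2, C ∪ C.image ω₁.val ⊆ R := by
        intro ω₁ hω₁ x hx
        rcases mem_union.1 hx with h | h
        · exact hCR h
        · exact (hgeo ω₁ hω₁).1 x h
      have hL2R : 2 * L ≤ #R := by
        rw [← hcardU ω₂ hω₂]
        exact card_le_card (hUR ω₂ hω₂)
      have hzR2 : z ^ #R = z ^ (#R - 2 * L) * z ^ (2 * L) := by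
        rw [← pow_add]; congr 1; omega
      have hb := class_bound X2 (fun ω => ω.val a) R ?_
        (A * (q ^ (#D + 2 * L) * z ^ (#R - 2 * L))) (by positivity) ?_
      · refine hb.trans ?_
        have h2' := h2 L hpL
        have hRs : (#R : ℝ) ≤ 3 * #S := by
          have : #R ≤ 3 * #S := (card_le_card sdiff_subset).trans (card_ovr_le S)
          exact_mod_cast this
        calc (#R : ℝ) * (A * (q ^ (#D + 2 * L) * z ^ (#R - 2 * L)))
            = (A * (q ^ #D * z ^ (#R - 2 * L))) * (#R * q ^ (2 * L)) := by rw [pow_add]; ring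
          _ ≤ (A * (q ^ #D * z ^ (#R - 2 * L))) * ((3 * #S) * q ^ (2 * L)) := by gcongr
          _ ≤ (A * (q ^ #D * z ^ (#R - 2 * L))) * (1 / 3 * z ^ (2 * L)) := by gcongr
          _ = _ := by rw [hzR2]; ring
      · intro ω₁ hω₁
        exact (hgeo ω₁ hω₁).1 _ (mem_image_of_mem _ (self_mem_orb ρ a))
      · intro ω₁ hω₁
        obtain ⟨hω₁X, hω₁C, hin⟩ := mem_filter.1 hω₁
        have hf := fibre ω₁ hω₁X (X2.filter (fun ω => ω.val a = ω₁.val a)) ?_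
          (fun x hx _ => (himgin ω₁ hω₁X hin x hx).2)
        · have c1 : #(D ∪ (C ∪ C.image ω₁.val)) = #D + 2 * L := by
            rw [card_union_of_disjoint, hcardU ω₁ hω₁]
            rw [disjoint_left]
            exact fun x hx hxC => (Finset.mem_sdiff.1 (hUR ω₁ hω₁ hxC)).2 hx
          have c2 : #(ovr S \ (D ∪ (C ∪ C.image ω₁.val))) = #R - 2 * L := by
            rw [← sdiff_sdiff_left_eq, ← hRdef, card_sdiff_of_subset (hUR ω₁ hω₁), hcardU ω₁ hω₁]
          rw [c1, c2] at hf
          exact hf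
        · intro ω hω
          obtain ⟨hω1, hωa⟩ := mem_filter.1 hω
          obtain ⟨hωX, hωC, hωS⟩ := mem_filter.1 hω1
          refine ⟨hωX, ?_⟩
          intro c hc
          obtain ⟨k, rfl⟩ := mem_orb.1 hc
          rw [(cpt_in hρ (hXmem ω hωX).2 haS hωS k).2.2,
            (cpt_in hρ (hXmem ω₁ hω₁X).2 haS hin k).2.2, hωa]
    have b3 : (#X3 : ℝ) ≤ 1 / 3 * (A * (q ^ #D * z ^ #R)) := by
      have hb := class_bound X3
        (fun ω => (blk (ω.val a), fun c : C => (⟨(ω.val c.val).val % 3, by omega⟩ : Fin 3)))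
        (univ : Finset (Fin N × (C → Fin 3))) (fun _ _ => mem_univ _)
        (A * (q ^ (#D + 2 * L) * z ^ (#R - L))) (by positivity) ?_
      · refine hb.trans ?_
        have h3' := h3 L hpL
        have hcu : (#(univ : Finset (Fin N × (C → Fin 3))) : ℝ) = N * 3 ^ L := by
          rw [card_univ, Fintype.card_prod, Fintype.card_fun, Fintype.card_fin, Fintype.card_fin,
            Fintype.card_coe]
          push_cast
          rfl
        rw [hcu]
        calc (N * 3 ^ L : ℝ) * (A * (q ^ (#D + 2 * L) * z ^ (#R - L)))
            = (A * (q ^ #D * z ^ (#R - L))) * (N * 3 ^ L * q ^ (2 * L)) := by rw [pow_add]; ring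
          _ ≤ (A * (q ^ #D * z ^ (#R - L))) * (1 / 3 * z ^ L) := by gcongr
          _ = _ := by rw [hzR]; ring
      · intro ω₁ hω₁
        obtain ⟨hω₁X, hout⟩ := mem_filter.1 hω₁
        have himgout : ∀ x ∈ C.image ω₁.val, blk x ∉ S := by
          intro x hx
          obtain ⟨c, hc, rfl⟩ := mem_image.1 hx
          obtain ⟨k, rfl⟩ := mem_orb.1 hc
          rw [(cpt_out hρ (hXmem ω₁ hω₁X).2 haS hout k).2]
          exact hout
        have hdis : Disjoint C (C.image ω₁.val) := by
          rw [disjoint_left]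
          exact fun x hx hx' => himgout x hx' (hCS x hx)
        refine le_trans (fibre ω₁ hω₁X _ ?_
          (fun x hx hxS => absurd hxS (himgout x hx))) ?_
        · intro ω hω
          obtain ⟨hω1, hωa⟩ := mem_filter.1 hω
          obtain ⟨hωX, hωS⟩ := mem_filter.1 hω1
          refine ⟨hωX, ?_⟩
          intro c hc
          rw [Prod.mk.injEq] at hωa
          apply blk_mod_ext
          · obtain ⟨k, rfl⟩ := mem_orb.1 hc
            rw [(cpt_out hρ (hXmem ω hωX).2 haS hωS k).2,
              (cpt_out hρ (hXmem ω₁ hω₁X).2 haS hout k).2, hωa.1]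
          · have := congrFun hωa.2 ⟨c, hc⟩
            exact congrArg Fin.val this
        · have c1 : #(D ∪ (C ∪ C.image ω₁.val)) = #D + 2 * L := by
            rw [card_union_of_disjoint, card_union_of_disjoint hdis, himgcard]
            · omega
            · rw [disjoint_left]
              intro x hx hxC
              rcases mem_union.1 hxC with h | h
              · exact hCD x h hx
              · exact himgD ω₁ hω₁X x h hx
          have c2 : #(ovr S \ (D ∪ (C ∪ C.image ω₁.val))) = #R - L := by
            have : ovr S \ (D ∪ (C ∪ C.image ω₁.val)) = R \ C := by
              ext x
              simp only [hRdef, Finset.mem_sdiff, mem_union, mem_ovr]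
              constructor
              · rintro ⟨e1, e2⟩
                push Not at e2
                exact ⟨⟨e1, e2.1⟩, e2.2.1⟩
              · rintro ⟨⟨e1, e2⟩, e3⟩
                refine ⟨e1, ?_⟩
                rintro (h | h | h)
                · exact e2 h
                · exact e3 h
                · exact himgout x h e1
            rw [this, card_sdiff_of_subset hCR]
          rw [c1, c2]
    have hcover : X ⊆ X1 ∪ (X2 ∪ X3) := by
      intro ω hω
      simp only [hX1, hX2, hX3, mem_union, mem_filter]
      tauto
    have hcc : #X ≤ #X1 + (#X2 + #X3) :=
      (card_le_card hcover).trans ((card_union_le _ _).trans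
        (Nat.add_le_add_left (card_union_le _ _) _))
    have hccR : (#X : ℝ) ≤ #X1 + (#X2 + #X3) := by exact_mod_cast hcc
    linarith

end CubicAut
end partThree


section partFour
open scoped Classical
open Finset

namespace CubicAut

variable {N : ℕ}

/-- `σ` preserves all multiplicities of `ω`. -/
def IsAut (ω : Omega N) (σ : Equiv.Perm (Fin N)) : Prop :=
  ∀ u v, mult ω (σ u) (σ v) = mult ω u v

theorem IsAut.pow {ω : Omega N} {σ : Equiv.Perm (Fin N)} (h : IsAut ω σ) (k : ℕ) :
    IsAut ω (σ ^ k) := by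
  induction k with
  | zero => intro u v; rfl
  | succ k ih =>
    intro u v
    rw [pow_succ', Equiv.Perm.mul_apply, Equiv.Perm.mul_apply, h, ih]

theorem card_ovr (S : Finset (Fin N)) : #(ovr S) = 3 * #S := by
  apply le_antisymm (card_ovr_le S)
  have : #(S ×ˢ (univ : Finset (Fin 3))) ≤ #(ovr S) := by
    apply card_le_card_of_injOn
      (fun x => (⟨3 * x.1.val + x.2.val, by have := x.1.isLt; have := x.2.isLt; omega⟩ : Fin (3 * N)))
    · rintro ⟨u, i⟩ hx
      simp only [coe_product, Set.mem_prod, mem_coe] at hx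
      rw [mem_coe, mem_ovr]
      convert! hx.1 using 1
      apply Fin.ext
      have := i.isLt
      simp only [blk]
      omega
    · rintro ⟨u, i⟩ _ ⟨v, j⟩ _ h
      have h' := congrArg Fin.val h
      simp only at h'
      have := i.isLt
      have := j.isLt
      rw [Prod.mk.injEq]
      constructor
      · apply Fin.ext; omega
      · apply Fin.ext; omega
  rw [card_product, card_univ, Fintype.card_fin] at this
  omega

/-- Lifts of `σ` which are trivial off the support of `σ`. -/
noncomputable def lifts (σ : Equiv.Perm (Fin N)) : Finset (Equiv.Perm (Fin (3 * N))) :=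
  univ.filter (fun ρ => (∀ a, blk (ρ a) = σ (blk a)) ∧ ∀ a, blk a ∉ σ.support → ρ a = a)

theorem card_lifts (σ : Equiv.Perm (Fin N)) : #(lifts σ) ≤ 27 ^ #σ.support := by
  have h : #(lifts σ) ≤ #(univ : Finset (ovr σ.support → Fin 3)) := by
    apply card_le_card_of_injOn
      (fun ρ => fun a : ovr σ.support => (⟨(ρ a.val).val % 3, by omega⟩ : Fin 3))
    · intro _ _
      exact mem_coe.2 (mem_univ _)
    · intro ρ hρ ρ' hρ' h
      simp only [lifts, mem_coe, mem_filter, mem_univ, true_and] at hρ hρ'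
      ext1 a
      by_cases ha : blk a ∈ σ.support
      · apply blk_mod_ext
        · rw [hρ.1, hρ'.1]
        · exact congrArg Fin.val (congrFun h ⟨a, mem_ovr.2 ha⟩)
      · rw [hρ.2 a ha, hρ'.2 a ha]
  rw [card_univ, Fintype.card_fun, Fintype.card_fin, Fintype.card_coe, card_ovr, pow_mul] at h
  exact h

theorem exists_lift_cpt {ω : Omega N} {σ : Equiv.Perm (Fin N)} (h : IsAut ω σ) :
    ∃ ρ ∈ lifts σ, Cpt σ.support ρ ω := by
  obtain ⟨ρ₀, h1, h2⟩ := exists_lift ω σ h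
  have hiff : ∀ a, blk (ρ₀ a) ∈ σ.support ↔ blk a ∈ σ.support := by
    intro a
    rw [h1, Equiv.Perm.apply_mem_support]
  set ρ : Equiv.Perm (Fin (3 * N)) :=
    Equiv.Perm.ofSubtype (ρ₀.subtypePerm (p := fun a => blk a ∈ σ.support) hiff) with hρ
  have hin : ∀ a, blk a ∈ σ.support → ρ a = ρ₀ a := by
    intro a ha
    exact Equiv.Perm.ofSubtype_apply_of_mem (p := fun a => blk a ∈ σ.support)
      (ρ₀.subtypePerm (p := fun a => blk a ∈ σ.support) hiff) ha
  have hout : ∀ a, blk a ∉ σ.support → ρ a = a := by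
    intro a ha
    exact Equiv.Perm.ofSubtype_apply_of_not_mem (p := fun a => blk a ∈ σ.support)
      (ρ₀.subtypePerm (p := fun a => blk a ∈ σ.support) hiff) ha
  refine ⟨ρ, ?_, ?_⟩
  · simp only [lifts, mem_filter, mem_univ, true_and]
    refine ⟨?_, hout⟩
    intro a
    by_cases ha : blk a ∈ σ.support
    · rw [hin a ha, h1]
    · rw [hout a ha, Equiv.Perm.notMem_support.1 ha]
  · intro a ha
    refine ⟨?_, ?_⟩
    · intro hb
      rw [hin a ha, hin _ hb, h2]
    · intro hb
      rw [hin a ha, h2, h1, Equiv.Perm.notMem_support.1 hb]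

theorem count_sigma (hN : Even N) (hN0 : 0 < N) (σ : Equiv.Perm (Fin N)) (p : ℕ)
    (hper : ∀ u ∈ σ.support, ∀ k, 0 < k → k < p → (σ ^ k) u ≠ u)
    (q z : ℝ) (hq : q = Real.sqrt (2 / N)) (hz : 0 < z)
    (h1 : ∀ L : ℕ, p ≤ L → (L : ℝ) * q ^ L ≤ 1 / 3 * z ^ L)
    (h2 : ∀ L : ℕ, p ≤ L → (3 * #σ.support : ℝ) * q ^ (2 * L) ≤ 1 / 3 * z ^ (2 * L))
    (h3 : ∀ L : ℕ, p ≤ L → (N * 3 ^ L : ℝ) * q ^ (2 * L) ≤ 1 / 3 * z ^ L) :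
    (#(univ.filter (fun ω : Omega N => IsAut ω σ)) : ℝ) ≤
      Fintype.card (Omega N) * (27 ^ #σ.support * z ^ (3 * #σ.support)) := by
  have hsub : univ.filter (fun ω : Omega N => IsAut ω σ) ⊆
      (lifts σ).biUnion (fun ρ => univ.filter (Cpt σ.support ρ)) := by
    intro ω hω
    rw [mem_filter] at hω
    obtain ⟨ρ, hρ, hc⟩ := exists_lift_cpt hω.2
    rw [mem_biUnion]
    exact ⟨ρ, hρ, by simp [hc]⟩
  have hone : ∀ ρ ∈ lifts σ, (#(univ.filter (Cpt σ.support ρ)) : ℝ) ≤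
      Fintype.card (Omega N) * z ^ (3 * #σ.support) := by
    intro ρ hρ
    simp only [lifts, mem_filter, mem_univ, true_and] at hρ
    rcases isEmpty_or_nonempty (Omega N) with hE | ⟨⟨ω₀⟩⟩
    · simp
    have hpow : ∀ k a, blk ((ρ ^ k) a) = (σ ^ k) (blk a) := by
      intro k a
      induction k with
      | zero => rfl
      | succ k ih =>
        rw [pow_succ', pow_succ', Equiv.Perm.mul_apply, Equiv.Perm.mul_apply, hρ.1, ih]
    have := core hN hN0 σ.support ρ p
      (fun a ha => by rw [hρ.1, Equiv.Perm.apply_mem_support]; exact ha)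
      (fun a ha k hk hkp heq => hper _ ha k hk hkp (by rw [← hpow, heq]))
      q z hq hz h1 h2 h3 _ ω₀ ∅ le_rfl (by simp) (by simp)
    rw [sdiff_empty, card_ovr, card_empty, pow_zero, one_mul] at this
    have hag : agr ω₀ ∅ = univ := by
      ext ω
      simp [mem_agr]
    rw [hag] at this
    exact this
  calc (#(univ.filter (fun ω : Omega N => IsAut ω σ)) : ℝ)
      ≤ ((∑ ρ ∈ lifts σ, #(univ.filter (Cpt σ.support ρ)) : ℕ) : ℝ) := by
        exact_mod_cast (card_le_card hsub).trans card_biUnion_le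
    _ = ∑ ρ ∈ lifts σ, (#(univ.filter (Cpt σ.support ρ)) : ℝ) := by push_cast; rfl
    _ ≤ #(lifts σ) • (Fintype.card (Omega N) * z ^ (3 * #σ.support)) :=
        sum_le_card_nsmul _ _ _ hone
    _ = #(lifts σ) * (Fintype.card (Omega N) * z ^ (3 * #σ.support)) := by rw [nsmul_eq_mul]
    _ ≤ 27 ^ #σ.support * (Fintype.card (Omega N) * z ^ (3 * #σ.support)) := by
        gcongr
        exact_mod_cast card_lifts σ
    _ = _ := by ring

theorem numeric (hN0 : 0 < N) (p s : ℕ) (hp : 2 ≤ p) (q r : ℝ)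
    (hq : q = Real.sqrt (2 / N)) (hr : 1 ≤ r) (hrs : (r ^ p) ^ 2 = s) :
    (∀ L : ℕ, p ≤ L → (L : ℝ) * q ^ L ≤ 1 / 3 * (12 * q * r) ^ L) ∧
    (∀ L : ℕ, p ≤ L → (3 * s : ℝ) * q ^ (2 * L) ≤ 1 / 3 * (12 * q * r) ^ (2 * L)) ∧
    (∀ L : ℕ, p ≤ L → (N * 3 ^ L : ℝ) * q ^ (2 * L) ≤ 1 / 3 * (12 * q * r) ^ L) := by
  have hNR : (1 : ℝ) ≤ N := by exact_mod_cast hN0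
  have hq0 : 0 ≤ q := by rw [hq]; positivity
  have hq2 : q ^ 2 = 2 / N := by rw [hq, Real.sq_sqrt (by positivity)]
  have hqle : q ≤ 2 := by
    have : q ^ 2 ≤ 2 := by
      rw [hq2, div_le_iff₀ (by linarith)]
      linarith
    nlinarith
  refine ⟨?_, ?_, ?_⟩
  · intro L hL
    have hrL : 1 ≤ r ^ L := one_le_pow₀ hr
    have e1 : (L : ℝ) ≤ 2 ^ L := by exact_mod_cast (Nat.lt_two_pow_self).le
    have e2 : (3 : ℝ) ≤ 6 ^ L := by
      calc (3 : ℝ) ≤ 6 ^ 1 := by norm_num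
        _ ≤ 6 ^ L := pow_le_pow_right₀ (by norm_num) (by omega)
    have e3 : (12 : ℝ) ^ L = 2 ^ L * 6 ^ L := by rw [← mul_pow]; norm_num
    have e4 : (L : ℝ) ≤ 1 / 3 * 12 ^ L := by
      rw [e3]
      have : (0 : ℝ) < 2 ^ L := by positivity
      nlinarith
    calc (L : ℝ) * q ^ L ≤ (1 / 3 * 12 ^ L) * q ^ L := by gcongr
      _ = (1 / 3 * 12 ^ L) * q ^ L * 1 := by ring
      _ ≤ (1 / 3 * 12 ^ L) * q ^ L * r ^ L := by gcongr
      _ = _ := by rw [mul_pow, mul_pow]; ring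
  · intro L hL
    have e1 : (s : ℝ) ≤ r ^ (2 * L) := by
      rw [← hrs, ← pow_mul]
      exact pow_le_pow_right₀ hr (by omega)
    have e2 : (9 : ℝ) ≤ 12 ^ (2 * L) := by
      calc (9 : ℝ) ≤ 12 ^ 1 := by norm_num
        _ ≤ 12 ^ (2 * L) := pow_le_pow_right₀ (by norm_num) (by omega)
    calc (3 * s : ℝ) * q ^ (2 * L) = 1 / 3 * (9 * q ^ (2 * L) * s) := by ring
      _ ≤ 1 / 3 * (12 ^ (2 * L) * q ^ (2 * L) * r ^ (2 * L)) := by gcongr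
      _ = _ := by rw [mul_pow, mul_pow]
  · intro L hL
    have hrL : 1 ≤ r ^ L := one_le_pow₀ hr
    obtain ⟨l, rfl⟩ : ∃ l, L = l + 2 := ⟨L - 2, by omega⟩
    have e1 : (N : ℝ) * q ^ (l + 2) ≤ 1 / 3 * 4 ^ (l + 2) := by
      rw [pow_add, hq2]
      have : q ^ l ≤ 4 ^ l := by
        apply pow_le_pow_left₀ hq0
        linarith
      calc (N : ℝ) * (q ^ l * (2 / N)) = 2 * q ^ l := by field_simp
        _ ≤ 2 * 4 ^ l := by gcongr
        _ ≤ _ := by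
            rw [pow_add]
            have : (0 : ℝ) < 4 ^ l := by positivity
            nlinarith
    calc (N * 3 ^ (l + 2) : ℝ) * q ^ (2 * (l + 2))
        = 3 ^ (l + 2) * q ^ (l + 2) * (N * q ^ (l + 2)) := by rw [two_mul, pow_add q]; ring
      _ ≤ 3 ^ (l + 2) * q ^ (l + 2) * (1 / 3 * 4 ^ (l + 2)) := by gcongr
      _ = 1 / 3 * (12 ^ (l + 2) * q ^ (l + 2) * 1) := by
          rw [show (12 : ℝ) = 3 * 4 by norm_num, mul_pow (3 : ℝ)]; ring
      _ ≤ 1 / 3 * (12 ^ (l + 2) * q ^ (l + 2) * r ^ (l + 2)) := by gcongr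
      _ = _ := by rw [mul_pow, mul_pow]

/-- Permutations of prime order `p` with `c` nontrivial cycles. -/
noncomputable def prm (N p c : ℕ) : Finset (Equiv.Perm (Fin N)) :=
  univ.filter (fun σ => σ.cycleType = Multiset.replicate c p)

theorem card_prm (p c : ℕ) (hp : 2 ≤ p) (hc : 1 ≤ c) :
    (#(prm N p c) : ℝ) * ((p * c : ℕ) : ℝ) ^ c ≤ (N : ℝ) ^ (p * c) * 3 ^ c := by
  have h := Equiv.Perm.card_of_cycleType_mul_eq (α := Fin N) (Multiset.replicate c p)
  have h0 : #(prm N p c) * ((N - p * c).factorial * (p ^ c * c.factorial)) ≤ N.factorial ∧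
      (p * c ≤ N ∨ #(prm N p c) = 0) := by
    have htf : (Multiset.replicate c p).toFinset = {p} := by
      rw [Multiset.toFinset_replicate, if_neg (by omega)]
    simp only [Multiset.sum_replicate, Multiset.prod_replicate, htf, prod_singleton,
      Multiset.count_replicate_self, Fintype.card_fin, smul_eq_mul] at h
    rw [mul_comm c p] at h
    have heq : #(prm N p c) = #({g | g.cycleType = Multiset.replicate c p} : Finset (Equiv.Perm (Fin N))) := by
      unfold prm
      congr 1
    rw [heq, ← mul_assoc (N - p * c).factorial, h]
    constructor
    · split_ifs
      · exact le_rfl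
      · omega
    · by_cases hle : p * c ≤ N
      · exact Or.inl hle
      · right
        rw [if_neg (fun h => hle h.1)] at h
        have hpos : 0 < (N - p * c).factorial * p ^ c * c.factorial := by positivity
        exact (Nat.mul_eq_zero.1 h).resolve_right hpos.ne'
  rcases h0 with ⟨h1, hle | hz⟩
  · have h2 : #(prm N p c) * (p ^ c * c.factorial) ≤ N ^ (p * c) := by
      have h3 : N.factorial = (N - p * c).factorial * N.descFactorial (p * c) :=
        (Nat.factorial_mul_descFactorial hle).symm
      rw [h3] at h1
      have h4 : (N - p * c).factorial * (#(prm N p c) * (p ^ c * c.factorial)) ≤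
          (N - p * c).factorial * N.descFactorial (p * c) := by
        calc _ = #(prm N p c) * ((N - p * c).factorial * (p ^ c * c.factorial)) := by ring
          _ ≤ _ := h1
      exact (Nat.le_of_mul_le_mul_left h4 (Nat.factorial_pos _)).trans (Nat.descFactorial_le_pow _ _)
    have h5 := pow_le_desc c c le_rfl
    rw [Nat.descFactorial_self, div_pow, div_le_iff₀ (by positivity)] at h5
    have h2R : (#(prm N p c) : ℝ) * ((p : ℝ) ^ c * c.factorial) ≤ (N : ℝ) ^ (p * c) := by
      exact_mod_cast h2
    push_cast
    calc (#(prm N p c) : ℝ) * ((p : ℝ) * c) ^ c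
        = (#(prm N p c) : ℝ) * ((p : ℝ) ^ c * (c : ℝ) ^ c) := by rw [mul_pow]
      _ ≤ (#(prm N p c) : ℝ) * ((p : ℝ) ^ c * (c.factorial * 3 ^ c)) := by gcongr
      _ = ((#(prm N p c) : ℝ) * ((p : ℝ) ^ c * c.factorial)) * 3 ^ c := by ring
      _ ≤ _ := by gcongr
  · rw [hz, Nat.cast_zero, zero_mul]
    positivity

theorem prime_period {p c : ℕ} (hp : p.Prime) {σ : Equiv.Perm (Fin N)} (h : σ ∈ prm N p c)
    (u : Fin N) (hu : u ∈ σ.support) (k : ℕ) (hk : 0 < k) (hkp : k < p) : (σ ^ k) u ≠ u := by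
  intro hk1
  simp only [prm, mem_filter, mem_univ, true_and] at h
  have hpow : σ ^ p = 1 := by
    rw [← orderOf_dvd_iff_pow_eq_one, ← Equiv.Perm.lcm_cycleType, h, Multiset.lcm_dvd]
    intro b hb
    rw [Multiset.eq_of_mem_replicate hb]
  have d1 : Function.minimalPeriod σ u ∣ k := by
    rw [← Function.isPeriodicPt_iff_minimalPeriod_dvd]
    change σ^[k] u = u
    rw [← Equiv.Perm.coe_pow]
    exact hk1
  have d2 : Function.minimalPeriod σ u ∣ p := by
    rw [← Function.isPeriodicPt_iff_minimalPeriod_dvd]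
    change σ^[p] u = u
    rw [← Equiv.Perm.coe_pow, hpow]
    rfl
  have hcop : Nat.Coprime k p := Nat.Coprime.symm ((Nat.Prime.coprime_iff_not_dvd hp).2
    (fun hd => absurd (Nat.le_of_dvd hk hd) (by omega)))
  have h1 : Function.minimalPeriod σ u = 1 := Nat.eq_one_of_dvd_coprimes hcop d1 d2
  have h2 := Function.iterate_minimalPeriod (f := σ) (x := u)
  rw [h1] at h2
  exact (Equiv.Perm.mem_support.1 hu) h2

/-- The basic ratio. -/
noncomputable def theta (N : ℕ) : ℝ := 1119744 / Real.sqrt (Real.sqrt N)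

theorem count_pc (hN : Even N) (hN0 : 0 < N) (p c : ℕ) (hp : p.Prime) (hc : 1 ≤ c)
    (hpc : p * c ≤ N) :
    (#(univ.filter (fun ω : Omega N => ∃ σ ∈ prm N p c, IsAut ω σ)) : ℝ) ≤
      Fintype.card (Omega N) * theta N ^ (p * c) := by
  set s := p * c with hs
  have hp2 := hp.two_le
  have hs1 : 1 ≤ s := Nat.mul_pos hp.pos hc
  have hsR : (1 : ℝ) ≤ s := by exact_mod_cast hs1
  set q := Real.sqrt (2 / N) with hq
  set v := Real.sqrt s with hv
  have hv1 : 1 ≤ v := Real.one_le_sqrt.2 hsR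
  set r := v ^ ((p : ℝ)⁻¹) with hr
  have hr1 : 1 ≤ r := Real.one_le_rpow hv1 (by positivity)
  have hrp : r ^ p = v := Real.rpow_inv_natCast_pow (by linarith) hp.ne_zero
  have hv2 : v ^ 2 = s := Real.sq_sqrt (by linarith)
  obtain ⟨n1, n2, n3⟩ := numeric hN0 p s hp2 q r hq hr1 (by rw [hrp, hv2])
  have hNR : (1 : ℝ) ≤ N := by exact_mod_cast hN0
  have hq0 : 0 < q := Real.sqrt_pos.2 (by positivity)
  have hz : 0 < 12 * q * r := by positivity
  have hsupp : ∀ σ ∈ prm N p c, #σ.support = s := by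
    intro σ h
    simp only [prm, mem_filter, mem_univ, true_and] at h
    rw [← Equiv.Perm.sum_cycleType, h, Multiset.sum_replicate, smul_eq_mul, mul_comm]
  have hone : ∀ σ ∈ prm N p c, (#(univ.filter (fun ω : Omega N => IsAut ω σ)) : ℝ) ≤
      Fintype.card (Omega N) * (27 ^ s * (12 * q * r) ^ (3 * s)) := by
    intro σ h
    have := count_sigma hN hN0 σ p (prime_period hp h) q (12 * q * r) hq hz n1
      (by rw [hsupp σ h]; exact n2) n3
    rw [hsupp σ h] at this
    exact this
  have hsub : univ.filter (fun ω : Omega N => ∃ σ ∈ prm N p c, IsAut ω σ) ⊆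
      (prm N p c).biUnion (fun σ => univ.filter (fun ω : Omega N => IsAut ω σ)) := by
    intro ω hω
    simpa using hω
  have htot : (#(univ.filter (fun ω : Omega N => ∃ σ ∈ prm N p c, IsAut ω σ)) : ℝ) ≤
      #(prm N p c) * (Fintype.card (Omega N) * (27 ^ s * (12 * q * r) ^ (3 * s))) := by
    calc (#(univ.filter (fun ω : Omega N => ∃ σ ∈ prm N p c, IsAut ω σ)) : ℝ)
        ≤ ((∑ σ ∈ prm N p c, #(univ.filter (fun ω : Omega N => IsAut ω σ)) : ℕ) : ℝ) := by
          exact_mod_cast (card_le_card hsub).trans card_biUnion_le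
      _ = ∑ σ ∈ prm N p c, (#(univ.filter (fun ω : Omega N => IsAut ω σ)) : ℝ) := by
          push_cast; rfl
      _ ≤ #(prm N p c) • (Fintype.card (Omega N) * (27 ^ s * (12 * q * r) ^ (3 * s))) :=
          sum_le_card_nsmul _ _ _ hone
      _ = _ := by rw [nsmul_eq_mul]
  set w := Real.sqrt N with hw
  have hw1 : 1 ≤ w := Real.one_le_sqrt.2 hNR
  have hw2 : w ^ 2 = N := Real.sq_sqrt (by linarith)
  set y := Real.sqrt w with hy
  have hy1 : 1 ≤ y := Real.one_le_sqrt.2 hw1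
  have hy2 : y ^ 2 = w := Real.sq_sqrt (by linarith)
  have hvw : v ≤ w := Real.sqrt_le_sqrt (by exact_mod_cast hpc)
  have hqw : q ≤ 2 / w := by
    rw [hq, Real.sqrt_le_left (by positivity), div_pow, hw2]
    gcongr
    norm_num
  have hcs : 2 * c ≤ s := by rw [hs]; gcongr
  have hprm := card_prm (N := N) p c hp2 hc
  rw [← hs, ← hv2, ← hw2, ← pow_mul, ← pow_mul] at hprm
  have hr3 : r ^ (3 * s) = v ^ (3 * c) := by
    rw [hs, show 3 * (p * c) = p * (3 * c) by ring, pow_mul, hrp]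
  have hmain : (#(prm N p c) : ℝ) * (27 ^ s * (12 * q * r) ^ (3 * s)) ≤ theta N ^ s := by
    calc (#(prm N p c) : ℝ) * (27 ^ s * (12 * q * r) ^ (3 * s))
        = (#(prm N p c) : ℝ) * v ^ (2 * c) * (v ^ c * 27 ^ s * 12 ^ (3 * s) * q ^ (3 * s)) := by
          rw [mul_pow, mul_pow, hr3, show 3 * c = 2 * c + c by ring, pow_add v]; ring
      _ ≤ (w ^ (2 * s) * 3 ^ c) * (w ^ c * 27 ^ s * 12 ^ (3 * s) * (2 / w) ^ (3 * s)) := by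
          gcongr
      _ ≤ (w ^ (2 * s) * 3 ^ s) * (w ^ c * 27 ^ s * 12 ^ (3 * s) * (2 / w) ^ (3 * s)) := by
          gcongr
          · norm_num
          · omega
      _ = (1119744 ^ s) * (w ^ c / w ^ s) := by
          rw [div_pow, show (1119744 : ℝ) = 3 * 27 * 12 ^ 3 * 2 ^ 3 by norm_num]
          rw [mul_pow, mul_pow, mul_pow, ← pow_mul, ← pow_mul]
          rw [show w ^ (3 * s) = w ^ (2 * s) * w ^ s by rw [← pow_add]; congr 1; ring]
          field_simp
      _ ≤ (1119744 ^ s) * (1 / y ^ s) := by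
          gcongr 1119744 ^ s * ?_
          rw [div_le_div_iff₀ (by positivity) (by positivity), one_mul, ← hy2, ← pow_mul, ← pow_mul,
            ← pow_add]
          exact pow_le_pow_right₀ hy1 (by omega)
      _ = _ := by rw [theta, div_pow]; ring
  refine htot.trans ?_
  calc (#(prm N p c) : ℝ) * (Fintype.card (Omega N) * (27 ^ s * (12 * q * r) ^ (3 * s)))
      = Fintype.card (Omega N) * ((#(prm N p c) : ℝ) * (27 ^ s * (12 * q * r) ^ (3 * s))) := by ring
    _ ≤ _ := by gcongr

end CubicAut
end partFour


section partFive
open scoped Classical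
open Finset

namespace CubicAut

variable {N : ℕ}

/-- Matchings with an automorphism of prime order `i + 2` with `j + 1` cycles. -/
noncomputable def badij (N i j : ℕ) : Finset (Omega N) :=
  univ.filter (fun ω : Omega N => (i + 2).Prime ∧ (i + 2) * (j + 1) ≤ N ∧
    ∃ σ ∈ prm N (i + 2) (j + 1), IsAut ω σ)

theorem theta_nonneg (N : ℕ) : 0 ≤ theta N := by unfold theta; positivity

theorem exists_prime_aut {ω : Omega N} {σ : Equiv.Perm (Fin N)} (hσ : σ ≠ 1) (h : IsAut ω σ) :
    ∃ i ∈ range N, ∃ j ∈ range N, ω ∈ badij N i j := by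
  have ho : orderOf σ ≠ 1 := fun h1 => hσ (orderOf_eq_one_iff.1 h1)
  obtain ⟨p, hp, hd⟩ := Nat.exists_prime_and_dvd ho
  have hτo : orderOf (σ ^ (orderOf σ / p)) = p :=
    orderOf_pow_orderOf_div (orderOf_pos σ).ne' hd
  have hτ := h.pow (orderOf σ / p)
  set τ := σ ^ (orderOf σ / p) with hτd
  obtain ⟨n, hn⟩ := Equiv.Perm.cycleType_prime_order (σ := τ) (by rw [hτo]; exact hp)
  rw [hτo] at hn
  have hle : p * (n + 1) ≤ N := by
    have h1 := Equiv.Perm.sum_cycleType τ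
    rw [hn, Multiset.sum_replicate, smul_eq_mul] at h1
    have h2 := card_le_univ τ.support
    rw [Fintype.card_fin] at h2
    rw [mul_comm]
    omega
  have hp2 := hp.two_le
  obtain ⟨i, rfl⟩ := Nat.exists_eq_add_of_le' hp2
  refine ⟨i, ?_, n, ?_, ?_⟩
  · rw [mem_range]; nlinarith
  · rw [mem_range]; nlinarith
  · simp only [badij, mem_filter, mem_univ, true_and]
    refine ⟨hp, hle, τ, ?_, hτ⟩
    simp only [prm, mem_filter, mem_univ, true_and]
    convert! hn

theorem badij_le (hN : Even N) (hN0 : 0 < N) (h1 : theta N ≤ 1) (i j : ℕ) :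
    (#(badij N i j) : ℝ) ≤ Fintype.card (Omega N) * (theta N ^ (i + 1) * theta N ^ (j + 1)) := by
  have h0 := theta_nonneg N
  by_cases hc : (i + 2).Prime ∧ (i + 2) * (j + 1) ≤ N
  · have hb := count_pc hN hN0 (i + 2) (j + 1) hc.1 (by omega) hc.2
    have hb' : (#(badij N i j) : ℝ) ≤ _ := le_trans (Nat.cast_le.2 (card_le_card (by
      intro ω hω
      simp only [badij, mem_filter, mem_univ, true_and] at hω ⊢
      exact hω.2.2))) hb
    calc (#(badij N i j) : ℝ) ≤ _ := hb'
      _ ≤ _ := by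
        rw [← pow_add]
        apply mul_le_mul_of_nonneg_left _ (by positivity)
        apply pow_le_pow_of_le_one h0 h1
        nlinarith [Nat.zero_le (i * j)]
  · have : badij N i j = ∅ := by
      refine eq_empty_of_forall_notMem fun ω hω => hc ?_
      simp only [badij, mem_filter, mem_univ, true_and] at hω
      exact ⟨hω.1, hω.2.1⟩
    rw [this, card_empty, Nat.cast_zero]
    positivity

theorem geom_bound {t : ℝ} (h0 : 0 ≤ t) (h1 : t ≤ 1 / 2) (n : ℕ) :
    ∑ i ∈ range n, t ^ (i + 1) ≤ 2 * t := by
  have h : ∑ i ∈ range n, t ^ (i + 1) ≤ 2 * t - t ^ n * (2 * t) := by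
    induction n with
    | zero => simp
    | succ n ih =>
      rw [sum_range_succ]
      have hp : 0 ≤ t ^ n * t := by positivity
      have : t ^ (n + 1) * (2 * t) ≤ t ^ n * t := by
        rw [pow_succ]; nlinarith
      rw [pow_succ t n] at *
      nlinarith
  have : 0 ≤ t ^ n * (2 * t) := by positivity
  linarith

theorem bad_le (hN : Even N) (hN0 : 0 < N) (h1 : theta N ≤ 1 / 2) :
    (#(univ.filter (fun ω : Omega N => ∃ σ : Equiv.Perm (Fin N), σ ≠ 1 ∧ IsAut ω σ)) : ℝ) ≤
      (2 * theta N) ^ 2 * Fintype.card (Omega N) := by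
  have h0 := theta_nonneg N
  have hsub : univ.filter (fun ω : Omega N => ∃ σ : Equiv.Perm (Fin N), σ ≠ 1 ∧ IsAut ω σ) ⊆
      (range N).biUnion (fun i => (range N).biUnion (fun j => badij N i j)) := by
    intro ω hω
    simp only [mem_filter, mem_univ, true_and] at hω
    obtain ⟨σ, hσ, h⟩ := hω
    obtain ⟨i, hi, j, hj, hb⟩ := exists_prime_aut hσ h
    exact mem_biUnion.2 ⟨i, hi, mem_biUnion.2 ⟨j, hj, hb⟩⟩
  have hcard : #(univ.filter (fun ω : Omega N => ∃ σ : Equiv.Perm (Fin N), σ ≠ 1 ∧ IsAut ω σ)) ≤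
      ∑ i ∈ range N, ∑ j ∈ range N, #(badij N i j) :=
    (card_le_card hsub).trans (card_biUnion_le.trans (sum_le_sum fun i _ => card_biUnion_le))
  calc (#(univ.filter (fun ω : Omega N => ∃ σ : Equiv.Perm (Fin N), σ ≠ 1 ∧ IsAut ω σ)) : ℝ)
      ≤ ((∑ i ∈ range N, ∑ j ∈ range N, #(badij N i j) : ℕ) : ℝ) := by exact_mod_cast hcard
    _ = ∑ i ∈ range N, ∑ j ∈ range N, (#(badij N i j) : ℝ) := by push_cast; rfl
    _ ≤ ∑ i ∈ range N, ∑ j ∈ range N,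
          (Fintype.card (Omega N) : ℝ) * (theta N ^ (i + 1) * theta N ^ (j + 1)) :=
        sum_le_sum fun i _ => sum_le_sum fun j _ => badij_le hN hN0 (by linarith) i j
    _ = ((∑ i ∈ range N, theta N ^ (i + 1)) * (∑ j ∈ range N, theta N ^ (j + 1))) *
          Fintype.card (Omega N) := by
        rw [sum_mul_sum, sum_mul]
        refine sum_congr rfl fun i _ => ?_
        rw [sum_mul]
        refine sum_congr rfl fun j _ => ?_
        ring
    _ ≤ _ := by
        have hg := geom_bound h0 h1 N
        have hnn : 0 ≤ ∑ i ∈ range N, theta N ^ (i + 1) := sum_nonneg fun i _ => by positivity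
        rw [sq]
        gcongr

theorem theta_tendsto : Tendsto theta atTop (𝓝 0) := by
  unfold theta
  exact tendsto_const_nhds.div_atTop
    (Real.tendsto_sqrt_atTop.comp (Real.tendsto_sqrt_atTop.comp tendsto_natCast_atTop_atTop))

theorem ratio_le (hN : Even N) (hN0 : 0 < N) (h1 : theta N ≤ 1 / 2) :
    (Nat.card {ω : Omega N // ∃ σ : Equiv.Perm (Fin N), σ ≠ 1 ∧
      ∀ u v, mult ω (σ u) (σ v) = mult ω u v} : ℝ) / (Nat.card (Omega N) : ℝ) ≤
      (2 * theta N) ^ 2 := by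
  apply div_le_of_le_mul₀ (by positivity) (by positivity)
  have h := bad_le hN hN0 h1
  rw [← Nat.card_eq_fintype_card] at h
  refine le_trans (le_of_eq ?_) h
  rw [Nat.subtype_card]
  intro ω
  rw [mem_filter]
  exact ⟨fun h => h.2, fun h => ⟨mem_univ _, h⟩⟩

end CubicAut
end partFive


/-- Theorem (Bollobás, McKay–Wormald): the probability that the configuration-model
random cubic multigraph has a nontrivial automorphism tends to `0` as `N → ∞`
through even values of `N`. -/
theorem probability_nontrivial_automorphism_tendsto_zero :
    Tendsto
      (fun N : ℕ =>
        (Nat.card {ω : Omega N // ∃ σ : Equiv.Perm (Fin N), σ ≠ 1 ∧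
            ∀ u v, mult ω (σ u) (σ v) = mult ω u v} : ℝ) / (Nat.card (Omega N) : ℝ))
      (atTop ⊓ 𝓟 {N : ℕ | Even N}) (𝓝 0) := by
  have ht : Tendsto (fun N : ℕ => (2 * CubicAut.theta N) ^ 2) (atTop ⊓ 𝓟 {N : ℕ | Even N})
      (𝓝 0) := by
    have h := ((CubicAut.theta_tendsto.const_mul 2).pow 2).mono_left
      (inf_le_left : atTop ⊓ 𝓟 {N : ℕ | Even N} ≤ atTop)
    simpa using h
  refine squeeze_zero' (Eventually.of_forall fun N => by positivity) ?_ ht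
  rw [eventually_inf_principal]
  have hs : ∀ᶠ N : ℕ in atTop, CubicAut.theta N ≤ 1 / 2 :=
    CubicAut.theta_tendsto.eventually_le_const (by norm_num)
  filter_upwards [hs, eventually_gt_atTop 0] with N h1 h0 hN
  exact CubicAut.ratio_le hN h0 h1
end
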